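/- Let G be a planar graph. If bw(G) ≥ 4r for a positive integer r, then G contains the (r × r)-grid as a minor. -/

import Mathlib

/-!
Write `∂X` for the boundary of a set `X` of edges. By induction on `D`, every set `D` of edges drawn
in a closed disc and with `|∂D| < 4r` is dissected into single edges through sets with boundaries
smaller than `4r`, unless there is an `(r × r)`-grid minor; a dissection of all but one edge is a
branch-decomposition of width less than `4r`.

If `|∂D| < 4r - 1`, split off an edge at `∂D`. If `|∂D| = 4r - 1`, divide the cyclic order of `∂D`
into four arcs of about `r` vertices. By Menger's theorem, either fewer than `r` vertices separate
two opposite arcs inside `D`, and `D` splits along them into two parts with smaller boundaries, or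
there are `r` disjoint rows and `r` disjoint columns inside `D`. In the latter case choose the rows
with as few edges outside the columns as possible. A column that moves from one row to the next row
it meets must move to a neighbouring one, since otherwise it could replace a segment of a row; so
each column meets the rows in order, and contracting rows and columns gives the grid.

That boundary-to-boundary walks with interleaved ends meet is the one place where planarity enters.
It follows from Euler's formula, which says that the `𝔽₂`-cohomology of the map vanishes: a walk
closed up along the boundary is the coboundary of a function on the flags.
-/

open SimpleGraph Set

universe u

/-- A branch-decomposition of a graph `G`: a ternary tree `T` (internal vertices of
degree 3) together with a bijection from the edges of `G` to the leaves of `T`. -/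
structure BranchDecomp {V : Type u} (G : SimpleGraph V) : Type (u + 1) where
  t : Type
  fin : Fintype t
  T : SimpleGraph t
  isTree : T.IsTree
  ternary : ∀ v : t, (T.neighborSet v).ncard ≤ 1 ∨ (T.neighborSet v).ncard = 3
  τ : G.edgeSet ≃ {v : t // (T.neighborSet v).ncard ≤ 1}

namespace BranchDecomp

variable {V : Type u} {G : SimpleGraph V} (B : BranchDecomp G)

/-- The edges of `G` whose leaves lie on the `a`-side of the tree edge `ab`. -/
def side (a b : B.t) : Set G.edgeSet :=
  {e | (B.T.deleteEdges {s(a, b)}).Reachable a (B.τ e).1}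

/-- The boundary `∂(X_e)` of the bipartition of `E(G)` induced by the tree edge `ab`:
vertices incident to edges on both sides. -/
def bdry (a b : B.t) : Set V :=
  {v | (∃ e : G.edgeSet, e ∈ B.side a b ∧ v ∈ (e : Sym2 V)) ∧
       (∃ e : G.edgeSet, e ∉ B.side a b ∧ v ∈ (e : Sym2 V))}

/-- The width of a branch-decomposition: the maximum, over edges of the tree, of the
size of the corresponding boundary. -/
noncomputable def width : ℕ :=
  sSup {n | ∃ a b : B.t, B.T.Adj a b ∧ n = (B.bdry a b).ncard}

end BranchDecomp

/-- The branchwidth of a graph: the minimum width of a branch-decomposition. -/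
noncomputable def branchwidth {V : Type u} (G : SimpleGraph V) : ℕ :=
  sInf {n | ∃ B : BranchDecomp G, B.width = n}

/-- A tree-decomposition of a graph. -/
structure TreeDecomp {V : Type u} (G : SimpleGraph V) : Type (u + 1) where
  t : Type
  fin : Fintype t
  T : SimpleGraph t
  isTree : T.IsTree
  β : t → Set V
  covers_edge : ∀ ⦃u v : V⦄, G.Adj u v → ∃ x, u ∈ β x ∧ v ∈ β x
  covers_vert : ∀ v : V, ∃ x, v ∈ β x
  subtree : ∀ v : V, (T.induce {x | v ∈ β x}).Connected

/-- The width of a tree-decomposition: maximum bag size minus one. -/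
noncomputable def TreeDecomp.width {V : Type u} {G : SimpleGraph V} (D : TreeDecomp G) : ℕ :=
  sSup {n | ∃ x : D.t, n + 1 = (D.β x).ncard}

/-- The treewidth of a graph. -/
noncomputable def treewidth {V : Type u} (G : SimpleGraph V) : ℕ :=
  sInf {n | ∃ D : TreeDecomp G, D.width = n}

/-- A minor model of `H` in `G`: disjoint connected branch sets with edges realized. -/
def IsMinorModel {V : Type u} {W : Type*} (G : SimpleGraph V) (H : SimpleGraph W)
    (φ : W → Set V) : Prop :=
  (∀ w, (G.induce (φ w)).Connected) ∧
  (Pairwise fun w₁ w₂ => Disjoint (φ w₁) (φ w₂)) ∧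
  (∀ ⦃w₁ w₂ : W⦄, H.Adj w₁ w₂ → ∃ a ∈ φ w₁, ∃ b ∈ φ w₂, G.Adj a b)

/-- `G` has `H` as a minor. -/
def HasMinor {V : Type u} {W : Type*} (G : SimpleGraph V) (H : SimpleGraph W) : Prop :=
  ∃ φ : W → Set V, IsMinorModel G H φ

/-- The `(k × k)`-grid. -/
def gridGraph (k : ℕ) : SimpleGraph (Fin k × Fin k) :=
  SimpleGraph.fromRel fun p q =>
    (p.1 = q.1 ∧ (p.2 : ℕ) + 1 = (q.2 : ℕ)) ∨ (p.2 = q.2 ∧ (p.1 : ℕ) + 1 = (q.1 : ℕ))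

/-- A combinatorial closed surface presented as a flag system ("graph-encoded map"):
three fixed-point-free involutions on a finite set of flags, with `σ₀` and `σ₂`
commuting and `σ₀σ₂` fixed-point free. Vertices, edges, faces of the map are the orbits
of `⟨σ₁,σ₂⟩`, `⟨σ₀,σ₂⟩`, `⟨σ₀,σ₁⟩` respectively. -/
structure FlagSystem : Type 1 where
  F : Type
  fin : Fintype F
  σ₀ : Equiv.Perm F
  σ₁ : Equiv.Perm F
  σ₂ : Equiv.Perm F
  inv₀ : σ₀ * σ₀ = 1
  inv₁ : σ₁ * σ₁ = 1
  inv₂ : σ₂ * σ₂ = 1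
  fpf₀ : ∀ x, σ₀ x ≠ x
  fpf₁ : ∀ x, σ₁ x ≠ x
  fpf₂ : ∀ x, σ₂ x ≠ x
  comm02 : σ₀ * σ₂ = σ₂ * σ₀
  fpf02 : ∀ x, (σ₀ * σ₂) x ≠ x

namespace FlagSystem

variable (M : FlagSystem)

/-- Two flags lie in a common orbit of the subgroup generated by a set of permutations. -/
def SameOrbit (S : Set (Equiv.Perm M.F)) (x y : M.F) : Prop :=
  ∃ g ∈ Subgroup.closure S, g x = y

/-- The number of orbits of the subgroup generated by `S` on the flags. -/
noncomputable def numOrbits (S : Set (Equiv.Perm M.F)) : ℕ :=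
  Nat.card (Quotient (MulAction.orbitRel (Subgroup.closure S) M.F))

/-- Number of vertices of the map. -/
noncomputable def nV : ℕ := M.numOrbits {M.σ₁, M.σ₂}
/-- Number of edges of the map. -/
noncomputable def nE : ℕ := M.numOrbits {M.σ₀, M.σ₂}
/-- Number of faces of the map. -/
noncomputable def nF : ℕ := M.numOrbits {M.σ₀, M.σ₁}
/-- Number of connected components of the map (= of the underlying surface). -/
noncomputable def nC : ℕ := M.numOrbits {M.σ₀, M.σ₁, M.σ₂}

/-- The flag system `M` is (the flag system of) a 2-cell embedding of the graph `G`: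
there are assignments of a (non-isolated) vertex and an edge of `G` to each flag which
identify the vertex orbits with the non-isolated vertices of `G` and the edge orbits
with the edges of `G`, respecting all incidences. -/
def Realizes {V : Type u} (G : SimpleGraph V) : Prop :=
  ∃ (fv : M.F → {v : V // ∃ e ∈ G.edgeSet, v ∈ e}) (fe : M.F → G.edgeSet),
    (∀ x, ((fv x : V) ∈ (fe x : Sym2 V))) ∧
    (∀ x, fv (M.σ₁ x) = fv x) ∧ (∀ x, fv (M.σ₂ x) = fv x) ∧
    (∀ x, fv (M.σ₀ x) ≠ fv x) ∧
    (∀ x, fe (M.σ₀ x) = fe x) ∧ (∀ x, fe (M.σ₂ x) = fe x) ∧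
    (∀ x y, fv x = fv y → M.SameOrbit {M.σ₁, M.σ₂} x y) ∧
    (∀ x y, fe x = fe y → M.SameOrbit {M.σ₀, M.σ₂} x y) ∧
    Function.Surjective fv ∧
    (∀ (e : G.edgeSet) (v : V), v ∈ (e : Sym2 V) → ∃ x, fe x = e ∧ (fv x : V) = v)

end FlagSystem

/-- The Euler genus of a graph `G`: the least `g` such that some 2-cell embedding of `G`
(given by a flag system `M` realizing `G`) satisfies the Euler formula
`g + v + f = 2·c + e`, i.e. `g = 2c - v + e - f`. -/
noncomputable def eulerGenus {V : Type u} (G : SimpleGraph V) : ℕ :=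
  sInf {g | ∃ M : FlagSystem, M.Realizes G ∧ g + M.nV + M.nF = 2 * M.nC + M.nE}

/-- A graph is planar if it embeds in the sphere, i.e. has Euler genus zero. -/
def IsPlanar {V : Type u} (G : SimpleGraph V) : Prop := eulerGenus G = 0

section InvariantFunctions

open scoped Matrix

variable {F : Type*} {S S' : Set (Equiv.Perm F)} {σ τ : Equiv.Perm F}

/-- The `𝔽₂`-valued functions invariant under a set of permutations. If `S` consists of two of the
three involutions of a flag system, these are the functions on vertices, edges or faces. -/
def invariantFunctions (S : Set (Equiv.Perm F)) : Submodule (ZMod 2) (F → ZMod 2) where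
  carrier := {f | ∀ σ ∈ S, ∀ x, f (σ x) = f x}
  add_mem' ha hb σ hσ x := by simp only [Pi.add_apply, ha σ hσ x, hb σ hσ x]
  zero_mem' _ _ _ := rfl
  smul_mem' c f hf σ hσ x := by simp only [Pi.smul_apply, hf σ hσ x]

theorem invariantFunctions_anti (h : S ⊆ S') : invariantFunctions S' ≤ invariantFunctions S :=
  fun _ hf σ hσ => hf σ (h hσ)

theorem apply_eq_of_mem_closure {α : Type*} {f : F → α} (hf : ∀ σ ∈ S, ∀ x, f (σ x) = f x)
    {g : Equiv.Perm F} (hg : g ∈ Subgroup.closure S) (x : F) : f (g x) = f x := by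
  induction hg using Subgroup.closure_induction generalizing x with
  | mem σ hσ => exact hf σ hσ x
  | one => rfl
  | mul a b _ _ iha ihb => rw [Equiv.Perm.mul_apply, iha, ihb]
  | inv a _ iha => simpa using (iha (a⁻¹ x)).symm

/-- Invariant functions are the functions on the set of orbits. -/
def invariantFunctionsEquiv (S : Set (Equiv.Perm F)) : invariantFunctions S ≃ₗ[ZMod 2]
    (MulAction.orbitRel.Quotient (Subgroup.closure S) F → ZMod 2) where
  toFun f := Quotient.lift f.1 <| by
    rintro _ b ⟨g, rfl⟩
    exact apply_eq_of_mem_closure f.2 g.2 b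
  map_add' _ _ := funext <| Quotient.ind fun _ => rfl
  map_smul' _ _ := funext <| Quotient.ind fun _ => rfl
  invFun h := ⟨fun x => h (Quotient.mk _ x), fun σ hσ _ =>
    congrArg h (Quotient.sound ⟨⟨σ, Subgroup.subset_closure hσ⟩, rfl⟩)⟩
  left_inv _ := rfl
  right_inv _ := funext <| Quotient.ind fun _ => rfl

theorem finrank_invariantFunctions [Finite F] (S : Set (Equiv.Perm F)) :
    Module.finrank (ZMod 2) (invariantFunctions S) =
      Nat.card (MulAction.orbitRel.Quotient (Subgroup.closure S) F) := by
  have := Fintype.ofFinite (MulAction.orbitRel.Quotient (Subgroup.closure S) F)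
  rw [(invariantFunctionsEquiv S).finrank_eq, Module.finrank_fintype_fun_eq_card,
    Nat.card_eq_fintype_card]

/-- The coboundary `f ↦ f + f ∘ σ`, whose kernel consists of the `σ`-invariant functions. -/
def symmetrize (σ : Equiv.Perm F) : (F → ZMod 2) →ₗ[ZMod 2] (F → ZMod 2) :=
  LinearMap.id + LinearMap.funLeft (ZMod 2) (ZMod 2) σ

theorem symmetrize_apply (σ : Equiv.Perm F) (f : F → ZMod 2) (x : F) :
    symmetrize σ f x = f x + f (σ x) := rfl

theorem symmetrize_eq_zero_iff {f : F → ZMod 2} :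
    symmetrize σ f = 0 ↔ f ∈ invariantFunctions {σ} := by
  simp only [funext_iff, symmetrize_apply, Pi.zero_apply, CharTwo.add_eq_zero]
  exact ⟨fun h τ hτ x => mem_singleton_iff.1 hτ ▸ (h x).symm, fun h x => (h σ rfl x).symm⟩

theorem ker_symmetrize (σ : Equiv.Perm F) :
    LinearMap.ker (symmetrize σ) = invariantFunctions {σ} :=
  Submodule.ext fun _ => symmetrize_eq_zero_iff

theorem symmetrize_mem (h : Function.Involutive σ) (f : F → ZMod 2) :
    symmetrize σ f ∈ invariantFunctions {σ} := by
  rintro τ rfl x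
  rw [symmetrize_apply, symmetrize_apply, h x, add_comm]

theorem range_symmetrize (h : Function.Involutive σ) (hf : ∀ x, σ x ≠ x) :
    LinearMap.range (symmetrize σ) = invariantFunctions {σ} := by
  classical
  refine le_antisymm (by rintro _ ⟨f, rfl⟩; exact symmetrize_mem h f) fun g hg => ?_
  -- `f` keeps the value of `g` on one flag of each `σ`-orbit
  let := linearOrderOfSTO (WellOrderingRel (α := F))
  refine ⟨fun x => if x < σ x then g x else 0, funext fun x => ?_⟩
  simp only [symmetrize_apply, h x, hg σ rfl x]
  rcases lt_or_gt_of_ne (hf x) with hx | hx <;> simp [hx, hx.not_gt]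

theorem two_mul_finrank_invariantFunctions [Finite F] (h : Function.Involutive σ)
    (hf : ∀ x, σ x ≠ x) :
    2 * Module.finrank (ZMod 2) (invariantFunctions {σ}) = Nat.card F := by
  have := Fintype.ofFinite F
  have hrank := LinearMap.finrank_range_add_finrank_ker (symmetrize σ)
  rw [ker_symmetrize, range_symmetrize h hf, Module.finrank_fintype_fun_eq_card] at hrank
  rw [Nat.card_eq_fintype_card]
  omega

theorem finrank_invariantFunctions_le_two_mul [Finite F] (hτ : Function.Involutive τ)
    (hc : Commute σ τ) :
    Module.finrank (ZMod 2) (invariantFunctions {σ}) ≤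
      2 * Module.finrank (ZMod 2) (invariantFunctions {σ, τ}) := by
  let D := (symmetrize τ).domRestrict (invariantFunctions {σ})
  have hrange : LinearMap.range D ≤ invariantFunctions {σ, τ} := by
    rintro _ ⟨f, rfl⟩ ρ (rfl | hρ) x
    · have hcomm : τ (ρ x) = ρ (τ x) := congrArg (· x) hc.symm
      rw [LinearMap.domRestrict_apply, symmetrize_apply, symmetrize_apply, hcomm,
        f.2 ρ rfl, f.2 ρ rfl]
    · exact symmetrize_mem hτ f.1 ρ hρ x
  have hker : (LinearMap.ker D).map (invariantFunctions {σ}).subtype ≤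
      invariantFunctions {σ, τ} := by
    rintro _ ⟨f, hf, rfl⟩ ρ (rfl | hρ)
    · exact f.2 ρ rfl
    · exact symmetrize_eq_zero_iff.1 hf ρ hρ
  have hker' := Submodule.finrank_mono hker
  rw [Submodule.finrank_map_subtype_eq] at hker'
  have hrank := LinearMap.finrank_range_add_finrank_ker D
  have := Submodule.finrank_mono hrange
  omega

theorem single_add_single_mem [DecidableEq F] (h : Function.Involutive σ) (x : F) :
    (Pi.single x 1 + Pi.single (σ x) 1 : F → ZMod 2) ∈ invariantFunctions {σ} := by
  rintro τ rfl y
  simp only [Pi.add_apply, Pi.single_apply, τ.injective.eq_iff, h.eq_iff]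
  exact add_comm _ _

/-- A functional vanishing on all the `σ`-invariant functions, for each `σ` in `S`, is itself given
by an `S`-invariant function. -/
theorem card_le_finrank_iSup_add_finrank [Finite F] (hS : ∀ σ ∈ S, Function.Involutive σ) :
    Nat.card F ≤ Module.finrank (ZMod 2) ↥(⨆ σ ∈ S, invariantFunctions {σ}) +
      Module.finrank (ZMod 2) (invariantFunctions S) := by
  classical
  have := Fintype.ofFinite F
  set W := ⨆ σ ∈ S, invariantFunctions {σ}
  let coeffs : Module.Dual (ZMod 2) (F → ZMod 2) ≃ₗ[ZMod 2] (F → ZMod 2) :=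
    ((Pi.basisFun (ZMod 2) F).constr (ZMod 2)).symm
  have hcoeffs : W.dualAnnihilator.map coeffs.toLinearMap ≤ invariantFunctions S := by
    rintro _ ⟨φ, hφ, rfl⟩ σ hσ x
    have hmem := le_iSup₂ (f := fun σ _ => invariantFunctions {σ}) σ hσ
      (single_add_single_mem (hS σ hσ) x)
    have hzero := (Submodule.mem_dualAnnihilator φ).1 hφ _ hmem
    rw [map_add, CharTwo.add_eq_zero] at hzero
    simpa [coeffs, Module.Basis.constr] using hzero.symm
  have hle := Submodule.finrank_mono hcoeffs
  rw [LinearEquiv.finrank_map_eq] at hle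
  have hW := Subspace.finrank_add_finrank_dualAnnihilator_eq W
  rw [Module.finrank_fintype_fun_eq_card, ← Nat.card_eq_fintype_card] at hW
  omega

theorem symmetrize_dotProduct [Fintype F] (h : Function.Involutive σ) (f g : F → ZMod 2) :
    f ⬝ᵥ symmetrize σ g = symmetrize σ f ⬝ᵥ g := by
  simp only [dotProduct, symmetrize_apply, mul_add, add_mul, Finset.sum_add_distrib]
  rw [← Equiv.sum_comp σ fun x => f x * g (σ x)]
  simp only [h _]

/-- The Fredholm alternative for the simultaneous system `symmetrize (σ i) K = w i`. -/
theorem exists_forall_symmetrize_eq [Fintype F] {ι : Type*} [Fintype ι] {σ : ι → Equiv.Perm F}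
    (hσ : ∀ i, Function.Involutive (σ i)) {w : ι → F → ZMod 2}
    (hw : ∀ e : ι → F → ZMod 2, ∑ i, symmetrize (σ i) (e i) = 0 → ∑ i, e i ⬝ᵥ w i = 0) :
    ∃ K, ∀ i, symmetrize (σ i) K = w i := by
  classical
  by_contra! hK
  have hmem : w ∉ LinearMap.range (LinearMap.pi fun i => symmetrize (σ i)) := by
    rintro ⟨K, rfl⟩
    obtain ⟨i, hi⟩ := hK K
    exact hi rfl
  obtain ⟨φ, hφw, hφ⟩ := Submodule.exists_le_ker_of_notMem hmem
  let e : ι → F → ZMod 2 := fun i x => φ (Pi.single i (Pi.single x 1))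
  have hrep (u : ι → F → ZMod 2) : φ u = ∑ i, e i ⬝ᵥ u i := by
    rw [← Finset.univ_sum_single u, map_sum]
    refine Finset.sum_congr rfl fun i _ => ?_
    have h := (φ ∘ₗ LinearMap.single (ZMod 2) (fun _ => F → ZMod 2) i).pi_apply_eq_sum_univ (u i)
    simp only [LinearMap.comp_apply, LinearMap.coe_single, smul_eq_mul] at h
    rw [h, Finset.univ_sum_single]
    refine Finset.sum_congr rfl fun x _ => ?_
    rw [mul_comm]
    congr! 4
    simp [Pi.single_apply, eq_comm]
  refine hφw ((hrep w).trans (hw e (dotProduct_eq_zero _ fun K => ?_)))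
  have hzero : φ (LinearMap.pi (fun i => symmetrize (σ i)) K) = 0 := hφ ⟨K, rfl⟩
  rw [hrep] at hzero
  simpa only [sum_dotProduct, LinearMap.pi_apply, symmetrize_dotProduct (hσ _)] using hzero

end InvariantFunctions

namespace FlagSystem

open scoped Matrix

variable (M : FlagSystem)

instance : Fintype M.F := M.fin

variable {M} in
theorem involutive_of_mul_self {σ : Equiv.Perm M.F} (h : σ * σ = 1) : Function.Involutive σ :=
  fun x => congrArg (· x) h

theorem involutive_σ₀ : Function.Involutive M.σ₀ := involutive_of_mul_self M.inv₀

theorem involutive_σ₁ : Function.Involutive M.σ₁ := involutive_of_mul_self M.inv₁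

theorem involutive_σ₂ : Function.Involutive M.σ₂ := involutive_of_mul_self M.inv₂

theorem numOrbits_eq_finrank (S : Set (Equiv.Perm M.F)) :
    M.numOrbits S = Module.finrank (ZMod 2) (invariantFunctions S) :=
  (finrank_invariantFunctions S).symm

/-- The map `(g₀, g₁, g₂) ↦ g₀ + g₁ + g₂` on triples of a `σ₀`-, a `σ₁`- and a `σ₂`-invariant
function. -/
def invariantSum : (invariantFunctions {M.σ₀} × invariantFunctions {M.σ₁} ×
    invariantFunctions {M.σ₂}) →ₗ[ZMod 2] (M.F → ZMod 2) :=
  (Submodule.subtype _).coprod ((Submodule.subtype _).coprod (Submodule.subtype _))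

/-- The map `(a, b, c) ↦ (b + c, a + c, a + b)` on triples of a function on vertices, one on edges
and one on faces. Together with `invariantSum` it forms a complex, exact for planar maps, whose
Euler characteristic gives the Euler formula. -/
def invariantDiff : (invariantFunctions {M.σ₁, M.σ₂} × invariantFunctions {M.σ₀, M.σ₂} ×
    invariantFunctions {M.σ₀, M.σ₁}) →ₗ[ZMod 2]
    (invariantFunctions {M.σ₀} × invariantFunctions {M.σ₁} × invariantFunctions {M.σ₂}) :=
  have restrict {S S' : Set (Equiv.Perm M.F)} (h : S ⊆ S') :=
    Submodule.inclusion (invariantFunctions_anti h)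
  (LinearMap.coprod 0 (.coprod (restrict (by simp)) (restrict (by simp)))).prod <|
    (LinearMap.coprod (restrict (by simp)) (.coprod 0 (restrict (by simp)))).prod <|
      LinearMap.coprod (restrict (by simp)) (.coprod (restrict (by simp)) 0)

variable {M}

theorem coe_invariantDiff (p : invariantFunctions {M.σ₁, M.σ₂} × invariantFunctions {M.σ₀, M.σ₂} ×
    invariantFunctions {M.σ₀, M.σ₁}) :
    ((M.invariantDiff p).1 : M.F → ZMod 2) = p.2.1 + p.2.2 ∧
      ((M.invariantDiff p).2.1 : M.F → ZMod 2) = p.1 + p.2.2 ∧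
      ((M.invariantDiff p).2.2 : M.F → ZMod 2) = p.1 + p.2.1 := by
  simp [invariantDiff]

variable (M)

theorem range_invariantDiff_le :
    LinearMap.range M.invariantDiff ≤ LinearMap.ker M.invariantSum := by
  rintro _ ⟨p, rfl⟩
  obtain ⟨h₀, h₁, h₂⟩ := coe_invariantDiff p
  simp only [LinearMap.mem_ker, invariantSum, LinearMap.coprod_apply, Submodule.subtype_apply,
    h₀, h₁, h₂]
  ext x
  simp only [Pi.add_apply, Pi.zero_apply]
  linear_combination (p.1.1 x + p.2.1.1 x + p.2.2.1 x) * CharTwo.two_eq_zero (R := ZMod 2)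

theorem finrank_ker_invariantDiff_le :
    Module.finrank (ZMod 2) (LinearMap.ker M.invariantDiff) ≤ M.nC := by
  have hker (p : LinearMap.ker M.invariantDiff) :
      (p.1.2.1 : M.F → ZMod 2) = p.1.1 ∧ (p.1.2.2 : M.F → ZMod 2) = p.1.1 := by
    obtain ⟨-, h₁, h₂⟩ := coe_invariantDiff p.1
    simp only [LinearMap.mem_ker.1 p.2, Prod.snd_zero, Prod.fst_zero, ZeroMemClass.coe_zero,
      funext_iff, Pi.zero_apply, Pi.add_apply, eq_comm (a := (0 : ZMod 2)),
      CharTwo.add_eq_zero] at h₁ h₂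
    exact ⟨funext fun x => (h₂ x).symm, funext fun x => (h₁ x).symm⟩
  let vertexPart :
      LinearMap.ker M.invariantDiff →ₗ[ZMod 2] invariantFunctions {M.σ₀, M.σ₁, M.σ₂} :=
    LinearMap.codRestrict _
        (Submodule.subtype _ ∘ₗ LinearMap.fst _ _ _ ∘ₗ Submodule.subtype _) <| by
      rintro p σ (rfl | hσ) x
      · have h := p.1.2.1.2 M.σ₀ (by simp) x
        rwa [(hker p).1] at h
      · exact p.1.1.2 σ hσ x
  rw [nC, numOrbits_eq_finrank]
  refine LinearMap.finrank_le_finrank_of_injective (f := vertexPart) fun p q hpq => ?_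
  have hval : (vertexPart p : M.F → ZMod 2) = vertexPart q := by rw [hpq]
  have heq : (p.1.1 : M.F → ZMod 2) = q.1.1 := hval
  ext x
  · exact congrFun heq x
  · rw [(hker p).1, (hker q).1, heq]
  · rw [(hker p).2, (hker q).2, heq]

theorem finrank_ker_invariantSum_le :
    Module.finrank (ZMod 2) (LinearMap.ker M.invariantSum) ≤ 2 * M.nE + M.nC := by
  have hrange : LinearMap.range M.invariantSum =
      ⨆ σ ∈ ({M.σ₀, M.σ₁, M.σ₂} : Set (Equiv.Perm M.F)), invariantFunctions {σ} := by
    simp only [invariantSum, LinearMap.range_coprod, Submodule.range_subtype, iSup_insert,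
      iSup_singleton]
  have hcard := card_le_finrank_iSup_add_finrank (S := {M.σ₀, M.σ₁, M.σ₂}) <| by
    rintro σ (rfl | rfl | rfl)
    exacts [M.involutive_σ₀, M.involutive_σ₁, M.involutive_σ₂]
  have hrank := LinearMap.finrank_range_add_finrank_ker M.invariantSum
  rw [Module.finrank_prod, Module.finrank_prod, hrange] at hrank
  have h₀ := two_mul_finrank_invariantFunctions M.involutive_σ₀ M.fpf₀
  have h₁ := two_mul_finrank_invariantFunctions M.involutive_σ₁ M.fpf₁
  have h₂ := two_mul_finrank_invariantFunctions M.involutive_σ₂ M.fpf₂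
  have h₀₂ := finrank_invariantFunctions_le_two_mul M.involutive_σ₂ M.comm02
  rw [nE, nC, numOrbits_eq_finrank, numOrbits_eq_finrank]
  omega

theorem finrank_ker_add_finrank_range_invariantDiff :
    Module.finrank (ZMod 2) (LinearMap.ker M.invariantDiff) +
      Module.finrank (ZMod 2) (LinearMap.range M.invariantDiff) = M.nV + M.nE + M.nF := by
  have hrank := LinearMap.finrank_range_add_finrank_ker M.invariantDiff
  rw [Module.finrank_prod, Module.finrank_prod] at hrank
  simp only [nV, nE, nF, numOrbits_eq_finrank]
  omega

theorem euler_le : M.nV + M.nF ≤ 2 * M.nC + M.nE := by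
  have := Submodule.finrank_mono M.range_invariantDiff_le
  have := M.finrank_ker_invariantSum_le
  have := M.finrank_ker_invariantDiff_le
  have := M.finrank_ker_add_finrank_range_invariantDiff
  omega

variable {M}

theorem range_invariantDiff_eq (hM : M.nV + M.nF = 2 * M.nC + M.nE) :
    LinearMap.range M.invariantDiff = LinearMap.ker M.invariantSum := by
  refine Submodule.eq_of_le_of_finrank_le M.range_invariantDiff_le ?_
  have := M.finrank_ker_invariantSum_le
  have := M.finrank_ker_invariantDiff_le
  have := M.finrank_ker_add_finrank_range_invariantDiff
  omega

theorem exists_decomposition_of_add_eq_zero (hM : M.nV + M.nF = 2 * M.nC + M.nE)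
    {g₀ g₁ g₂ : M.F → ZMod 2}
    (h₀ : g₀ ∈ invariantFunctions {M.σ₀}) (h₁ : g₁ ∈ invariantFunctions {M.σ₁})
    (h₂ : g₂ ∈ invariantFunctions {M.σ₂}) (hg : g₀ + (g₁ + g₂) = 0) :
    ∃ a ∈ invariantFunctions {M.σ₁, M.σ₂}, ∃ b ∈ invariantFunctions {M.σ₀, M.σ₂},
      ∃ c ∈ invariantFunctions {M.σ₀, M.σ₁}, g₁ = a + c ∧ g₂ = a + b := by
  have hmem : (⟨g₀, h₀⟩, ⟨g₁, h₁⟩, ⟨g₂, h₂⟩) ∈ LinearMap.range M.invariantDiff := by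
    rw [range_invariantDiff_eq hM]
    exact hg
  obtain ⟨p, hp⟩ := hmem
  obtain ⟨-, hp₁, hp₂⟩ := coe_invariantDiff p
  rw [hp] at hp₁ hp₂
  exact ⟨p.1, p.1.2, p.2.1, p.2.1.2, p.2.2, p.2.2.2, hp₁, hp₂⟩

/-- In a planar map, a function with prescribed jumps across `σ₁` and `σ₂`, and none across `σ₀`,
exists as soon as the jumps cancel around each vertex, edge and face. -/
theorem exists_potential (hM : M.nV + M.nF = 2 * M.nC + M.nE) {t₁ t₂ : M.F → ZMod 2}
    (hV : ∀ a ∈ invariantFunctions {M.σ₁, M.σ₂}, a ⬝ᵥ (t₁ + t₂) = 0)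
    (hE : ∀ b ∈ invariantFunctions {M.σ₀, M.σ₂}, b ⬝ᵥ t₂ = 0)
    (hF : ∀ c ∈ invariantFunctions {M.σ₀, M.σ₁}, c ⬝ᵥ t₁ = 0) :
    ∃ K, K ∈ invariantFunctions {M.σ₀} ∧ K + t₁ ∈ invariantFunctions {M.σ₁} ∧
      K + t₂ ∈ invariantFunctions {M.σ₂} := by
  have hσ : ∀ i, Function.Involutive (![M.σ₀, M.σ₁, M.σ₂] i) :=
    Fin.forall_fin_succ.2 ⟨M.involutive_σ₀, Fin.forall_fin_two.2 ⟨M.involutive_σ₁, M.involutive_σ₂⟩⟩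
  obtain ⟨K, hK⟩ := exists_forall_symmetrize_eq hσ
    (w := ![0, symmetrize M.σ₁ t₁, symmetrize M.σ₂ t₂]) fun e he => by
      simp only [Fin.sum_univ_three, Matrix.cons_val_zero, Matrix.cons_val_one,
        Matrix.cons_val] at he ⊢
      rw [add_assoc] at he
      obtain ⟨a, ha, b, hb, c, hc, h₁, h₂⟩ := exists_decomposition_of_add_eq_zero hM
        (symmetrize_mem M.involutive_σ₀ _) (symmetrize_mem M.involutive_σ₁ _)
        (symmetrize_mem M.involutive_σ₂ _) he
      rw [symmetrize_dotProduct M.involutive_σ₁, symmetrize_dotProduct M.involutive_σ₂, h₁, h₂,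
        dotProduct_zero, zero_add, add_dotProduct, add_dotProduct, hE b hb, hF c hc, add_zero,
        add_zero, ← dotProduct_add, hV a ha]
  refine ⟨K, symmetrize_eq_zero_iff.1 (hK 0), ?_, ?_⟩
  · rw [← symmetrize_eq_zero_iff, map_add, show symmetrize M.σ₁ K = _ from hK 1]
    exact funext fun _ => CharTwo.add_self_eq_zero _
  · rw [← symmetrize_eq_zero_iff, map_add, show symmetrize M.σ₂ K = _ from hK 2]
    exact funext fun _ => CharTwo.add_self_eq_zero _

end FlagSystem

theorem exists_perm_transitive_on_fibres {α β : Type*} [Finite α] (f : α → β) :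
    ∃ ρ : Equiv.Perm α, (∀ x, f (ρ x) = f x) ∧ ∀ x y, f x = f y → ∃ n : ℕ, (ρ ^ n) x = y := by
  classical
  have := Fintype.ofFinite α
  have hcycle (b : β) : ∃ c : Equiv.Perm {x // f x = b}, ∀ x y, ∃ n : ℕ, (c ^ n) x = y := by
    obtain ⟨c, hc, -⟩ := Finset.exists_cycleOn (Finset.univ : Finset {x // f x = b})
    exact ⟨c, fun x y => (hc.exists_pow_eq (Finset.mem_univ x) (Finset.mem_univ y)).imp
      fun _ h => h.2⟩
  choose c hc using hcycle
  let glue : (∀ b, Equiv.Perm {x // f x = b}) →* Equiv.Perm α :=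
    (Equiv.sigmaFiberEquiv f).permCongrHom.toMonoidHom.comp
      (Equiv.Perm.sigmaCongrRightHom fun b => {x // f x = b})
  have hglue (c : ∀ b, Equiv.Perm {x // f x = b}) (x : α) : glue c x = c (f x) ⟨x, rfl⟩ := rfl
  refine ⟨glue c, fun x => (c (f x) ⟨x, rfl⟩).2, fun x y hxy => ?_⟩
  obtain ⟨n, hn⟩ := hc (f x) ⟨x, rfl⟩ ⟨y, hxy.symm⟩
  exact ⟨n, by rw [← map_pow, hglue, Pi.pow_apply, hn]⟩

namespace FlagSystem

section SameOrbit

variable {M : FlagSystem} {S : Set (Equiv.Perm M.F)} {x y z : M.F}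

theorem sameOrbit_refl (x : M.F) : M.SameOrbit S x x := ⟨1, one_mem _, rfl⟩

theorem SameOrbit.symm (h : M.SameOrbit S x y) : M.SameOrbit S y x := by
  obtain ⟨g, hg, rfl⟩ := h
  exact ⟨g⁻¹, inv_mem hg, by simp⟩

theorem SameOrbit.trans (h : M.SameOrbit S x y) (h' : M.SameOrbit S y z) : M.SameOrbit S x z := by
  obtain ⟨g, hg, rfl⟩ := h
  obtain ⟨g', hg', rfl⟩ := h'
  exact ⟨g' * g, mul_mem hg' hg, rfl⟩

theorem sameOrbit_apply {σ : Equiv.Perm M.F} (hσ : σ ∈ S) (x : M.F) : M.SameOrbit S x (σ x) :=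
  ⟨σ, Subgroup.subset_closure hσ, rfl⟩

end SameOrbit

section RotationSystem

variable {D : Type} [Fintype D] {rev : D → D} (hrev : Function.Involutive rev)
  (hfix : ∀ d, rev d ≠ d) (ρ : Equiv.Perm D)

/-- The flag system of a rotation system: `D` is the set of darts, `rev` reverses a dart, and `ρ`
rotates the darts around their tails. A flag is a dart with a choice of one of its two sides. -/
def ofRotation : FlagSystem where
  F := D × Bool
  fin := inferInstance
  σ₀ := Function.Involutive.toPerm (fun x => (rev x.1, !x.2)) fun x => by simp [hrev x.1]
  σ₁ := Function.Involutive.toPerm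
    (fun x => if x.2 then (ρ x.1, false) else (ρ.symm x.1, true)) fun x => by
      rcases x with ⟨d, _ | _⟩ <;> simp
  σ₂ := Function.Involutive.toPerm (fun x => (x.1, !x.2)) fun x => by simp
  inv₀ := Equiv.ext <| Function.Involutive.toPerm_involutive _
  inv₁ := Equiv.ext <| Function.Involutive.toPerm_involutive _
  inv₂ := Equiv.ext <| Function.Involutive.toPerm_involutive _
  fpf₀ x h := Bool.not_ne_self x.2 (congrArg Prod.snd h)
  fpf₁ := by
    rintro ⟨d, _ | _⟩ h
    exacts [Bool.noConfusion (congrArg Prod.snd h), Bool.noConfusion (congrArg Prod.snd h)]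
  fpf₂ x h := Bool.not_ne_self x.2 (congrArg Prod.snd h)
  comm02 := rfl
  fpf02 x h := hfix x.1 (congrArg Prod.fst h)

theorem ofRotation_sameOrbit_side {S : Set (Equiv.Perm (ofRotation hrev hfix ρ).F)}
    (hS : (ofRotation hrev hfix ρ).σ₂ ∈ S) (d : D) (s s' : Bool) :
    (ofRotation hrev hfix ρ).SameOrbit S (d, s) (d, s') := by
  rcases Bool.eq_or_eq_not s' s with rfl | rfl
  exacts [sameOrbit_refl _, sameOrbit_apply hS (d, s)]

theorem ofRotation_sameOrbit_pow (n : ℕ) (d : D) (s s' : Bool) :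
    (ofRotation hrev hfix ρ).SameOrbit {(ofRotation hrev hfix ρ).σ₁, (ofRotation hrev hfix ρ).σ₂}
      (d, s) ((ρ ^ n) d, s') := by
  induction n generalizing s' with
  | zero => exact ofRotation_sameOrbit_side hrev hfix ρ (by simp) d s s'
  | succ n ih =>
    rw [pow_succ', Equiv.Perm.mul_apply]
    exact ((ih true).trans (sameOrbit_apply (σ := (ofRotation hrev hfix ρ).σ₁) (by simp) _)).trans
      (ofRotation_sameOrbit_side hrev hfix ρ (by simp) _ false s')

variable {V : Type u} {G : SimpleGraph V} {ρ} {dart : D ≃ G.Dart}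

theorem ofRotation_sameOrbit_of_fst_eq
    (hρ : ∀ d d', (dart d).fst = (dart d').fst → ∃ n : ℕ, (ρ ^ n) d = d') {d d' : D}
    (h : (dart d).fst = (dart d').fst) (s s' : Bool) :
    (ofRotation hrev hfix ρ).SameOrbit {(ofRotation hrev hfix ρ).σ₁, (ofRotation hrev hfix ρ).σ₂}
      (d, s) (d', s') := by
  obtain ⟨n, rfl⟩ := hρ d d' h
  exact ofRotation_sameOrbit_pow hrev hfix ρ n d s s'

theorem ofRotation_sameOrbit_of_edge_eq (hdart : ∀ d, dart (rev d) = (dart d).symm) {d d' : D}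
    (h : (dart d).edge = (dart d').edge) (s s' : Bool) :
    (ofRotation hrev hfix ρ).SameOrbit {(ofRotation hrev hfix ρ).σ₀, (ofRotation hrev hfix ρ).σ₂}
      (d, s) (d', s') := by
  have hside := ofRotation_sameOrbit_side hrev hfix ρ
    (S := {(ofRotation hrev hfix ρ).σ₀, (ofRotation hrev hfix ρ).σ₂}) (by simp) d'
  rcases (dart_edge_eq_iff _ _).1 h with h | h
  · obtain rfl : d = d' := dart.injective h
    exact hside s s'
  · obtain rfl : rev d = d' := dart.injective (by rw [hdart, h, Dart.symm_symm])
    exact (sameOrbit_apply (σ := (ofRotation hrev hfix ρ).σ₀) (by simp) (d, s)).trans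
      (hside (!s) s')

theorem ofRotation_realizes (hdart : ∀ d, dart (rev d) = (dart d).symm)
    (hρ_fst : ∀ d, (dart (ρ d)).fst = (dart d).fst)
    (hρ : ∀ d d', (dart d).fst = (dart d').fst → ∃ n : ℕ, (ρ ^ n) d = d') :
    (ofRotation hrev hfix ρ).Realizes G := by
  refine ⟨fun x => ⟨(dart x.1).fst, (dart x.1).edge, (dart x.1).edge_mem, Sym2.mem_mk_left _ _⟩,
    fun x => ⟨(dart x.1).edge, (dart x.1).edge_mem⟩, fun x => Sym2.mem_mk_left _ _, ?_,
    fun _ => rfl, ?_, ?_, fun _ => rfl,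
    fun x y h => ofRotation_sameOrbit_of_fst_eq hrev hfix hρ (congrArg Subtype.val h) x.2 y.2,
    fun x y h => ofRotation_sameOrbit_of_edge_eq hrev hfix hdart (congrArg Subtype.val h) x.2 y.2,
    ?_, ?_⟩
  · rintro ⟨d, _ | _⟩
    · have h := hρ_fst (ρ.symm d)
      rw [Equiv.apply_symm_apply] at h
      exact Subtype.ext h.symm
    · exact Subtype.ext (hρ_fst d)
  · rintro ⟨d, s⟩ h
    have h' : (dart (rev d)).fst = (dart d).fst := congrArg Subtype.val h
    rw [hdart] at h'
    exact (dart d).fst_ne_snd h'.symm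
  · rintro ⟨d, s⟩
    refine Subtype.ext ?_
    change (dart (rev d)).edge = (dart d).edge
    rw [hdart, Dart.edge_symm]
  · rintro ⟨v, e, he, w, rfl⟩
    refine ⟨(dart.symm ⟨(v, w), he⟩, true), Subtype.ext ?_⟩
    exact congrArg (fun d : G.Dart => d.fst) (dart.apply_symm_apply _)
  · rintro ⟨e, he⟩ v ⟨w, rfl⟩
    refine ⟨(dart.symm ⟨(v, w), he⟩, true), Subtype.ext ?_, ?_⟩
    · exact congrArg Dart.edge (dart.apply_symm_apply _)
    · exact congrArg (fun d : G.Dart => d.fst) (dart.apply_symm_apply _)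

end RotationSystem

theorem exists_realizes {V : Type u} [Finite V] (G : SimpleGraph V) :
    ∃ M : FlagSystem, M.Realizes G := by
  classical
  have := Fintype.ofFinite V
  let dart : Fin (Fintype.card G.Dart) ≃ G.Dart := (Fintype.equivFin G.Dart).symm
  let rev d := dart.symm (dart d).symm
  have hdart d : dart (rev d) = (dart d).symm := dart.apply_symm_apply _
  have hrev : Function.Involutive rev := fun d => dart.injective <| by
    rw [hdart, hdart, Dart.symm_symm]
  have hfix d : rev d ≠ d := fun h => (dart d).symm_ne (by rw [← hdart, h])
  obtain ⟨ρ, hρ_fst, hρ⟩ := exists_perm_transitive_on_fibres fun d => (dart d).fst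
  exact ⟨_, ofRotation_realizes hrev hfix hdart hρ_fst hρ⟩

end FlagSystem

theorem IsPlanar.exists_realizes {V : Type u} [Finite V] {G : SimpleGraph V} (h : IsPlanar G) :
    ∃ M : FlagSystem, M.Realizes G ∧ M.nV + M.nF = 2 * M.nC + M.nE := by
  have hne : {g | ∃ M : FlagSystem, M.Realizes G ∧ g + M.nV + M.nF = 2 * M.nC + M.nE}.Nonempty := by
    obtain ⟨M, hM⟩ := FlagSystem.exists_realizes G
    have := M.euler_le
    exact ⟨2 * M.nC + M.nE - (M.nV + M.nF), M, hM, by omega⟩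
  obtain ⟨M, hM, hEuler⟩ := Nat.sInf_mem hne
  rw [show sInf _ = 0 from h, zero_add] at hEuler
  exact ⟨M, hM, hEuler⟩

section HasseTree

variable {α β : Type*} [PartialOrder α] [PartialOrder β]

theorem eq_of_covBy_of_covBy (hα : ∀ a : α, IsChain (· ≤ ·) (Ici a)) {a b c : α} (hb : a ⋖ b)
    (hc : a ⋖ c) : b = c := by
  rcases (hα a).total hb.le hc.le with h | h
  · exact (hc.eq_or_eq hb.le h).resolve_left hb.ne'
  · exact ((hb.eq_or_eq hc.le h).resolve_left hc.ne').symm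

theorem hasse_reachable_of_le [Finite α] {s : Set (Sym2 α)} {a x : α} (hxa : x ≤ a)
    (hs : ∀ y z, x ≤ y → y < a → y ⋖ z → s(y, z) ∉ s) :
    ((hasse α).deleteEdges s).Reachable x a := by
  induction x using WellFoundedGT.induction with
  | ind x ih =>
    obtain rfl | hlt := hxa.eq_or_lt
    · rfl
    · obtain ⟨c, hxc, hca⟩ := exists_covBy_le_of_lt hlt
      have hadj : ((hasse α).deleteEdges s).Adj x c :=
        (deleteEdges_adj ..).2 ⟨Or.inl hxc, hs x c le_rfl hlt hxc⟩
      exact hadj.reachable.trans (ih c hxc.lt hca fun y z hcy => hs y z (hxc.le.trans hcy))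

theorem le_of_hasse_deleteEdges_adj (hα : ∀ a : α, IsChain (· ≤ ·) (Ici a)) {a b y z : α}
    (hab : a ⋖ b) (hya : y ≤ a) (h : ((hasse α).deleteEdges {s(a, b)}).Adj y z) : z ≤ a := by
  obtain ⟨hyz | hzy, hne⟩ := (deleteEdges_adj ..).1 h
  · obtain rfl | hlt := hya.eq_or_lt
    · exact absurd (by rw [eq_of_covBy_of_covBy hα hyz hab, mem_singleton_iff]) hne
    · by_contra hza
      have haz := ((hα y).total hyz.le hya).resolve_left hza
      exact hyz.2 hlt (haz.lt_of_not_ge hza)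
  · exact hzy.le.trans hya

theorem hasse_deleteEdges_reachable_iff [Finite α] (hα : ∀ a : α, IsChain (· ≤ ·) (Ici a))
    {a b x : α} (hab : a ⋖ b) : ((hasse α).deleteEdges {s(a, b)}).Reachable a x ↔ x ≤ a := by
  constructor
  · intro h
    rw [reachable_iff_reflTransGen] at h
    induction h with
    | refl => rfl
    | tail _ hadj ih => exact le_of_hasse_deleteEdges_adj hα hab ih hadj
  · intro hxa
    refine (hasse_reachable_of_le hxa fun y z _ hya _ h => ?_).symm
    rcases Sym2.eq_iff.1 h with ⟨rfl, -⟩ | ⟨rfl, -⟩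
    · exact hya.false
    · exact (hya.trans hab.lt).false

theorem hasse_deleteEdges_reachable_iff_not_le [Finite α] [OrderTop α]
    (hα : ∀ a : α, IsChain (· ≤ ·) (Ici a)) {a b x : α} (hba : b ⋖ a) :
    ((hasse α).deleteEdges {s(a, b)}).Reachable a x ↔ ¬ x ≤ b := by
  have reachable_top {y : α} (hyb : ¬ y ≤ b) :
      ((hasse α).deleteEdges {s(a, b)}).Reachable y ⊤ := by
    refine hasse_reachable_of_le le_top fun z w hyz _ hzw h => ?_
    rcases Sym2.eq_iff.1 h with ⟨rfl, rfl⟩ | ⟨rfl, -⟩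
    · exact hba.lt.asymm hzw.lt
    · exact hyb hyz
  constructor
  · intro h hxb
    rw [← hasse_deleteEdges_reachable_iff hα hba, Sym2.eq_swap] at hxb
    have hab := hxb.trans h.symm
    rw [Sym2.eq_swap, hasse_deleteEdges_reachable_iff hα hba] at hab
    exact hba.lt.not_ge hab
  · exact fun hxb => (reachable_top hba.lt.not_ge).trans (reachable_top hxb).symm

theorem hasse_isTree [Finite α] [OrderTop α] (hα : ∀ a : α, IsChain (· ≤ ·) (Ici a)) :
    (hasse α).IsTree := by
  have reachable_top (a : α) : (hasse α).Reachable a ⊤ := by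
    simpa using hasse_reachable_of_le (s := ∅) (le_top : a ≤ ⊤)
  refine ⟨⟨fun a b => (reachable_top a).trans (reachable_top b).symm⟩, ?_⟩
  refine isAcyclic_iff_forall_adj_isBridge.2 fun a b hab => isBridge_iff.2 ?_
  rcases hab with hab | hba
  · exact fun h => hab.lt.not_ge ((hasse_deleteEdges_reachable_iff hα hab).1 h)
  · refine fun h => hba.lt.not_ge ((hasse_deleteEdges_reachable_iff hα hba).1 ?_)
    rw [Sym2.eq_swap]
    exact h.symm

theorem ncard_neighborSet_hasse_orderIso (e : α ≃o β) (a : α) :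
    ((hasse β).neighborSet (e a)).ncard = ((hasse α).neighborSet a).ncard := by
  rw [← ncard_image_of_injective _ e.injective]
  congr 1
  ext b
  obtain ⟨b, rfl⟩ := e.surjective b
  simp [hasse_adj]

end HasseTree

section Dissection

variable {E : Type*} {ok : Set E → Prop} {X Y : Set E}

/-- `X` is the root of a binary tree of sets satisfying `ok`, in which every set is a singleton
or the disjoint union of its two children. -/
inductive Dissectable (ok : Set E → Prop) : Set E → Prop
  | singleton {e : E} : ok {e} → Dissectable ok {e}
  | union {X Y : Set E} : Dissectable ok X → Dissectable ok Y → Disjoint X Y → ok (X ∪ Y) →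
      Dissectable ok (X ∪ Y)

/-- `𝓕` is the family of node labels of a binary tree whose root is labelled by `X`, whose leaves
are labelled by the singletons of `X`, and whose other nodes are labelled by the disjoint union of
the labels of their two children. -/
structure IsDissection (𝓕 : Set (Set E)) (X : Set E) : Prop where
  self_mem : X ∈ 𝓕
  subset : ∀ A ∈ 𝓕, A ⊆ X
  nonempty : ∀ A ∈ 𝓕, A.Nonempty
  laminar : ∀ A ∈ 𝓕, ∀ B ∈ 𝓕, A ⊆ B ∨ B ⊆ A ∨ Disjoint A B
  singleton_mem : ∀ e ∈ X, {e} ∈ 𝓕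
  split : ∀ A ∈ 𝓕, (∃ e, A = {e}) ∨ ∃ B ∈ 𝓕, ∃ C ∈ 𝓕, Disjoint B C ∧ B ∪ C = A

theorem IsDissection.singleton (e : E) : IsDissection {{e}} {e} where
  self_mem := rfl
  subset := by simp
  nonempty := by simp
  laminar := by simp
  singleton_mem := by simp
  split := by simp

theorem IsDissection.union {𝓕 𝓖 : Set (Set E)} (h𝓕 : IsDissection 𝓕 X) (h𝓖 : IsDissection 𝓖 Y)
    (hXY : Disjoint X Y) : IsDissection (insert (X ∪ Y) (𝓕 ∪ 𝓖)) (X ∪ Y) where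
  self_mem := mem_insert _ _
  subset := by
    rintro A (rfl | hA | hA)
    · rfl
    · exact (h𝓕.subset A hA).trans subset_union_left
    · exact (h𝓖.subset A hA).trans subset_union_right
  nonempty := by
    rintro A (rfl | hA | hA)
    · exact (h𝓕.nonempty X h𝓕.self_mem).inl
    · exact h𝓕.nonempty A hA
    · exact h𝓖.nonempty A hA
  laminar := by
    have le_root {A : Set E} (hA : A ∈ 𝓕 ∪ 𝓖) : A ⊆ X ∪ Y :=
      hA.elim (fun h => (h𝓕.subset A h).trans subset_union_left)
        fun h => (h𝓖.subset A h).trans subset_union_right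
    rintro A (rfl | hA) B (rfl | hB)
    · exact Or.inl subset_rfl
    · exact Or.inr (Or.inl (le_root hB))
    · exact Or.inl (le_root hA)
    rcases hA with hA | hA <;> rcases hB with hB | hB
    · exact h𝓕.laminar A hA B hB
    · exact Or.inr (Or.inr (hXY.mono (h𝓕.subset A hA) (h𝓖.subset B hB)))
    · exact Or.inr (Or.inr (hXY.symm.mono (h𝓖.subset A hA) (h𝓕.subset B hB)))
    · exact h𝓖.laminar A hA B hB
  singleton_mem := by
    rintro e (he | he)
    · exact Or.inr (Or.inl (h𝓕.singleton_mem e he))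
    · exact Or.inr (Or.inr (h𝓖.singleton_mem e he))
  split := by
    rintro A (rfl | hA | hA)
    · exact Or.inr ⟨X, Or.inr (Or.inl h𝓕.self_mem), Y, Or.inr (Or.inr h𝓖.self_mem), hXY, rfl⟩
    · refine (h𝓕.split A hA).imp_right ?_
      rintro ⟨B, hB, C, hC, h⟩
      exact ⟨B, Or.inr (Or.inl hB), C, Or.inr (Or.inl hC), h⟩
    · refine (h𝓖.split A hA).imp_right ?_
      rintro ⟨B, hB, C, hC, h⟩
      exact ⟨B, Or.inr (Or.inr hB), C, Or.inr (Or.inr hC), h⟩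

theorem Dissectable.of_sdiff {ok : Set E → Prop} (hYX : Y ⊆ X) (hY : Dissectable ok Y)
    (hdiff : Dissectable ok (X \ Y)) (hX : ok X) : Dissectable ok X := by
  have hunion := union_sdiff_cancel hYX
  exact hunion ▸ hY.union hdiff disjoint_sdiff_right (hunion.symm ▸ hX)

theorem Dissectable.of_sdiff_singleton {ok : Set E → Prop} {e : E} (he : e ∈ X) (hoke : ok {e})
    (hX : ok X) (hdiff : (X \ {e}).Nonempty → Dissectable ok (X \ {e})) : Dissectable ok X := by
  rcases (X \ {e}).eq_empty_or_nonempty with hempty | hne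
  · rw [(sdiff_eq_empty.1 hempty).antisymm (singleton_subset_iff.2 he)]
    exact .singleton hoke
  · exact .of_sdiff (singleton_subset_iff.2 he) (.singleton hoke) (hdiff hne) hX

theorem Dissectable.exists_isDissection (h : Dissectable ok X) :
    ∃ 𝓕, IsDissection 𝓕 X ∧ ∀ A ∈ 𝓕, ok A := by
  induction h with
  | @singleton e he => exact ⟨{{e}}, .singleton e, by simpa using he⟩
  | union _ _ hXY hok ihX ihY =>
    obtain ⟨𝓕, h𝓕, hok𝓕⟩ := ihX
    obtain ⟨𝓖, h𝓖, hok𝓖⟩ := ihY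
    refine ⟨_, h𝓕.union h𝓖 hXY, ?_⟩
    rintro A (rfl | hA | hA)
    exacts [hok, hok𝓕 A hA, hok𝓖 A hA]

end Dissection

section Laminar

variable {E : Type*} {𝓖 : Set (Set E)}

theorem isChain_Ici_of_laminar (hne : ∀ A ∈ 𝓖, A.Nonempty)
    (hlam : ∀ A ∈ 𝓖, ∀ B ∈ 𝓖, A ⊆ B ∨ B ⊆ A ∨ Disjoint A B) (a : 𝓖) :
    IsChain (· ≤ ·) (Ici a) := by
  intro b hb c hc _
  rcases hlam b b.2 c c.2 with h | h | h
  · exact Or.inl h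
  · exact Or.inr h
  · exact absurd (h.mono hb hc) (by simpa using (hne a a.2).ne_empty)

theorem covBy_of_disjoint_of_union_eq (hne : ∀ A ∈ 𝓖, A.Nonempty)
    (hlam : ∀ A ∈ 𝓖, ∀ B ∈ 𝓖, A ⊆ B ∨ B ⊆ A ∨ Disjoint A B) {a b c : 𝓖}
    (hbc : Disjoint (b : Set E) c) (ha : (b ∪ c : Set E) = a) : b ⋖ a := by
  have not_disjoint_self (d : 𝓖) : ¬ Disjoint (d : Set E) d := by
    simpa using (hne d d.2).ne_empty
  refine ⟨lt_of_le_not_ge (show (b : Set E) ⊆ a from ha ▸ subset_union_left) fun hab => ?_,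
    fun d hbd hda => ?_⟩
  · exact not_disjoint_self c (hbc.mono_left ((ha ▸ subset_union_right).trans hab))
  · rcases hlam d d.2 c c.2 with h | h | h
    · exact not_disjoint_self b (hbc.mono_right (hbd.le.trans h))
    · exact hda.not_ge (show (a : Set E) ⊆ d from ha ▸ union_subset hbd.le h)
    · exact hbd.not_ge (show (d : Set E) ⊆ b from
        h.subset_left_of_subset_union ((show (d : Set E) ⊆ a from hda.le).trans ha.ge))

theorem covBy_iff_of_disjoint_of_union_eq (hne : ∀ A ∈ 𝓖, A.Nonempty)
    (hlam : ∀ A ∈ 𝓖, ∀ B ∈ 𝓖, A ⊆ B ∨ B ⊆ A ∨ Disjoint A B) {a b c d : 𝓖}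
    (hbc : Disjoint (b : Set E) c) (ha : (b ∪ c : Set E) = a) : d ⋖ a ↔ d = b ∨ d = c := by
  have hb : b ⋖ a := covBy_of_disjoint_of_union_eq hne hlam hbc ha
  have hc : c ⋖ a := covBy_of_disjoint_of_union_eq hne hlam hbc.symm ((union_comm _ _).trans ha)
  refine ⟨fun hd => ?_, by rintro (rfl | rfl) <;> assumption⟩
  have eq_of_not_disjoint {e : 𝓖} (he : e ⋖ a) (h : ¬ Disjoint (d : Set E) e) : d = e := by
    rcases hlam d d.2 e e.2 with hle | hle | hdisj
    · exact ((hd.eq_or_eq hle he.le).resolve_right he.ne).symm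
    · exact (he.eq_or_eq hle hd.le).resolve_right hd.ne
    · exact absurd hdisj h
  by_contra! hne'
  have hdisj : Disjoint (d : Set E) (b ∪ c) :=
    disjoint_union_right.2 ⟨by_contra fun h => hne'.1 (eq_of_not_disjoint hb h),
      by_contra fun h => hne'.2 (eq_of_not_disjoint hc h)⟩
  rw [ha] at hdisj
  exact (hne d d.2).ne_empty (hdisj.eq_bot_of_le hd.le)

end Laminar

namespace IsDissection

variable {E : Type*} {𝓕 : Set (Set E)} {X : Set E}

theorem nonempty_of_mem_insert_univ (h : IsDissection 𝓕 X) :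
    ∀ A ∈ insert univ 𝓕, A.Nonempty := by
  rintro A (rfl | hA)
  · exact (h.nonempty X h.self_mem).mono (subset_univ X)
  · exact h.nonempty A hA

theorem laminar_insert_univ (h : IsDissection 𝓕 X) :
    ∀ A ∈ insert univ 𝓕, ∀ B ∈ insert univ 𝓕, A ⊆ B ∨ B ⊆ A ∨ Disjoint A B := by
  rintro A (rfl | hA) B (rfl | hB)
  · exact Or.inl subset_rfl
  · exact Or.inr (Or.inl (subset_univ B))
  · exact Or.inl (subset_univ A)
  · exact h.laminar A hA B hB

theorem isChain_Ici (h : IsDissection 𝓕 X) (a : ↥(insert univ 𝓕)) :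
    IsChain (· ≤ ·) (Ici a) :=
  isChain_Ici_of_laminar h.nonempty_of_mem_insert_univ h.laminar_insert_univ a

theorem covBy_univ_iff (h : IsDissection 𝓕 X) (hX : X ≠ univ) {a b : ↥(insert univ 𝓕)}
    (ha : (a : Set E) = univ) : b ⋖ a ↔ (b : Set E) = X := by
  have hXa : (⟨X, Or.inr h.self_mem⟩ : ↥(insert univ 𝓕)) < a :=
    (show X ⊂ a by rwa [ha, ssubset_univ_iff])
  have le_X {c : ↥(insert univ 𝓕)} (hca : c < a) : (c : Set E) ⊆ X :=
    h.subset c (c.2.resolve_left fun hc => hca.ne (Subtype.ext (hc.trans ha.symm)))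
  constructor
  · intro hba
    by_contra hb
    exact hba.2 (lt_of_le_of_ne (le_X hba.lt) fun h' => hb (congrArg Subtype.val h')) hXa
  · intro hb
    obtain rfl : b = ⟨X, Or.inr h.self_mem⟩ := Subtype.ext hb
    exact ⟨hXa, fun c hXc hca => hXc.not_ge (le_X hca)⟩

theorem not_covBy_singleton (h : IsDissection 𝓕 X) {a b : ↥(insert univ 𝓕)} {e : E}
    (ha : (a : Set E) = {e}) : ¬ b ⋖ a := fun hba => by
  have hb : (b : Set E) = {e} :=
    (subset_singleton_iff_eq.1 (ha ▸ hba.le : (b : Set E) ⊆ {e})).resolve_left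
      (h.nonempty_of_mem_insert_univ b b.2).ne_empty
  exact hba.ne (Subtype.ext (hb.trans ha.symm))

theorem ncard_neighborSet_le_one [Finite E] (h : IsDissection 𝓕 X) (hX : X ≠ univ)
    {a : ↥(insert univ 𝓕)} (ha : (a : Set E) = univ ∨ ∃ e, (a : Set E) = {e}) :
    ((hasse ↥(insert univ 𝓕)).neighborSet a).ncard ≤ 1 := by
  rw [ncard_le_one_iff_subsingleton]
  rcases ha with ha | ⟨e, ha⟩
  · have hmax (b : ↥(insert univ 𝓕)) : ¬ a ⋖ b := fun hab =>
      hab.lt.not_ge (show (b : Set E) ⊆ a by rw [ha]; exact subset_univ _)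
    exact fun b hb c hc => Subtype.ext <|
      ((h.covBy_univ_iff hX ha).1 (hb.resolve_left (hmax b))).trans
        ((h.covBy_univ_iff hX ha).1 (hc.resolve_left (hmax c))).symm
  · exact fun b hb c hc => eq_of_covBy_of_covBy h.isChain_Ici
      (hb.resolve_right (h.not_covBy_singleton ha)) (hc.resolve_right (h.not_covBy_singleton ha))

theorem ncard_neighborSet_eq_three [Finite E] (h : IsDissection 𝓕 X) {a : ↥(insert univ 𝓕)}
    (hau : (a : Set E) ≠ univ) (has : ∀ e, (a : Set E) ≠ {e}) :
    ((hasse ↥(insert univ 𝓕)).neighborSet a).ncard = 3 := by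
  obtain ⟨e, he⟩ | ⟨B, hB, C, hC, hBC, hu⟩ := h.split a (a.2.resolve_left hau)
  · exact absurd he (has e)
  obtain ⟨p, hap, -⟩ := exists_covBy_le_of_lt
    (show a < (⟨univ, mem_insert _ _⟩ : ↥(insert univ 𝓕)) from ssubset_univ_iff.2 hau)
  set b : ↥(insert univ 𝓕) := ⟨B, Or.inr hB⟩
  set c : ↥(insert univ 𝓕) := ⟨C, Or.inr hC⟩
  have lower_iff (d : ↥(insert univ 𝓕)) : d ⋖ a ↔ d = b ∨ d = c :=
    covBy_iff_of_disjoint_of_union_eq h.nonempty_of_mem_insert_univ h.laminar_insert_univ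
      (b := b) (c := c) hBC hu
  have hpb : p ≠ b := fun hp => hap.lt.asymm (hp ▸ ((lower_iff b).2 (Or.inl rfl)).lt)
  have hpc : p ≠ c := fun hp => hap.lt.asymm (hp ▸ ((lower_iff c).2 (Or.inr rfl)).lt)
  have hbc : b ≠ c := fun hbc => (h.nonempty B hB).ne_empty
    (disjoint_self.1 (by rwa [← show B = C from congrArg Subtype.val hbc] at hBC))
  have hnbr : (hasse ↥(insert univ 𝓕)).neighborSet a = {p, b, c} := by
    ext d
    rw [mem_neighborSet, hasse_adj, lower_iff, mem_insert_iff, mem_insert_iff,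
      mem_singleton_iff]
    exact or_congr_left
      ⟨fun hd => eq_of_covBy_of_covBy h.isChain_Ici hd hap, fun hd => hd ▸ hap⟩
  rw [hnbr]
  exact ncard_eq_three.2 ⟨p, b, c, hpb, hpc, hbc, rfl⟩

theorem ncard_neighborSet_le_one_iff [Finite E] (h : IsDissection 𝓕 X) (hX : X ≠ univ)
    (a : ↥(insert univ 𝓕)) : ((hasse ↥(insert univ 𝓕)).neighborSet a).ncard ≤ 1 ↔
      (a : Set E) = univ ∨ ∃ e, (a : Set E) = {e} := by
  refine ⟨fun hle => ?_, h.ncard_neighborSet_le_one hX⟩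
  by_contra! hne
  rw [h.ncard_neighborSet_eq_three hne.1 hne.2] at hle
  omega

theorem univ_ne_singleton {e₀ : E} (h : IsDissection 𝓕 {e₀}ᶜ) (e : E) : univ ≠ ({e} : Set E) := by
  intro hu
  obtain ⟨e₁, he₁⟩ := h.nonempty _ h.self_mem
  exact he₁ (((Set.ext_iff.1 hu e₁).1 trivial).trans ((Set.ext_iff.1 hu e₀).1 trivial).symm)

theorem exists_leafEquiv [Finite E] {e₀ : E} (h : IsDissection 𝓕 {e₀}ᶜ) :
    ∃ τ : E ≃ {a // ((hasse ↥(insert univ 𝓕)).neighborSet a).ncard ≤ 1},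
      ((τ e₀ : ↥(insert univ 𝓕)) : Set E) = univ ∧
      ∀ e ≠ e₀, ((τ e : ↥(insert univ 𝓕)) : Set E) = {e} := by
  classical
  have hX : ({e₀}ᶜ : Set E) ≠ univ := by simp
  have isLeaf_iff := h.ncard_neighborSet_le_one_iff hX
  let leaf (e : E) : {a // ((hasse ↥(insert univ 𝓕)).neighborSet a).ncard ≤ 1} :=
    if he : e = e₀ then ⟨⟨univ, mem_insert _ _⟩, (isLeaf_iff _).2 (Or.inl rfl)⟩
    else ⟨⟨{e}, Or.inr (h.singleton_mem e he)⟩, (isLeaf_iff _).2 (Or.inr ⟨e, rfl⟩)⟩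
  have leaf_self : ((leaf e₀ : ↥(insert univ 𝓕)) : Set E) = univ := by simp [leaf]
  have leaf_ne (e : E) (he : e ≠ e₀) : ((leaf e : ↥(insert univ 𝓕)) : Set E) = {e} := by
    simp [leaf, he]
  have hbij : Function.Bijective leaf := by
    refine ⟨fun e f hef => ?_, fun ⟨a, ha⟩ => ?_⟩
    · replace hef : ((leaf e : ↥(insert univ 𝓕)) : Set E) = leaf f := by rw [hef]
      by_cases he : e = e₀ <;> by_cases hf : f = e₀
      · rw [he, hf]
      · rw [he, leaf_self, leaf_ne f hf] at hef
        exact absurd hef (h.univ_ne_singleton f)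
      · rw [hf, leaf_self, leaf_ne e he] at hef
        exact absurd hef.symm (h.univ_ne_singleton e)
      · rw [leaf_ne e he, leaf_ne f hf] at hef
        exact singleton_injective hef
    · rcases (isLeaf_iff a).1 ha with hau | ⟨e, hae⟩
      · exact ⟨e₀, Subtype.ext (Subtype.ext (leaf_self.trans hau.symm))⟩
      · have he : e ≠ e₀ :=
          h.subset a (a.2.resolve_left fun hu => h.univ_ne_singleton e (hu.symm.trans hae))
            (hae ▸ mem_singleton e)
        exact ⟨e, Subtype.ext (Subtype.ext ((leaf_ne e he).trans hae.symm))⟩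
  exact ⟨Equiv.ofBijective leaf hbij, leaf_self, leaf_ne⟩

theorem setOf_leaf_le {e₀ : E} (h : IsDissection 𝓕 {e₀}ᶜ) {τ : E → ↥(insert univ 𝓕)}
    (h₀ : (τ e₀ : Set E) = univ) (hτ : ∀ e ≠ e₀, (τ e : Set E) = {e}) {a : ↥(insert univ 𝓕)}
    (ha : (a : Set E) ≠ univ) : {e | τ e ≤ a} = a := by
  ext e
  change (τ e : Set E) ⊆ a ↔ e ∈ (a : Set E)
  by_cases he : e = e₀
  · have he₀ : e₀ ∉ (a : Set E) := fun h' => h.subset a (a.2.resolve_left ha) h' rfl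
    rw [he, h₀, univ_subset_iff]
    exact ⟨fun h' => absurd h' ha, fun h' => absurd h' he₀⟩
  · rw [hτ e he, singleton_subset_iff]

end IsDissection

section EdgeBoundary

variable {V : Type u} {G : SimpleGraph V} {X Y : Set G.edgeSet} {k : ℕ}

/-- The boundary of a set `X` of edges: the vertices incident both to an edge in `X` and to an
edge outside `X`. -/
def edgeBoundary (G : SimpleGraph V) (X : Set G.edgeSet) : Set V :=
  {v | (∃ e : G.edgeSet, e ∈ X ∧ v ∈ (e : Sym2 V)) ∧ ∃ e : G.edgeSet, e ∉ X ∧ v ∈ (e : Sym2 V)}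

theorem edgeBoundary_compl (X : Set G.edgeSet) : edgeBoundary G Xᶜ = edgeBoundary G X :=
  Set.ext fun _ => and_comm.trans (by simp only [edgeBoundary, mem_compl_iff, not_not]; rfl)

theorem edgeBoundary_univ : edgeBoundary G univ = ∅ :=
  eq_empty_of_forall_notMem fun _ ⟨_, _, he, _⟩ => he trivial

theorem BranchDecomp.branchwidth_le (B : BranchDecomp G)
    (hB : ∀ a b, B.T.Adj a b → (edgeBoundary G (B.side a b)).ncard ≤ k) :
    branchwidth G ≤ k := by
  have hwidth : B.width ≤ k := by
    refine csSup_le' ?_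
    rintro n ⟨a, b, hab, rfl⟩
    exact hB a b hab
  have hle : branchwidth G ≤ B.width := Nat.sInf_le ⟨B, rfl⟩
  exact hle.trans hwidth

theorem branchwidth_le_of_hasse {α : Type} [Finite α] [PartialOrder α] [OrderTop α]
    (hα : ∀ a : α, IsChain (· ≤ ·) (Ici a))
    (hdeg : ∀ a : α, ((hasse α).neighborSet a).ncard ≤ 1 ∨ ((hasse α).neighborSet a).ncard = 3)
    (τ : G.edgeSet ≃ {a // ((hasse α).neighborSet a).ncard ≤ 1})
    (hk : ∀ a : α, a ≠ ⊤ → (edgeBoundary G {e | (τ e).1 ≤ a}).ncard ≤ k) :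
    branchwidth G ≤ k := by
  let B : BranchDecomp G :=
    { t := α, fin := Fintype.ofFinite α, T := hasse α, isTree := hasse_isTree hα,
      ternary := hdeg, τ := τ }
  refine B.branchwidth_le fun a b hab => ?_
  rcases hab with hab | hba
  · have hside : B.side a b = {e | (τ e).1 ≤ a} :=
      Set.ext fun e => hasse_deleteEdges_reachable_iff hα hab
    exact hside ▸ hk a (hab.lt.trans_le le_top).ne
  · have hside : B.side a b = {e | (τ e).1 ≤ b}ᶜ :=
      Set.ext fun e => hasse_deleteEdges_reachable_iff_not_le hα hba
    rw [hside, edgeBoundary_compl]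
    exact hk b (hba.lt.trans_le le_top).ne

theorem IsDissection.branchwidth_le [Finite V] {e₀ : G.edgeSet} {𝓕 : Set (Set G.edgeSet)}
    (h : IsDissection 𝓕 {e₀}ᶜ) (hk : ∀ A ∈ 𝓕, (edgeBoundary G A).ncard ≤ k) :
    branchwidth G ≤ k := by
  let : OrderTop ↥(insert univ 𝓕) := Subtype.orderTop (mem_insert _ _)
  -- The vertex type of a `BranchDecomp` lives in the lowest universe.
  let shrink : ↥(insert univ 𝓕) ≃o Shrink.{0} ↥(insert univ 𝓕) := orderIsoShrink _
  have hdeg := ncard_neighborSet_hasse_orderIso shrink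
  obtain ⟨τ, hτ₀, hτ⟩ := h.exists_leafEquiv
  let shrinkLeaf := shrink.toEquiv.subtypeEquiv
    (p := fun a => ((hasse ↥(insert univ 𝓕)).neighborSet a).ncard ≤ 1)
    (q := fun a => ((hasse _).neighborSet a).ncard ≤ 1)
    fun a => (iff_of_eq (congrArg (· ≤ 1) (hdeg a))).symm
  refine branchwidth_le_of_hasse (α := Shrink.{0} ↥(insert univ 𝓕)) ?_ ?_
    (τ.trans shrinkLeaf) ?_
  · intro a b hb c hc hbc
    have hchain := h.isChain_Ici (shrink.symm a) (shrink.symm.monotone hb)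
      (shrink.symm.monotone hc) (shrink.symm.injective.ne hbc)
    exact hchain.imp shrink.symm.le_iff_le.1 shrink.symm.le_iff_le.1
  · intro a
    obtain ⟨a, rfl⟩ := shrink.surjective a
    rw [hdeg]
    refine (em _).imp_right fun hle => h.ncard_neighborSet_eq_three (fun ha => ?_) fun e ha => ?_
    · exact hle (h.ncard_neighborSet_le_one (by simp) (Or.inl ha))
    · exact hle (h.ncard_neighborSet_le_one (by simp) (Or.inr ⟨e, ha⟩))
  · intro a ha
    obtain ⟨a, rfl⟩ := shrink.surjective a
    have ha' : (a : Set G.edgeSet) ≠ univ := fun hu =>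
      ha (shrink.map_top ▸ congrArg shrink (Subtype.ext hu))
    have hside := h.setOf_leaf_le (τ := fun e => (τ e).1) hτ₀ hτ ha'
    have hset : {e | ((τ.trans shrinkLeaf) e).1 ≤ shrink a} = a :=
      (Set.ext fun e => shrink.le_iff_le).trans hside
    rw [hset]
    exact hk a (a.2.resolve_left ha')

/-- `X` can be dissected into single edges in such a way that all sets of edges occurring in the
dissection have boundary of size at most `k`. -/
abbrev DissectableWithin (G : SimpleGraph V) (k : ℕ) (X : Set G.edgeSet) : Prop :=
  Dissectable (fun Y => (edgeBoundary G Y).ncard ≤ k) X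

theorem branchwidth_le_of_dissectableWithin [Finite V] {e₀ : G.edgeSet}
    (h : DissectableWithin G k {e₀}ᶜ) : branchwidth G ≤ k := by
  obtain ⟨𝓕, h𝓕, hk⟩ := h.exists_isDissection
  exact h𝓕.branchwidth_le hk

theorem branchwidth_eq_zero_of_subsingleton [Subsingleton G.edgeSet] : branchwidth G = 0 := by
  rcases isEmpty_or_nonempty (BranchDecomp G) with hB | ⟨⟨B⟩⟩
  · exact Nat.sInf_eq_zero.2 (Or.inr (eq_empty_of_forall_notMem fun _ ⟨B, _⟩ => hB.false B))
  · refine Nat.le_zero.1 (B.branchwidth_le fun a b _ => ?_)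
    have hempty : edgeBoundary G (B.side a b) = ∅ :=
      eq_empty_of_forall_notMem fun _ ⟨⟨e, he, _⟩, f, hf, _⟩ => hf (Subsingleton.elim e f ▸ he)
    rw [hempty, ncard_empty]

end EdgeBoundary

section Component

variable {α : Type*} {H : SimpleGraph α} {A C D X Y Z : Set α} {e f : α}

/-- `Y` is a union of components of the subgraph of `H` induced on `X`: it is contained in `X`
and no edge of `H` joins it to the rest of `X`. -/
def IsClosedIn (H : SimpleGraph α) (Y X : Set α) : Prop :=
  Y ⊆ X ∧ ∀ e ∈ Y, ∀ f ∈ X, H.Adj e f → f ∈ Y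

theorem isClosedIn_self (X : Set α) : IsClosedIn H X X :=
  ⟨Subset.rfl, fun _ _ _ hf _ => hf⟩

theorem IsClosedIn.trans (hZ : IsClosedIn H Z Y) (hY : IsClosedIn H Y X) : IsClosedIn H Z X :=
  ⟨hZ.1.trans hY.1, fun e he f hf hef => hZ.2 e he f (hY.2 e (hZ.1 he) f hf hef) hef⟩

theorem IsClosedIn.sdiff (hY : IsClosedIn H Y X) : IsClosedIn H (X \ Y) X :=
  ⟨sdiff_subset, fun e he f hf hef => ⟨hf, fun hfY => he.2 (hY.2 f hfY e he.1 hef.symm)⟩⟩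

theorem subset_of_isClosedIn (hA : (H.induce A).Connected) (hAX : A ⊆ X)
    (hY : IsClosedIn H Y X) (hAY : (A ∩ Y).Nonempty) : A ⊆ Y := by
  intro a ha
  obtain ⟨y, hyA, hyY⟩ := hAY
  obtain ⟨p⟩ := hA.preconnected ⟨y, hyA⟩ ⟨a, ha⟩
  suffices hp : ∀ {u v : A}, (H.induce A).Walk u v → (u : α) ∈ Y → (v : α) ∈ Y from hp p hyY
  intro u v q
  induction q with
  | nil => exact id
  | cons huv _ ih => exact fun hu => ih (hY.2 _ hu _ (hAX (Subtype.prop _)) huv)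

theorem connected_induce_of_forall_isClosedIn (hX : X.Nonempty)
    (h : ∀ Y, Y.Nonempty → IsClosedIn H Y X → Y = X) : (H.induce X).Connected := by
  obtain ⟨e, he⟩ := hX
  let R : Set α := {f | ∃ hf : f ∈ X, (H.induce X).Reachable ⟨e, he⟩ ⟨f, hf⟩}
  have heR : e ∈ R := ⟨he, .refl _⟩
  have hR : IsClosedIn H R X := by
    refine ⟨fun f hf => hf.1, fun f hf g hg hfg => ⟨hg, hf.2.trans ?_⟩⟩
    exact Adj.reachable (G := H.induce X) (u := ⟨f, hf.1⟩) (v := ⟨g, hg⟩) hfg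
  have hreach (f : X) : (H.induce X).Reachable ⟨e, he⟩ f :=
    ((h R ⟨e, heR⟩ hR).symm ▸ f.2 : (f : α) ∈ R).2
  exact (connected_iff _).2 ⟨fun f g => (hreach f).symm.trans (hreach g), ⟨⟨e, he⟩⟩⟩

theorem connected_induce_singleton (e : α) : (H.induce {e}).Connected :=
  connected_induce_of_forall_isClosedIn (singleton_nonempty e) fun _ hY hYe =>
    (subset_singleton_iff_eq.1 hYe.1).resolve_left hY.ne_empty

theorem exists_connected_isClosedIn (he : e ∈ X) :
    ∃ Y, e ∈ Y ∧ (H.induce Y).Connected ∧ IsClosedIn H Y X := by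
  let Y : Set α := {f | ∀ Z, e ∈ Z → IsClosedIn H Z X → f ∈ Z}
  have heY : e ∈ Y := fun Z hZ _ => hZ
  have hYX : IsClosedIn H Y X :=
    ⟨fun f hf => hf X he (isClosedIn_self X),
      fun f hf g hg hfg Z hZ hZX => hZX.2 f (hf Z hZ hZX) g hg hfg⟩
  refine ⟨Y, heY, connected_induce_of_forall_isClosedIn ⟨e, heY⟩ fun Z ⟨z, hz⟩ hZY => ?_, hYX⟩
  have hZX := hZY.trans hYX
  by_cases heZ : e ∈ Z
  · exact hZY.1.antisymm fun f hf => hf Z heZ hZX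
  · exact absurd hz (hZY.1 hz (X \ Z) ⟨he, heZ⟩ hZX.sdiff).2

/-- `D` is a disc of `C`: both `D` and its complement in `C` induce connected subgraphs of `H`.
If `H` is the corner graph of a plane map and `C` is a component of the map, then `D` is the set
of edges drawn in a closed disc. -/
structure IsDisc (H : SimpleGraph α) (C D : Set α) : Prop where
  subset : D ⊆ C
  connected : (H.induce D).Connected
  connected_sdiff : (H.induce (C \ D)).Connected

theorem IsClosedIn.eq_of_connected (hC : (H.induce C).Connected) (hY : IsClosedIn H Y C)
    (hne : Y.Nonempty) : Y = C :=
  hY.1.antisymm <| subset_of_isClosedIn hC Subset.rfl hY <|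
    hne.mono (subset_inter hY.1 Subset.rfl)

theorem isDisc_of_isClosedIn (hC : (H.induce C).Connected) (hDC : D ⊆ C)
    (hD : (H.induce (C \ D)).Connected) (hY : (H.induce Y).Connected) (hYD : IsClosedIn H Y D) :
    IsDisc H C Y := by
  have eq_empty_of_subset : ∀ U, IsClosedIn H U (C \ Y) → U ⊆ D → U = ∅ := by
    intro U hU hUD
    by_contra hne
    have hUC : IsClosedIn H U C := by
      refine ⟨hU.1.trans sdiff_subset, fun e he f hf hef => hU.2 e he f ⟨hf, fun hfY => ?_⟩ hef⟩
      exact (hU.1 he).2 (hYD.2 f hfY e (hUD he) hef.symm)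
    obtain ⟨y, hy⟩ := nonempty_coe_sort.1 hY.nonempty
    have hyU : y ∈ U :=
      hUC.eq_of_connected hC (nonempty_iff_ne_empty.2 hne) ▸ hDC (hYD.1 hy)
    exact (hU.1 hyU).2 hy
  have hsub : C \ D ⊆ C \ Y := sdiff_subset_sdiff_right hYD.1
  refine ⟨hYD.1.trans hDC, hY, connected_induce_of_forall_isClosedIn
    ((nonempty_coe_sort.1 hD.nonempty).mono hsub) fun Z hZ hZC => ?_⟩
  have subset_of_diff_disjoint {U : Set α} (hU : U ⊆ C) (h : ∀ e ∈ C \ D, e ∉ U) : U ⊆ D :=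
    fun e he => by_contra fun heD => h e ⟨hU he, heD⟩ he
  by_cases hmeet : ((C \ D) ∩ Z).Nonempty
  · have hDZ := subset_of_isClosedIn hD hsub hZC hmeet
    have hrest := eq_empty_of_subset _ hZC.sdiff
      (subset_of_diff_disjoint (sdiff_subset.trans sdiff_subset) fun e he heZ => heZ.2 (hDZ he))
    exact hZC.1.antisymm (sdiff_eq_empty.1 hrest)
  · have hZ' := eq_empty_of_subset Z hZC
      (subset_of_diff_disjoint (hZC.1.trans sdiff_subset) fun e he heZ => hmeet ⟨e, he, heZ⟩)
    exact absurd hZ' hZ.ne_empty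

theorem IsDisc.exists_adj (hC : (H.induce C).Connected) (hD : IsDisc H C D) :
    ∃ e ∈ D, ∃ f ∈ C \ D, H.Adj e f := by
  by_contra! hcon
  have hDC : IsClosedIn H D C :=
    ⟨hD.subset, fun e he f hf hef => by_contra fun hfD => hcon e he f ⟨hf, hfD⟩ hef⟩
  obtain ⟨f, hfC, hfD⟩ := nonempty_coe_sort.1 hD.connected_sdiff.nonempty
  exact hfD (hDC.eq_of_connected hC (nonempty_coe_sort.1 hD.connected.nonempty) ▸ hfC)

theorem IsDisc.exists_isClosedIn_sdiff (hD : IsDisc H C D) (hAD : A ⊆ D) :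
    ∃ K, C \ D ⊆ K ∧ (H.induce K).Connected ∧ IsClosedIn H K (C \ A) := by
  obtain ⟨e, heC, heD⟩ := nonempty_coe_sort.1 hD.connected_sdiff.nonempty
  obtain ⟨K, heK, hK, hKA⟩ :=
    exists_connected_isClosedIn (H := H) (X := C \ A) ⟨heC, fun heA => heD (hAD heA)⟩
  exact ⟨K, subset_of_isClosedIn hD.connected_sdiff (sdiff_subset_sdiff_right hAD) hKA
    ⟨e, ⟨heC, heD⟩, heK⟩, hK, hKA⟩

end Component

section CornerGraph

variable {V : Type u} {G : SimpleGraph V} {H : SimpleGraph G.edgeSet} {k : ℕ}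
  {A C D K X Y : Set G.edgeSet} {e f : G.edgeSet}

/-- `H` is a graph on the edges of `G` that joins only edges of `G` with a common endpoint, and
joins enough of them to witness every boundary vertex of every set of edges. The main example is
the graph joining edges that are consecutive around a vertex of an embedding of `G`. -/
structure IsCornerGraph (G : SimpleGraph V) (H : SimpleGraph G.edgeSet) : Prop where
  exists_mem_of_adj : ∀ {e f}, H.Adj e f → ∃ v, v ∈ (e : Sym2 V) ∧ v ∈ (f : Sym2 V)
  exists_adj_of_mem_edgeBoundary : ∀ {X v}, v ∈ edgeBoundary G X →
    ∃ e ∈ X, ∃ f ∉ X, H.Adj e f ∧ v ∈ (e : Sym2 V) ∧ v ∈ (f : Sym2 V)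

theorem IsCornerGraph.edgeBoundary_subset (hG : IsCornerGraph G H) (hYX : IsClosedIn H Y X) :
    edgeBoundary G Y ⊆ edgeBoundary G X := by
  intro v hv
  obtain ⟨e, he, f, hf, hef, hve, hvf⟩ := hG.exists_adj_of_mem_edgeBoundary hv
  exact ⟨⟨e, hYX.1 he, hve⟩, f, fun hfX => hf (hYX.2 e he f hfX hef), hvf⟩

theorem IsCornerGraph.edgeBoundary_sdiff (hG : IsCornerGraph G H) (hC : IsClosedIn H C univ)
    (hYC : Y ⊆ C) : edgeBoundary G (C \ Y) = edgeBoundary G Y := by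
  refine Subset.antisymm (fun v hv => ?_) fun v hv => ?_
  · obtain ⟨e, he, f, hf, hef, hve, hvf⟩ := hG.exists_adj_of_mem_edgeBoundary hv
    have hfC : f ∈ C := hC.2 e he.1 f trivial hef
    exact ⟨⟨f, by_contra fun hfY => hf ⟨hfC, hfY⟩, hvf⟩, e, he.2, hve⟩
  · obtain ⟨e, he, f, hf, hef, hve, hvf⟩ := hG.exists_adj_of_mem_edgeBoundary hv
    exact ⟨⟨f, ⟨hC.2 e (hYC he) f trivial hef, hf⟩, hvf⟩, e, fun heC => heC.2 he, hve⟩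

theorem ncard_setOf_mem_sym2_le_two (z : Sym2 V) : {v | v ∈ z}.ncard ≤ 2 := by
  induction z with
  | h a b =>
    have hab : {v | v ∈ s(a, b)} = {a, b} := Set.ext fun v => Sym2.mem_iff
    rw [hab]
    exact (ncard_insert_le a {b}).trans (by rw [ncard_singleton])

theorem finite_setOf_mem_sym2 (z : Sym2 V) : {v | v ∈ z}.Finite := by
  induction z with
  | h a b => exact (toFinite {a, b}).subset fun v hv => Sym2.mem_iff.1 hv

theorem ncard_edgeBoundary_singleton_le (e : G.edgeSet) : (edgeBoundary G {e}).ncard ≤ 2 := by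
  refine (ncard_le_ncard ?_ (finite_setOf_mem_sym2 e)).trans (ncard_setOf_mem_sym2_le_two e.1)
  rintro v ⟨⟨f, rfl, hv⟩, -⟩
  exact hv

theorem ncard_edgeBoundary_sdiff_singleton_le [Finite V] {v : V} (he : e ∈ D) (hf : f ∉ D)
    (hve : v ∈ (e : Sym2 V)) (hvf : v ∈ (f : Sym2 V)) :
    (edgeBoundary G (D \ {e})).ncard ≤ (edgeBoundary G D).ncard + 1 := by
  have hsub : edgeBoundary G (D \ {e}) ⊆ edgeBoundary G D ∪ ({w | w ∈ (e : Sym2 V)} \ {v}) := by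
    rintro w ⟨⟨f', hf', hwf'⟩, g, hg, hwg⟩
    refine or_iff_not_imp_left.2 fun hwD => ?_
    have hgD : g ∈ D := by_contra fun hgD => hwD ⟨⟨f', hf'.1, hwf'⟩, g, hgD, hwg⟩
    have hge : g = e := by_contra fun hge => hg ⟨hgD, hge⟩
    exact ⟨hge ▸ hwg, fun hwv => hwD (hwv ▸ ⟨⟨e, he, hve⟩, f, hf, hvf⟩)⟩
  have hunion := (ncard_le_ncard hsub (toFinite _)).trans (ncard_union_le _ _)
  have hlt : ({w | w ∈ (e : Sym2 V)} \ {v}).ncard < {w | w ∈ (e : Sym2 V)}.ncard :=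
    ncard_sdiff_singleton_lt_of_mem hve (toFinite _)
  have htwo := ncard_setOf_mem_sym2_le_two (e : Sym2 V)
  omega

theorem IsCornerGraph.dissectableWithin_of_components [Finite V] (hG : IsCornerGraph G H)
    (hne : X.Nonempty) (hX : (edgeBoundary G X).ncard ≤ k)
    (h : ∀ Y, (H.induce Y).Connected → IsClosedIn H Y X → DissectableWithin G k Y) :
    DissectableWithin G k X := by
  induction hn : X.ncard using Nat.strong_induction_on generalizing X with
  | _ n ih =>
    obtain ⟨e, he⟩ := hne
    obtain ⟨Y, heY, hY, hYX⟩ := exists_connected_isClosedIn (H := H) he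
    rcases (X \ Y).eq_empty_or_nonempty with hempty | hrest
    · exact hYX.1.antisymm (sdiff_eq_empty.1 hempty) ▸ h Y hY hYX
    · refine .of_sdiff hYX.1 (h Y hY hYX) (ih _ ?_ hrest ?_ ?_ rfl) hX
      · exact hn ▸ ncard_lt_ncard ⟨sdiff_subset, fun hsub => (hsub he).2 heY⟩ (toFinite _)
      · exact (ncard_le_ncard (hG.edgeBoundary_subset hYX.sdiff) (toFinite _)).trans hX
      · exact fun Z hZ hZX => h Z hZ (hZX.trans hYX.sdiff)

theorem IsCornerGraph.edgeBoundary_sdiff_subset (hG : IsCornerGraph G H)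
    (hC : IsClosedIn H C univ) (hAC : A ⊆ C) (hY : IsClosedIn H Y (C \ A)) :
    edgeBoundary G (C \ Y) ⊆ edgeBoundary G A := by
  rw [hG.edgeBoundary_sdiff hC (hY.1.trans sdiff_subset), ← hG.edgeBoundary_sdiff hC hAC]
  exact hG.edgeBoundary_subset hY

-- First shrink `A` to the complement of a component `K`, then the rest of `D` to the complement
-- of a component `L`; the two parts of `D` are then bounded by connected sets.
theorem IsCornerGraph.exists_split (hG : IsCornerGraph G H) (hC : IsClosedIn H C univ)
    (hD : IsDisc H C D) (hAD : A ⊆ D) :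
    ∃ B ⊆ D, edgeBoundary G B ⊆ edgeBoundary G A ∧
      edgeBoundary G (D \ B) ⊆ edgeBoundary G (D \ A) ∧
      (∃ K ⊆ C, (H.induce K).Connected ∧ IsClosedIn H B (C \ K)) ∧
      ∃ L ⊆ C, (H.induce L).Connected ∧ IsClosedIn H (D \ B) (C \ L) := by
  obtain ⟨K, hDK, hK, hKA⟩ := hD.exists_isClosedIn_sdiff hAD
  obtain ⟨L, hDL, hL, hLK⟩ := hD.exists_isClosedIn_sdiff (inter_subset_left : D ∩ K ⊆ D)
  have hDK_closed : IsClosedIn H (D ∩ K) (D \ A) :=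
    ⟨fun e he => ⟨he.1, (hKA.1 he.2).2⟩, fun e he f hf hef =>
      ⟨hf.1, hKA.2 e he.2 f ⟨hD.subset hf.1, hf.2⟩ hef⟩⟩
  have hDL_closed : IsClosedIn H (D ∩ L) (C \ K) :=
    ⟨fun e he => ⟨hD.subset he.1, fun heK => (hLK.1 he.2).2 ⟨he.1, heK⟩⟩, fun e he f hf hef =>
      ⟨by_contra fun hfD => hf.2 (hDK ⟨hf.1, hfD⟩),
        hLK.2 e he.2 f ⟨hf.1, fun hfK => hf.2 hfK.2⟩ hef⟩⟩
  have hrest : D \ (D ∩ L) = C \ L := by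
    rw [sdiff_self_inter]
    exact (sdiff_subset_sdiff_left hD.subset).antisymm fun e he =>
      ⟨by_contra fun heD => he.2 (hDL ⟨he.1, heD⟩), he.2⟩
  refine ⟨D ∩ L, inter_subset_left, ?_, ?_, ⟨K, hKA.1.trans sdiff_subset, hK, hDL_closed⟩,
    L, hLK.1.trans sdiff_subset, hL, hrest ▸ isClosedIn_self _⟩
  · exact (hG.edgeBoundary_subset hDL_closed).trans
      (hG.edgeBoundary_sdiff_subset hC (hAD.trans hD.subset) hKA)
  · rw [hrest]
    exact (hG.edgeBoundary_sdiff_subset hC (inter_subset_left.trans hD.subset) hLK).trans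
      (hG.edgeBoundary_subset hDK_closed)

variable [Finite V]

theorem IsCornerGraph.dissectableWithin_of_ssubset (hG : IsCornerGraph G H)
    (hC : (H.induce C).Connected)
    (ih : ∀ Y, Y ⊂ D → IsDisc H C Y → (edgeBoundary G Y).ncard ≤ k → DissectableWithin G k Y)
    (hAD : A ⊂ D) (hne : A.Nonempty) (hA : (edgeBoundary G A).ncard ≤ k) (hKC : K ⊆ C)
    (hK : (H.induce K).Connected) (hAK : IsClosedIn H A (C \ K)) :
    DissectableWithin G k A := by
  refine hG.dissectableWithin_of_components hne hA fun Y hY hYA => ih Y ?_ ?_ ?_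
  · exact hYA.1.trans_ssubset hAD
  · refine isDisc_of_isClosedIn hC sdiff_subset ?_ hY (hYA.trans hAK)
    rwa [sdiff_sdiff_cancel_left hKC]
  · exact (ncard_le_ncard (hG.edgeBoundary_subset hYA) (toFinite _)).trans hA

theorem IsCornerGraph.dissectableWithin_of_ncard_lt (hG : IsCornerGraph G H)
    (hC : (H.induce C).Connected) (hk : 2 ≤ k) (hD : IsDisc H C D)
    (hDk : (edgeBoundary G D).ncard < k)
    (ih : ∀ Y, Y ⊂ D → IsDisc H C Y → (edgeBoundary G Y).ncard ≤ k → DissectableWithin G k Y) :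
    DissectableWithin G k D := by
  obtain ⟨e, he, f, hf, hef⟩ := hD.exists_adj hC
  obtain ⟨v, hve, hvf⟩ := hG.exists_mem_of_adj hef
  refine .of_sdiff_singleton he ((ncard_edgeBoundary_singleton_le e).trans hk) hDk.le fun hne => ?_
  have hconn : (H.induce ({e} ∪ C \ D)).Connected :=
    connected_induce_union (connected_induce_singleton e).preconnected
      hD.connected_sdiff.preconnected rfl hf hef
  have hrest : C \ ({e} ∪ C \ D) = D \ {e} := by
    rw [union_comm, ← sdiff_sdiff, sdiff_sdiff_cancel_left hD.subset]
  refine hG.dissectableWithin_of_ssubset hC ih (sdiff_singleton_ssubset.2 he) hne ?_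
    (union_subset (singleton_subset_iff.2 (hD.subset he)) sdiff_subset) hconn
    (hrest ▸ isClosedIn_self _)
  have := ncard_edgeBoundary_sdiff_singleton_le he hf.2 hve hvf
  omega

theorem IsCornerGraph.dissectableWithin_of_split (hG : IsCornerGraph G H)
    (hC : (H.induce C).Connected) (hCu : IsClosedIn H C univ) (hD : IsDisc H C D) (hAD : A ⊆ D)
    (hDk : (edgeBoundary G D).ncard ≤ k)
    (hA : (edgeBoundary G A).ncard < (edgeBoundary G D).ncard)
    (hDA : (edgeBoundary G (D \ A)).ncard < (edgeBoundary G D).ncard)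
    (ih : ∀ Y, Y ⊂ D → IsDisc H C Y → (edgeBoundary G Y).ncard ≤ k → DissectableWithin G k Y) :
    DissectableWithin G k D := by
  obtain ⟨B, hBD, hBA, hDBA, ⟨K, hKC, hK, hBK⟩, L, hLC, hL, hBL⟩ := hG.exists_split hCu hD hAD
  have hB := (ncard_le_ncard hBA (toFinite _)).trans_lt hA
  have hDB := (ncard_le_ncard hDBA (toFinite _)).trans_lt hDA
  have hBss : B ⊂ D := hBD.ssubset_of_ne fun h => (h ▸ hB).false
  have hDBss : D \ B ⊂ D := sdiff_subset.ssubset_of_ne fun h => (h ▸ hDB).false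
  have hBne : B.Nonempty := nonempty_iff_ne_empty.2 fun h => hDBss.ne (h ▸ sdiff_empty)
  exact .of_sdiff hBD
    (hG.dissectableWithin_of_ssubset hC ih hBss hBne (hB.le.trans hDk) hKC hK hBK)
    (hG.dissectableWithin_of_ssubset hC ih hDBss (nonempty_of_ssubset hBss) (hDB.le.trans hDk)
      hLC hL hBL) hDk

theorem IsCornerGraph.dissectableWithin_of_isDisc (hG : IsCornerGraph G H)
    (hC : (H.induce C).Connected) (hCu : IsClosedIn H C univ) (hk : 2 ≤ k)
    (hsplit : ∀ D, IsDisc H C D → (edgeBoundary G D).ncard = k →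
      ∃ A ⊆ D, (edgeBoundary G A).ncard < k ∧ (edgeBoundary G (D \ A)).ncard < k)
    (hD : IsDisc H C D) (hDk : (edgeBoundary G D).ncard ≤ k) : DissectableWithin G k D := by
  induction hn : D.ncard using Nat.strong_induction_on generalizing D with
  | _ n ih =>
    have ih' : ∀ Y, Y ⊂ D → IsDisc H C Y → (edgeBoundary G Y).ncard ≤ k →
        DissectableWithin G k Y :=
      fun Y hYD hY hYk => ih _ (hn ▸ ncard_lt_ncard hYD (toFinite _)) hY hYk rfl
    rcases hDk.lt_or_eq with hlt | heq
    · exact hG.dissectableWithin_of_ncard_lt hC hk hD hlt ih'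
    · obtain ⟨A, hAD, hA, hDA⟩ := hsplit D hD heq
      exact hG.dissectableWithin_of_split hC hCu hD hAD hDk (heq ▸ hA) (heq ▸ hDA) ih'

theorem IsCornerGraph.dissectableWithin_sdiff_singleton (hG : IsCornerGraph G H)
    (hC : (H.induce C).Connected) (hCu : IsClosedIn H C univ) (hk : 2 ≤ k)
    (hsplit : ∀ D, IsDisc H C D → (edgeBoundary G D).ncard = k →
      ∃ A ⊆ D, (edgeBoundary G A).ncard < k ∧ (edgeBoundary G (D \ A)).ncard < k)
    (he : e ∈ C) (hY : (H.induce Y).Connected) (hYC : IsClosedIn H Y (C \ {e})) :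
    DissectableWithin G k Y := by
  have heC : {e} ⊆ C := singleton_subset_iff.2 he
  refine hG.dissectableWithin_of_isDisc hC hCu hk hsplit
    (isDisc_of_isClosedIn hC sdiff_subset ?_ hY hYC) ?_
  · rw [sdiff_sdiff_cancel_left heC]
    exact connected_induce_singleton e
  · refine (ncard_le_ncard (hG.edgeBoundary_subset hYC) (toFinite _)).trans ?_
    rw [hG.edgeBoundary_sdiff hCu heC]
    exact (ncard_edgeBoundary_singleton_le e).trans hk

theorem IsCornerGraph.dissectableWithin_of_isClosedIn_univ (hG : IsCornerGraph G H)
    (hC : (H.induce C).Connected) (hCu : IsClosedIn H C univ) (hk : 2 ≤ k)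
    (hsplit : ∀ D, IsDisc H C D → (edgeBoundary G D).ncard = k →
      ∃ A ⊆ D, (edgeBoundary G A).ncard < k ∧ (edgeBoundary G (D \ A)).ncard < k) :
    DissectableWithin G k C := by
  obtain ⟨e, he⟩ := nonempty_coe_sort.1 hC.nonempty
  have hbd : edgeBoundary G C = ∅ :=
    subset_empty_iff.1 (edgeBoundary_univ (G := G) ▸ hG.edgeBoundary_subset hCu)
  have hbde := (ncard_edgeBoundary_singleton_le e).trans hk
  refine .of_sdiff_singleton he hbde (by rw [hbd, ncard_empty]; exact k.zero_le) fun hne => ?_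
  refine hG.dissectableWithin_of_components hne ?_ fun Y hY hYC =>
    hG.dissectableWithin_sdiff_singleton hC hCu hk hsplit he hY hYC
  rwa [hG.edgeBoundary_sdiff hCu (singleton_subset_iff.2 he)]

theorem IsCornerGraph.dissectableWithin_compl_singleton (hG : IsCornerGraph G H) (hk : 2 ≤ k)
    (hsplit : ∀ C D, (H.induce C).Connected → IsClosedIn H C univ → IsDisc H C D →
      (edgeBoundary G D).ncard = k →
      ∃ A ⊆ D, (edgeBoundary G A).ncard < k ∧ (edgeBoundary G (D \ A)).ncard < k)
    (hne : ({e}ᶜ : Set G.edgeSet).Nonempty) : DissectableWithin G k {e}ᶜ := by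
  refine hG.dissectableWithin_of_components hne ?_ fun Y hY hYe => ?_
  · rw [edgeBoundary_compl]
    exact (ncard_edgeBoundary_singleton_le e).trans hk
  obtain ⟨C, heC, hC, hCu⟩ := exists_connected_isClosedIn (H := H) (mem_univ e)
  by_cases hYC : (Y ∩ C).Nonempty
  · have hsub := subset_of_isClosedIn hY (subset_univ Y) hCu hYC
    exact hG.dissectableWithin_sdiff_singleton hC hCu hk (fun D => hsplit C D hC hCu) heC hY
      ⟨fun f hf => ⟨hsub hf, hYe.1 hf⟩, fun f hf g hg hfg => hYe.2 f hf g hg.2 hfg⟩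
  · have hYu : IsClosedIn H Y univ := by
      refine ⟨subset_univ _, fun f hf g _ hfg => hYe.2 f hf g (fun hge => ?_) hfg⟩
      exact hYC ⟨f, hf, hCu.2 e heC f trivial (hge ▸ hfg.symm)⟩
    exact hG.dissectableWithin_of_isClosedIn_univ hY hYu hk fun D => hsplit Y D hY hYu

end CornerGraph

theorem even_card_of_involutive {F : Type*} {S : Finset F} {τ : F → F}
    (hτ : Function.Involutive τ) (hfix : ∀ x, τ x ≠ x) (hS : ∀ x ∈ S, τ x ∈ S) :
    Even S.card := by
  have h : ∑ _x ∈ S, (1 : ZMod 2) = 0 :=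
    Finset.sum_involution (fun x _ => τ x) (fun _ _ => by decide) (fun x _ _ => hfix x) hS
      fun x _ => hτ x
  rw [Finset.sum_const, nsmul_eq_mul, mul_one] at h
  exact (ZMod.natCast_eq_zero_iff_even).1 h

theorem exists_ne_mem_and_apply_notMem {F : Type*} [Finite F] {σ τ : F → F}
    (hσ : Function.Involutive σ) (hσ_fix : ∀ x, σ x ≠ x) (hτ : Function.Involutive τ)
    (hτ_fix : ∀ x, τ x ≠ x) {P Q : Set F} (hPσ : ∀ x ∈ P, σ x ∈ P) (hPτ : ∀ x ∈ P, τ x ∈ P)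
    (hQτ : ∀ x ∈ Q, τ x ∈ Q) {x : F} (hxP : x ∈ P) (hxQ : x ∈ Q) (hσx : σ x ∉ Q) :
    ∃ y, y ≠ x ∧ y ∈ P ∧ y ∈ Q ∧ σ y ∉ Q := by
  classical
  have := Fintype.ofFinite F
  by_contra! hunique
  have hall : Even (Finset.univ.filter (· ∈ P ∩ Q)).card :=
    even_card_of_involutive hτ hτ_fix fun y hy => by
      simp only [Finset.mem_filter_univ] at hy ⊢
      exact ⟨hPτ y hy.1, hQτ y hy.2⟩
  have hinner : Even ((Finset.univ.filter (· ∈ P ∩ Q)).filter (σ · ∈ Q)).card :=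
    even_card_of_involutive hσ hσ_fix fun y hy => by
      simp only [Finset.mem_filter, Finset.mem_univ, true_and] at hy ⊢
      exact ⟨⟨hPσ y hy.1.1, hy.2⟩, by rw [hσ y]; exact hy.1.2⟩
  have hx : (Finset.univ.filter (· ∈ P ∩ Q)).filter (σ · ∉ Q) = {x} := by
    ext y
    simp only [Finset.mem_filter, Finset.mem_univ, true_and, Finset.mem_singleton]
    refine ⟨fun hy => by_contra fun hyx => hy.2 (hunique y hyx hy.1.1 hy.1.2), ?_⟩
    rintro rfl
    exact ⟨⟨hxP, hxQ⟩, hσx⟩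
  rw [← Finset.card_filter_add_card_filter_not (σ · ∈ Q), hx, Finset.card_singleton] at hall
  exact Nat.not_even_iff_odd.2 hinner.add_one hall

namespace FlagSystem

variable {M : FlagSystem} {σ τ : Equiv.Perm M.F} {x y : M.F} {β : Type*} {f : M.F → β}

theorem SameOrbit.apply_eq (h : M.SameOrbit {σ, τ} x y) (hσ : ∀ z, f (σ z) = f z)
    (hτ : ∀ z, f (τ z) = f z) : f y = f x := by
  obtain ⟨g, hg, rfl⟩ := h
  refine apply_eq_of_mem_closure (f := f) ?_ hg x
  rintro ρ (rfl | rfl)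
  exacts [hσ, hτ]

theorem SameOrbit.apply_eq_of_mem {P : Set M.F} (h : M.SameOrbit {σ, τ} x y) (hx : x ∈ P)
    (hPσ : ∀ z, σ z ∈ P ↔ z ∈ P) (hPτ : ∀ z, τ z ∈ P ↔ z ∈ P)
    (hσ : ∀ z ∈ P, f (σ z) = f z) (hτ : ∀ z ∈ P, f (τ z) = f z) : f y = f x := by
  have hset := h.apply_eq (f := fun z => {b | z ∈ P ∧ f z = b})
    (fun z => Set.ext fun b => by
      simp only [hPσ, Set.mem_ofPred_eq]
      exact and_congr_right fun hz => by rw [hσ z hz])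
    (fun z => Set.ext fun b => by
      simp only [hPτ, Set.mem_ofPred_eq]
      exact and_congr_right fun hz => by rw [hτ z hz])
  have hmem : f x ∈ {b | y ∈ P ∧ f y = b} := hset ▸ ⟨hx, rfl⟩
  exact hmem.2

end FlagSystem

/-- A plane embedding of `G`: a flag system satisfying Euler's formula of the sphere, each flag of
which has a vertex and an edge of `G`, such that the flags at a non-isolated vertex or at an edge
form an orbit. -/
structure PlaneMap {V : Type u} (G : SimpleGraph V) extends FlagSystem where
  vert : F → V
  edge : F → G.edgeSet
  vert_mem_edge : ∀ x, vert x ∈ (edge x : Sym2 V)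
  vert_σ₁ : ∀ x, vert (σ₁ x) = vert x
  vert_σ₂ : ∀ x, vert (σ₂ x) = vert x
  vert_σ₀_ne : ∀ x, vert (σ₀ x) ≠ vert x
  edge_σ₀ : ∀ x, edge (σ₀ x) = edge x
  edge_σ₂ : ∀ x, edge (σ₂ x) = edge x
  sameOrbit_of_vert_eq : ∀ {x y}, vert x = vert y → toFlagSystem.SameOrbit {σ₁, σ₂} x y
  sameOrbit_of_edge_eq : ∀ {x y}, edge x = edge y → toFlagSystem.SameOrbit {σ₀, σ₂} x y
  exists_edge_eq_vert_eq : ∀ {e : G.edgeSet} {v}, v ∈ (e : Sym2 V) → ∃ x, edge x = e ∧ vert x = v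
  euler : toFlagSystem.nV + toFlagSystem.nF = 2 * toFlagSystem.nC + toFlagSystem.nE

theorem IsPlanar.nonempty_planeMap {V : Type u} [Finite V] {G : SimpleGraph V} (h : IsPlanar G) :
    Nonempty (PlaneMap G) := by
  obtain ⟨M, ⟨fv, fe, hmem, hv₁, hv₂, hv₀, he₀, he₂, hvert, hedge, -, hsurj⟩, hM⟩ :=
    h.exists_realizes
  exact ⟨{ M with
    vert := fun x => fv x
    edge := fe
    vert_mem_edge := hmem
    vert_σ₁ := fun x => by rw [hv₁]
    vert_σ₂ := fun x => by rw [hv₂]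
    vert_σ₀_ne := fun x hx => hv₀ x (Subtype.ext hx)
    edge_σ₀ := he₀
    edge_σ₂ := he₂
    sameOrbit_of_vert_eq := fun hxy => hvert _ _ (Subtype.ext hxy)
    sameOrbit_of_edge_eq := hedge _ _
    exists_edge_eq_vert_eq := hsurj _ _
    euler := hM }⟩

namespace PlaneMap

variable {V : Type u} {G : SimpleGraph V} (m : PlaneMap G)

section Propagation

variable {m} {β : Type*} {f : m.F → β} {x y : m.F} {X : Set G.edgeSet}

theorem apply_eq_of_vert_eq (hxy : m.vert x = m.vert y)
    (h₁ : ∀ z, m.vert z = m.vert x → f (m.σ₁ z) = f z)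
    (h₂ : ∀ z, m.vert z = m.vert x → f (m.σ₂ z) = f z) : f y = f x :=
  (m.sameOrbit_of_vert_eq hxy).apply_eq_of_mem (P := {z | m.vert z = m.vert x}) rfl
    (fun z => by simp only [Set.mem_ofPred_eq, m.vert_σ₁])
    (fun z => by simp only [Set.mem_ofPred_eq, m.vert_σ₂]) h₁ h₂

theorem apply_eq_of_edge_eq (hxy : m.edge x = m.edge y) (hx : m.edge x ∈ X)
    (h₀ : ∀ z, m.edge z ∈ X → f (m.σ₀ z) = f z) (h₂ : ∀ z, m.edge z ∈ X → f (m.σ₂ z) = f z) :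
    f y = f x :=
  (m.sameOrbit_of_edge_eq hxy).apply_eq_of_mem (P := {z | m.edge z ∈ X}) hx
    (fun z => by simp only [Set.mem_ofPred_eq, m.edge_σ₀])
    (fun z => by simp only [Set.mem_ofPred_eq, m.edge_σ₂]) h₀ h₂

end Propagation

/-- The graph on the edges of `G` joining edges that are consecutive around a vertex. -/
def cornerGraph : SimpleGraph G.edgeSet :=
  SimpleGraph.fromRel fun e f => ∃ x, m.edge x = e ∧ m.edge (m.σ₁ x) = f

/-- The flags of edges in `D` whose `σ₁`-neighbour lies outside `D`. -/
def boundaryFlags (D : Set G.edgeSet) : Set m.F := {x | m.edge x ∈ D ∧ m.edge (m.σ₁ x) ∉ D}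

variable {m} {D X : Set G.edgeSet} {x : m.F} {v : V}

theorem vert_mem_edge_σ₁ (x : m.F) : m.vert x ∈ (m.edge (m.σ₁ x) : Sym2 V) :=
  m.vert_σ₁ x ▸ m.vert_mem_edge (m.σ₁ x)

theorem vert_σ₀_eq {w w' : V} (hx : (m.edge x : Sym2 V) = s(w, w')) (hw : m.vert x = w) :
    m.vert (m.σ₀ x) = w' := by
  have hmem := m.vert_mem_edge (m.σ₀ x)
  rw [m.edge_σ₀, hx, Sym2.mem_iff] at hmem
  exact hmem.resolve_left (hw ▸ m.vert_σ₀_ne x)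

theorem cornerGraph_adj_edge_σ₁ (h : m.edge (m.σ₁ x) ≠ m.edge x) :
    m.cornerGraph.Adj (m.edge x) (m.edge (m.σ₁ x)) :=
  (fromRel_adj _ _ _).2 ⟨h.symm, .inl ⟨x, rfl, rfl⟩⟩

theorem exists_of_cornerGraph_adj {e f : G.edgeSet} (h : m.cornerGraph.Adj e f) :
    ∃ x, m.edge x = e ∧ m.edge (m.σ₁ x) = f := by
  obtain ⟨-, h | ⟨x, hf, he⟩⟩ := (fromRel_adj _ _ _).1 h
  · exact h
  · exact ⟨m.σ₁ x, he, by rw [m.involutive_σ₁ x, hf]⟩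

theorem vert_mem_edgeBoundary (hx : x ∈ m.boundaryFlags D) : m.vert x ∈ edgeBoundary G D :=
  ⟨⟨_, hx.1, m.vert_mem_edge x⟩, _, hx.2, vert_mem_edge_σ₁ x⟩

theorem exists_mem_boundaryFlags (hv : v ∈ edgeBoundary G D) :
    ∃ x ∈ m.boundaryFlags D, m.vert x = v := by
  obtain ⟨⟨e, he, hve⟩, f, hf, hvf⟩ := hv
  obtain ⟨x, rfl, rfl⟩ := m.exists_edge_eq_vert_eq hve
  obtain ⟨y, rfl, hyv⟩ := m.exists_edge_eq_vert_eq hvf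
  by_contra! hnone
  have hstep z (hz : m.vert z = m.vert x) (hzD : m.edge z ∈ D) : m.edge (m.σ₁ z) ∈ D :=
    by_contra fun h => hnone z ⟨hzD, h⟩ hz
  have heq : (m.edge y ∈ D) = (m.edge x ∈ D) :=
    apply_eq_of_vert_eq (f := fun z => m.edge z ∈ D) hyv.symm
      (fun z hz => propext ⟨fun h => by
        simpa only [m.involutive_σ₁ z] using hstep (m.σ₁ z) (by rw [m.vert_σ₁, hz]) h, hstep z hz⟩)
      fun z _ => by rw [m.edge_σ₂]
  exact hf (heq ▸ he)

theorem isCornerGraph_cornerGraph : IsCornerGraph G m.cornerGraph where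
  exists_mem_of_adj h := by
    obtain ⟨x, rfl, rfl⟩ := exists_of_cornerGraph_adj h
    exact ⟨m.vert x, m.vert_mem_edge x, vert_mem_edge_σ₁ x⟩
  exists_adj_of_mem_edgeBoundary hv := by
    obtain ⟨x, hx, rfl⟩ := exists_mem_boundaryFlags (m := m) hv
    exact ⟨_, hx.1, _, hx.2, cornerGraph_adj_edge_σ₁ fun h => hx.2 (h ▸ hx.1), m.vert_mem_edge x,
      vert_mem_edge_σ₁ x⟩

theorem exists_ne_mem_boundaryFlags_vert_eq (hx : x ∈ m.boundaryFlags D) :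
    ∃ y, y ≠ x ∧ y ∈ m.boundaryFlags D ∧ m.vert y = m.vert x := by
  obtain ⟨y, hyx, hy, hyD⟩ := exists_ne_mem_and_apply_notMem m.involutive_σ₁ m.fpf₁
    m.involutive_σ₂ m.fpf₂ (P := {y | m.vert y = m.vert x}) (Q := {y | m.edge y ∈ D})
    (fun y hy => (m.vert_σ₁ y).trans hy) (fun y hy => (m.vert_σ₂ y).trans hy)
    (fun y hy => (congrArg (· ∈ D) (m.edge_σ₂ y)).mpr hy) rfl hx.1 hx.2
  exact ⟨y, hyx, hyD, hy⟩

theorem exists_ne_mem_boundaryFlags_sameOrbit (hx : x ∈ m.boundaryFlags D) :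
    ∃ y, y ≠ x ∧ y ∈ m.boundaryFlags D ∧ m.SameOrbit {m.σ₀, m.σ₁} x y := by
  obtain ⟨y, hyx, hy, hyD⟩ := exists_ne_mem_and_apply_notMem m.involutive_σ₁ m.fpf₁
    m.involutive_σ₀ m.fpf₀ (P := {y | m.SameOrbit {m.σ₀, m.σ₁} x y}) (Q := {y | m.edge y ∈ D})
    (fun y hy => hy.trans (FlagSystem.sameOrbit_apply (by simp) y))
    (fun y hy => hy.trans (FlagSystem.sameOrbit_apply (by simp) y))
    (fun y hy => (congrArg (· ∈ D) (m.edge_σ₀ y)).mpr hy) (FlagSystem.sameOrbit_refl x) hx.1 hx.2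
  exact ⟨y, hyx, hyD, hy⟩

theorem exists_forall_apply_eq_of_connected {β : Type*} {f : m.F → β}
    (hX : (m.cornerGraph.induce X).Connected)
    (h₀ : ∀ z, m.edge z ∈ X → f (m.σ₀ z) = f z) (h₂ : ∀ z, m.edge z ∈ X → f (m.σ₂ z) = f z)
    (h₁ : ∀ z, m.edge z ∈ X → m.edge (m.σ₁ z) ∈ X → f (m.σ₁ z) = f z) :
    ∃ κ, ∀ z, m.edge z ∈ X → f z = κ := by
  obtain ⟨e, he⟩ := nonempty_coe_sort.1 hX.nonempty
  obtain ⟨v, hv⟩ : ∃ v, v ∈ (e : Sym2 V) := ⟨_, Sym2.out_fst_mem _⟩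
  obtain ⟨x, rfl, -⟩ := m.exists_edge_eq_vert_eq hv
  have hclosed : IsClosedIn m.cornerGraph {e ∈ X | ∀ z, m.edge z = e → f z = f x} X := by
    refine ⟨sep_subset _ _, fun e he e' he' hadj => ⟨he', fun z hz => ?_⟩⟩
    obtain ⟨y, rfl, rfl⟩ := exists_of_cornerGraph_adj hadj
    rw [apply_eq_of_edge_eq hz.symm he' h₀ h₂, h₁ y he.1 he', he.2 y rfl]
  refine ⟨f x, fun z hz => ?_⟩
  refine (subset_of_isClosedIn hX Subset.rfl hclosed ⟨m.edge x, he, he, fun z hz => ?_⟩ hz).2 z rfl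
  exact apply_eq_of_edge_eq hz.symm he h₀ h₂

end PlaneMap

theorem exists_injOn_Ico_and_eq {α : Type*} {f : ℕ → α} (hf : (range f).Finite) :
    ∃ p q, p < q ∧ f q = f p ∧ InjOn f (Ico p q) := by
  classical
  have hrepeat : ∃ q, ∃ p < q, f p = f q := by
    have hninj : ¬ Function.Injective f := fun h => infinite_range_of_injective h hf
    simp only [Function.Injective, not_forall] at hninj
    obtain ⟨a, b, hab, hne⟩ := hninj
    rcases lt_or_gt_of_ne hne with h | h
    exacts [⟨b, a, h, hab⟩, ⟨a, b, h, hab.symm⟩]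
  obtain ⟨p, hp, hpq⟩ := Nat.find_spec hrepeat
  refine ⟨p, Nat.find hrepeat, hp, hpq.symm, fun a ha b hb hab => ?_⟩
  by_contra hne
  rcases lt_or_gt_of_ne hne with h | h
  exacts [Nat.find_min hrepeat hb.2 ⟨a, h, hab⟩, Nat.find_min hrepeat ha.2 ⟨b, h, hab.symm⟩]

theorem sum_Ico_add_succ {R : Type*} [Ring R] [CharP R 2] (s : ℕ → R) {i k : ℕ} (h : i ≤ k) :
    ∑ j ∈ Finset.Ico i k, (s j + s (j + 1)) = s i + s k := by
  simp_rw [← CharTwo.sub_eq_add, ← neg_sub (s (_ + 1)), Finset.sum_neg_distrib,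
    Finset.sum_Ico_sub s h, neg_sub]

theorem FlagSystem.SameOrbit.apply_eq_of_mem_invariantFunctions {M : FlagSystem}
    {S : Set (Equiv.Perm M.F)} {x y : M.F} {a : M.F → ZMod 2} (h : M.SameOrbit S x y)
    (ha : a ∈ invariantFunctions S) : a y = a x := by
  obtain ⟨g, hg, rfl⟩ := h
  exact apply_eq_of_mem_closure ha hg x

namespace PlaneMap

open scoped Matrix

variable {V : Type u} {G : SimpleGraph V} {m : PlaneMap G} {C D : Set G.edgeSet} {n i k q : ℕ}
  {X Y : ℕ → m.F} {x : m.F}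

/-- The boundary vertices of a set of edges `D` in the cyclic order in which they appear along the
boundary: `X k` and `Y k` are two boundary flags at the `k`-th vertex, and one walks from `Y k` to
`X (k + 1)` along a face. -/
structure BoundaryCycle (m : PlaneMap G) (D : Set G.edgeSet) (n : ℕ) (X Y : ℕ → m.F) : Prop where
  pos : 0 < n
  X_mem : ∀ k, X k ∈ m.boundaryFlags D
  Y_mem : ∀ k, Y k ∈ m.boundaryFlags D
  vert_Y : ∀ k, m.vert (Y k) = m.vert (X k)
  Y_ne_X : ∀ k, Y k ≠ X k
  sameOrbit : ∀ k, m.SameOrbit {m.σ₀, m.σ₁} (Y k) (X (k + 1))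
  X_succ_ne_Y : ∀ k, X (k + 1) ≠ Y k
  vert_X_length : m.vert (X n) = m.vert (X 0)
  injOn : InjOn (fun k => m.vert (X k)) (Iio n)

theorem exists_boundaryCycle (hne : (edgeBoundary G D).Nonempty) :
    ∃ n X Y, m.BoundaryCycle D n X Y := by
  classical
  obtain ⟨v, hv⟩ := hne
  obtain ⟨x₀, hx₀, -⟩ := exists_mem_boundaryFlags (m := m) hv
  choose! φ hφ_ne hφ_mem hφ_vert using
    fun x (hx : x ∈ m.boundaryFlags D) => exists_ne_mem_boundaryFlags_vert_eq hx
  choose! ψ hψ_ne hψ_mem hψ_orbit using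
    fun x (hx : x ∈ m.boundaryFlags D) => exists_ne_mem_boundaryFlags_sameOrbit hx
  let X (k : ℕ) : m.F := (ψ ∘ φ)^[k] x₀
  have hX_succ k : X (k + 1) = ψ (φ (X k)) := Function.iterate_succ_apply' _ _ _
  have hX k : X k ∈ m.boundaryFlags D := by
    induction k with
    | zero => exact hx₀
    | succ k ih => exact hX_succ k ▸ hψ_mem _ (hφ_mem _ ih)
  obtain ⟨p, q, hpq, hq, hinj⟩ := exists_injOn_Ico_and_eq (f := fun k => m.vert (X k))
    ((finite_range m.vert).subset (range_comp_subset_range X m.vert))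
  refine ⟨q - p, fun k => X (p + k), fun k => φ (X (p + k)), by omega, fun k => hX _,
    fun k => hφ_mem _ (hX _), fun k => hφ_vert _ (hX _), fun k => hφ_ne _ (hX _),
    fun k => ?_, fun k => ?_, ?_, fun a ha b hb hab => ?_⟩
  · rw [← add_assoc, hX_succ]
    exact hψ_orbit _ (hφ_mem _ (hX _))
  · rw [← add_assoc, hX_succ]
    exact hψ_ne _ (hφ_mem _ (hX _))
  · rw [Nat.add_sub_cancel' hpq.le]
    exact hq
  · simp only [mem_Iio] at ha hb
    exact Nat.add_left_cancel (hinj (show p + a ∈ Ico p q from ⟨by omega, by omega⟩)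
      (show p + b ∈ Ico p q from ⟨by omega, by omega⟩) hab)

open scoped Classical in
/-- The `𝔽₂`-chain of the flags met when walking along the boundary from `X i` to `X k`. -/
noncomputable def arc (X Y : ℕ → m.F) (i k : ℕ) : m.F → ZMod 2 :=
  ∑ j ∈ Finset.Ico i k, (Pi.single (Y j) 1 + Pi.single (X (j + 1)) 1)

theorem dotProduct_arc (a : m.F → ZMod 2) :
    a ⬝ᵥ arc X Y i k = ∑ j ∈ Finset.Ico i k, (a (Y j) + a (X (j + 1))) := by
  simp only [arc, dotProduct_sum, dotProduct_add, dotProduct_single_one]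

theorem exists_of_arc_apply_ne_zero (hx : arc X Y i k x ≠ 0) :
    ∃ j, i ≤ j ∧ j < k ∧ (x = Y j ∨ x = X (j + 1)) := by
  classical
  rw [arc, Finset.sum_apply] at hx
  obtain ⟨j, hj, hjx⟩ := Finset.exists_ne_zero_of_sum_ne_zero hx
  rw [Finset.mem_Ico] at hj
  refine ⟨j, hj.1, hj.2, ?_⟩
  by_contra! hne
  exact hjx (by rw [Pi.add_apply, Pi.single_eq_of_ne hne.1, Pi.single_eq_of_ne hne.2, add_zero])

theorem cornerGraph_adj_of_mem_boundaryFlags (hx : x ∈ m.boundaryFlags D) :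
    m.cornerGraph.Adj (m.edge x) (m.edge (m.σ₁ x)) :=
  cornerGraph_adj_edge_σ₁ fun h => hx.2 (h ▸ hx.1)

theorem edge_σ₁_mem_sdiff (hC : IsClosedIn m.cornerGraph C univ) (hDC : D ⊆ C)
    (hx : x ∈ m.boundaryFlags D) : m.edge (m.σ₁ x) ∈ C \ D :=
  ⟨hC.2 _ (hDC hx.1) _ trivial (cornerGraph_adj_of_mem_boundaryFlags hx), hx.2⟩

namespace BoundaryCycle

theorem dotProduct_arc_vert (h : m.BoundaryCycle D n X Y) (hik : i ≤ k) {a : m.F → ZMod 2}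
    (ha : a ∈ invariantFunctions {m.σ₁, m.σ₂}) : a ⬝ᵥ arc X Y i k = a (X i) + a (X k) := by
  rw [dotProduct_arc, ← sum_Ico_add_succ (fun j => a (X j)) hik]
  refine Finset.sum_congr rfl fun j _ => ?_
  rw [(m.sameOrbit_of_vert_eq (h.vert_Y j)).apply_eq_of_mem_invariantFunctions ha]

theorem dotProduct_arc_face (h : m.BoundaryCycle D n X Y) {a : m.F → ZMod 2}
    (ha : a ∈ invariantFunctions {m.σ₀, m.σ₁}) : a ⬝ᵥ arc X Y i k = 0 := by
  rw [dotProduct_arc]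
  refine Finset.sum_eq_zero fun j _ => ?_
  rw [(h.sameOrbit j).apply_eq_of_mem_invariantFunctions ha, CharTwo.add_self_eq_zero]

theorem arc_apply_eq_zero_of_notMem (h : m.BoundaryCycle D n X Y)
    (hx : x ∉ m.boundaryFlags D) : arc X Y i k x = 0 := by
  by_contra hne
  obtain ⟨j, -, -, rfl | rfl⟩ := exists_of_arc_apply_ne_zero hne
  exacts [hx (h.Y_mem j), hx (h.X_mem _)]

theorem arc_apply_eq_zero_of_forall_ne (h : m.BoundaryCycle D n X Y)
    (hx : ∀ q, i ≤ q → q ≤ k → m.vert x ≠ m.vert (X q)) : arc X Y i k x = 0 := by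
  by_contra hne
  obtain ⟨j, hij, hjk, rfl | rfl⟩ := exists_of_arc_apply_ne_zero hne
  exacts [hx j hij hjk.le (h.vert_Y j), hx (j + 1) (by omega) hjk rfl]

theorem eq_of_vert_X_eq (h : m.BoundaryCycle D n X Y) (hi : i < n) (hk : k < n)
    (hik : m.vert (X i) = m.vert (X k)) : i = k :=
  h.injOn hi hk hik

theorem eq_of_vert_X_eq_of_le (h : m.BoundaryCycle D n X Y) (hi : i ≤ n) (hq : 0 < q)
    (hqn : q < n) (hiq : m.vert (X i) = m.vert (X q)) : i = q := by
  rcases hi.lt_or_eq with hi | rfl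
  · exact h.eq_of_vert_X_eq hi hqn hiq
  · exact absurd (h.eq_of_vert_X_eq h.pos hqn (h.vert_X_length ▸ hiq)) hq.ne

/-- Of the terms of an arc, only the two at the vertex of `X q` can contribute there. -/
theorem arc_apply_eq_one (h : m.BoundaryCycle D n X Y) (hiq : i < q) (hqk : q < k) (hk : k ≤ n)
    (hx : x = X q ∨ x = Y q) : arc X Y i k x = 1 := by
  classical
  have hv : m.vert x = m.vert (X q) := by
    rcases hx with rfl | rfl
    exacts [rfl, h.vert_Y q]
  have hY : ∑ j ∈ Finset.Ico i k, Pi.single (M := fun _ => ZMod 2) (Y j) 1 x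
      = Pi.single (M := fun _ => ZMod 2) (Y q) 1 x :=
    Finset.sum_eq_single q (fun j hj hjq => Pi.single_eq_of_ne (by
      rintro rfl
      rw [Finset.mem_Ico] at hj
      exact hjq (h.eq_of_vert_X_eq (by omega) (by omega) ((h.vert_Y j).symm.trans hv))) _)
      fun hq => absurd (Finset.mem_Ico.2 ⟨hiq.le, hqk⟩) hq
  have hX : ∑ j ∈ Finset.Ico i k, Pi.single (M := fun _ => ZMod 2) (X (j + 1)) 1 x
      = Pi.single (M := fun _ => ZMod 2) (X (q - 1 + 1)) 1 x :=
    Finset.sum_eq_single (q - 1) (fun j hj hjq => Pi.single_eq_of_ne (by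
      rintro rfl
      rw [Finset.mem_Ico] at hj
      have := h.eq_of_vert_X_eq_of_le (by omega) (by omega) (by omega) hv
      omega) _)
      fun hq => absurd (Finset.mem_Ico.2 ⟨by omega, by omega⟩) hq
  rw [arc, Finset.sum_apply]
  simp only [Pi.add_apply, Finset.sum_add_distrib, hX, hY]
  rw [Nat.sub_add_cancel (by omega)]
  rcases hx with rfl | rfl
  · rw [Pi.single_eq_same, Pi.single_eq_of_ne (h.Y_ne_X q).symm, zero_add]
  · rw [Pi.single_eq_same, Pi.single_eq_of_ne (h.Y_ne_X q), add_zero]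

theorem exists_arc_apply_eq_one (h : m.BoundaryCycle D n X Y) :
    ∃ x ∈ m.boundaryFlags D, arc X Y 0 n x = 1 := by
  classical
  rcases (Nat.succ_le_of_lt h.pos).lt_or_eq with hn | rfl
  · exact ⟨X 1, h.X_mem 1, h.arc_apply_eq_one one_pos hn le_rfl (.inl rfl)⟩
  · refine ⟨Y 0, h.Y_mem 0, ?_⟩
    simp only [arc, Nat.succ_eq_add_one, zero_add, Nat.Ico_zero_eq_range, Finset.range_one,
      Finset.sum_singleton, Pi.add_apply, Pi.single_eq_same,
      Pi.single_eq_of_ne (h.X_succ_ne_Y 0).symm, add_zero]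

/-- The potential `K` changes across the boundary of `D` along the arc from `X i` to `X k`, and
across a chain `t` inside `D` closing up that arc. -/
theorem exists_potential (h : m.BoundaryCycle D n X Y) (hC : IsClosedIn m.cornerGraph C univ)
    (hD : IsDisc m.cornerGraph C D) (hik : i ≤ k) {t : m.F → ZMod 2}
    (htD : ∀ x, t x ≠ 0 → m.edge x ∈ D)
    (hE : ∀ b ∈ invariantFunctions {m.σ₀, m.σ₂}, b ⬝ᵥ t = 0)
    (hV : ∀ a ∈ invariantFunctions {m.σ₁, m.σ₂}, a ⬝ᵥ t = a (X i) + a (X k)) :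
    ∃ K : m.F → ZMod 2, (∀ x, K (m.σ₀ x) = K x) ∧
      (∀ x, K (m.σ₂ x) + t (m.σ₂ x) = K x + t x) ∧
      (∀ x, m.edge x ∈ D → m.edge (m.σ₁ x) ∈ D → K (m.σ₁ x) = K x) ∧
      ∀ x ∈ m.boundaryFlags D, K x = arc X Y i k x := by
  obtain ⟨K, h₀, h₁, h₂⟩ := m.toFlagSystem.exists_potential m.euler (t₁ := arc X Y i k) (t₂ := t)
    (fun a ha => by
      rw [dotProduct_add, h.dotProduct_arc_vert hik ha, hV a ha, CharTwo.add_self_eq_zero])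
    hE fun c hc => h.dotProduct_arc_face hc
  replace h₀ x : K (m.σ₀ x) = K x := h₀ _ rfl x
  replace h₁ x : K (m.σ₁ x) + arc X Y i k (m.σ₁ x) = K x + arc X Y i k x := h₁ _ rfl x
  replace h₂ x : K (m.σ₂ x) + t (m.σ₂ x) = K x + t x := h₂ _ rfl x
  have harc {x} (hx : x ∉ m.boundaryFlags D) : arc X Y i k x = 0 := h.arc_apply_eq_zero_of_notMem hx
  have ht {x} (hx : m.edge x ∉ D) : t x = 0 := by_contra fun hne => hx (htD x hne)
  obtain ⟨κ, hκ⟩ := exists_forall_apply_eq_of_connected hD.connected_sdiff (fun x _ => h₀ x)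
    (fun x hx => by
      simpa only [ht hx.2, ht ((m.edge_σ₂ x).symm ▸ hx.2 : m.edge (m.σ₂ x) ∉ D), add_zero]
        using h₂ x)
    fun x hx hx' => by
      simpa only [harc (fun hb => hx.2 hb.1), harc (fun hb => hx'.2 hb.1), add_zero] using h₁ x
  refine ⟨fun x => K x + κ, fun x => by simp only [h₀], fun x => ?_, fun x hx hx' => ?_,
    fun x hx => ?_⟩ <;> beta_reduce
  · rw [add_right_comm, h₂, add_right_comm]
  · have hbdry : m.σ₁ x ∉ m.boundaryFlags D := fun hb => hb.2 ((m.involutive_σ₁ x).symm ▸ hx)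
    rw [← add_zero (K (m.σ₁ x)), ← harc hbdry, h₁, harc fun hb => hb.2 hx', add_zero]
  · have hjump := h₁ x
    rw [hκ _ (edge_σ₁_mem_sdiff hC hD.subset hx), harc fun hb => hx.2 hb.1, add_zero] at hjump
    rw [hjump, ← add_assoc, CharTwo.add_self_eq_zero, zero_add]

theorem exists_eq_of_mem_boundaryFlags (h : m.BoundaryCycle D n X Y)
    (hC : IsClosedIn m.cornerGraph C univ) (hD : IsDisc m.cornerGraph C D)
    (hx : x ∈ m.boundaryFlags D) : ∃ k < n, x = Y k ∨ x = X (k + 1) := by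
  obtain ⟨K, h₀, h₂, h₁, hbdry⟩ := h.exists_potential hC hD (Nat.zero_le n) (t := 0)
    (fun x hx => absurd rfl hx) (fun b _ => dotProduct_zero b) fun a ha => by
      rw [dotProduct_zero, (m.sameOrbit_of_vert_eq
        h.vert_X_length).apply_eq_of_mem_invariantFunctions ha, CharTwo.add_self_eq_zero]
  obtain ⟨κ, hκ⟩ := exists_forall_apply_eq_of_connected hD.connected (fun x _ => h₀ x)
    (fun x _ => by simpa only [Pi.zero_apply, add_zero] using h₂ x) h₁
  obtain ⟨y, hy, hy_one⟩ := h.exists_arc_apply_eq_one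
  have hx_one : arc X Y 0 n x = 1 := by
    rw [← hbdry x hx, hκ x hx.1, ← hκ y hy.1, hbdry y hy, hy_one]
  obtain ⟨j, -, hj, hxj⟩ := exists_of_arc_apply_ne_zero (hx_one ▸ one_ne_zero)
  exact ⟨j, hj, hxj⟩

theorem exists_eq_X_or_vert_eq (h : m.BoundaryCycle D n X Y)
    (hC : IsClosedIn m.cornerGraph C univ) (hD : IsDisc m.cornerGraph C D)
    (hx : x ∈ m.boundaryFlags D) :
    ∃ q < n, m.vert x = m.vert (X q) ∧ (0 < q → x = X q ∨ x = Y q) := by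
  obtain ⟨k, hk, rfl | rfl⟩ := h.exists_eq_of_mem_boundaryFlags hC hD hx
  · exact ⟨k, hk, h.vert_Y k, fun _ => .inr rfl⟩
  · rcases (Nat.succ_le_of_lt hk).lt_or_eq with hk | rfl
    · exact ⟨k + 1, hk, rfl, fun _ => .inl rfl⟩
    · exact ⟨0, h.pos, h.vert_X_length, fun h0 => absurd h0 (lt_irrefl 0)⟩

theorem edgeBoundary_eq_image (h : m.BoundaryCycle D n X Y)
    (hC : IsClosedIn m.cornerGraph C univ) (hD : IsDisc m.cornerGraph C D) :
    edgeBoundary G D = (fun k => m.vert (X k)) '' Iio n := by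
  refine Subset.antisymm (fun v hv => ?_) ?_
  · obtain ⟨x, hx, rfl⟩ := exists_mem_boundaryFlags (m := m) hv
    obtain ⟨q, hq, hxq, -⟩ := h.exists_eq_X_or_vert_eq hC hD hx
    exact ⟨q, hq, hxq.symm⟩
  · rintro _ ⟨k, -, rfl⟩
    exact vert_mem_edgeBoundary (h.X_mem k)

theorem ncard_edgeBoundary (h : m.BoundaryCycle D n X Y)
    (hC : IsClosedIn m.cornerGraph C univ) (hD : IsDisc m.cornerGraph C D) :
    (edgeBoundary G D).ncard = n := by
  rw [h.edgeBoundary_eq_image hC hD, h.injOn.ncard_image, ncard_Iio_nat]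

end BoundaryCycle

end PlaneMap

section EdgeSubgraph

variable {V : Type u} {G : SimpleGraph V} {D : Set G.edgeSet}

/-- The spanning subgraph of `G` with edge set `D`. -/
def edgeSubgraph (D : Set G.edgeSet) : SimpleGraph V := fromEdgeSet (Subtype.val '' D)

theorem edgeSubgraph_adj {u w : V} :
    (edgeSubgraph D).Adj u w ↔ ∃ e ∈ D, (e : Sym2 V) = s(u, w) := by
  rw [edgeSubgraph, fromEdgeSet_adj]
  refine ⟨fun h => h.1, fun ⟨e, he, heq⟩ => ⟨⟨e, he, heq⟩, ?_⟩⟩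
  exact G.ne_of_adj (show s(u, w) ∈ G.edgeSet from heq ▸ e.2)

theorem edgeSubgraph_le (D : Set G.edgeSet) : edgeSubgraph D ≤ G := by
  intro u w h
  obtain ⟨e, -, heq⟩ := edgeSubgraph_adj.1 h
  exact show s(u, w) ∈ G.edgeSet from heq ▸ e.2

end EdgeSubgraph

namespace PlaneMap

open scoped Matrix

variable {V : Type u} {G : SimpleGraph V} {m : PlaneMap G} {C D : Set G.edgeSet}
  {u v w : V} {x y : m.F} {n i j k l q : ℕ} {X Y : ℕ → m.F}

theorem apply_eq_of_vert_eq_of_edge_mem {β : Type*} {f : m.F → β} {c : β}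
    (hxy : m.vert x = m.vert y) (hx : m.edge x ∈ D) (hy : m.edge y ∈ D)
    (h₁ : ∀ z, m.edge z ∈ D → m.edge (m.σ₁ z) ∈ D → f (m.σ₁ z) = f z)
    (h₂ : ∀ z, m.vert z = m.vert x → f (m.σ₂ z) = f z)
    (hc : ∀ z ∈ m.boundaryFlags D, m.vert z = m.vert x → f z = c) : f y = f x := by
  classical
  have heq := apply_eq_of_vert_eq (f := fun z => if m.edge z ∈ D then f z else c) hxy
    (fun z hz => ?_) fun z hz => by simp only [m.edge_σ₂, h₂ z hz]
  · simpa only [hx, hy, if_true] using heq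
  by_cases hzD : m.edge z ∈ D <;> by_cases hzD' : m.edge (m.σ₁ z) ∈ D <;>
    simp only [hzD, hzD', if_true, if_false]
  · exact h₁ z hzD hzD'
  · exact (hc z ⟨hzD, hzD'⟩ hz).symm
  · exact hc _ ⟨hzD', (m.involutive_σ₁ z).symm ▸ hzD⟩ ((m.vert_σ₁ z).trans hz)

theorem exists_edge_mem_of_edgeSubgraph_adj (h : (edgeSubgraph D).Adj u w) :
    ∃ x, m.edge x ∈ D ∧ m.vert x = u ∧ m.vert (m.σ₀ x) = w := by
  obtain ⟨e, he, heq⟩ := edgeSubgraph_adj.1 h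
  obtain ⟨x, rfl, rfl⟩ := m.exists_edge_eq_vert_eq (heq ▸ Sym2.mem_mk_left u w)
  exact ⟨x, he, rfl, vert_σ₀_eq heq rfl⟩

theorem apply_eq_of_walk {β : Type*} {f : m.F → β} (p : (edgeSubgraph D).Walk u w)
    (h₀ : ∀ z, f (m.σ₀ z) = f z)
    (hp : ∀ x y, m.vert x ∈ p.support → m.vert x = m.vert y → m.edge x ∈ D → m.edge y ∈ D →
      f y = f x)
    (hx : m.edge x ∈ D) (hxu : m.vert x = u) (hy : m.edge y ∈ D) (hyw : m.vert y = w) :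
    f y = f x := by
  induction p generalizing x with
  | nil => exact hp x y (by simp [hxu]) (hxu.trans hyw.symm) hx hy
  | cons hadj p ih =>
    obtain ⟨z, hz, hzu, hzv⟩ := exists_edge_mem_of_edgeSubgraph_adj (m := m) hadj
    rw [ih (fun x y hx => hp x y (List.mem_cons_of_mem _ hx)) ((m.edge_σ₀ z).symm ▸ hz) hzv hyw,
      h₀, hp x z (by simp [hxu]) (hxu.trans hzu.symm) hx hz]

theorem exists_chain_of_walk (p : (edgeSubgraph D).Walk u w) :
    ∃ t : m.F → ZMod 2, (∀ x, t x ≠ 0 → m.edge x ∈ D ∧ m.vert x ∈ p.support) ∧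
      (∀ b ∈ invariantFunctions {m.σ₀, m.σ₂}, b ⬝ᵥ t = 0) ∧
      ∀ a ∈ invariantFunctions {m.σ₁, m.σ₂}, ∀ x y, m.vert x = u → m.vert y = w →
        a ⬝ᵥ t = a x + a y := by
  classical
  have hinv {a : m.F → ZMod 2} (ha : a ∈ invariantFunctions {m.σ₁, m.σ₂}) {x y : m.F}
      (hxy : m.vert x = m.vert y) : a y = a x :=
    (m.sameOrbit_of_vert_eq hxy).apply_eq_of_mem_invariantFunctions ha
  induction p with
  | nil =>
    refine ⟨0, fun x hx => absurd rfl hx, fun b _ => dotProduct_zero b, fun a ha x y hx hy => ?_⟩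
    rw [dotProduct_zero, hinv ha (hx.trans hy.symm), CharTwo.add_self_eq_zero]
  | cons hadj p ih =>
    obtain ⟨t, htD, hE, hV⟩ := ih
    obtain ⟨z, hz, rfl, rfl⟩ := exists_edge_mem_of_edgeSubgraph_adj (m := m) hadj
    refine ⟨Pi.single z 1 + Pi.single (m.σ₀ z) 1 + t, fun x hx => ?_, fun b hb => ?_,
      fun a ha x y hx hy => ?_⟩
    · rw [Walk.support_cons, List.mem_cons]
      by_cases hxz : x = z
      · rw [hxz]
        exact ⟨hz, .inl rfl⟩
      by_cases hxz' : x = m.σ₀ z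
      · rw [hxz', m.edge_σ₀]
        exact ⟨hz, .inr p.start_mem_support⟩
      rw [Pi.add_apply, Pi.add_apply, Pi.single_eq_of_ne hxz, Pi.single_eq_of_ne hxz', zero_add,
        zero_add] at hx
      exact (htD x hx).imp_right .inr
    · rw [dotProduct_add, dotProduct_add, dotProduct_single_one, dotProduct_single_one,
        hb _ (.inl rfl), CharTwo.add_self_eq_zero, zero_add, hE b hb]
    · rw [dotProduct_add, dotProduct_add, dotProduct_single_one, dotProduct_single_one,
        hV a ha _ y rfl hy, hinv ha hx, add_assoc, ← add_assoc (a _) (a _) (a y),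
        CharTwo.add_self_eq_zero, zero_add]

namespace BoundaryCycle

theorem eq_X_or_eq_Y (h : m.BoundaryCycle D n X Y) (hC : IsClosedIn m.cornerGraph C univ)
    (hD : IsDisc m.cornerGraph C D) (hx : x ∈ m.boundaryFlags D) (hq : 0 < q) (hqn : q < n)
    (hxq : m.vert x = m.vert (X q)) : x = X q ∨ x = Y q := by
  obtain ⟨q', hq', hxq', hx⟩ := h.exists_eq_X_or_vert_eq hC hD hx
  obtain rfl := h.eq_of_vert_X_eq hq' hqn (hxq'.symm.trans hxq)
  exact hx hq

theorem exists_forall_arc_apply_eq (h : m.BoundaryCycle D n X Y)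
    (hC : IsClosedIn m.cornerGraph C univ) (hD : IsDisc m.cornerGraph C D) (hk : k < n)
    (hvi : m.vert (X i) ≠ v) (hvk : m.vert (X k) ≠ v) :
    ∃ c, ∀ x ∈ m.boundaryFlags D, m.vert x = v → arc X Y i k x = c := by
  by_cases hv : ∃ q, i < q ∧ q < k ∧ m.vert (X q) = v
  · obtain ⟨q, hiq, hqk, rfl⟩ := hv
    exact ⟨1, fun x hx hxq => h.arc_apply_eq_one hiq hqk hk.le
      (h.eq_X_or_eq_Y hC hD hx (by omega) (by omega) hxq)⟩
  · refine ⟨0, fun x _ hxv => h.arc_apply_eq_zero_of_forall_ne fun q hiq hqk hxq => ?_⟩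
    rcases hiq.eq_or_lt with rfl | hiq
    · exact hvi (hxq.symm.trans hxv)
    rcases hqk.eq_or_lt with rfl | hqk
    · exact hvk (hxq.symm.trans hxv)
    · exact hv ⟨q, hiq, hqk, hxq.symm.trans hxv⟩

/-- Two walks in a disc whose ends interleave on the boundary meet: otherwise the potential that
jumps across the first walk and the arc between its ends would be constant along the second one. -/
theorem exists_mem_support_of_interleaved (h : m.BoundaryCycle D n X Y)
    (hC : IsClosedIn m.cornerGraph C univ) (hD : IsDisc m.cornerGraph C D)
    (hij : i < j) (hjk : j < k) (hkl : k < l) (hl : l < n)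
    (p : (edgeSubgraph D).Walk (m.vert (X i)) (m.vert (X k)))
    (p' : (edgeSubgraph D).Walk (m.vert (X j)) (m.vert (X l))) :
    ∃ v ∈ p.support, v ∈ p'.support := by
  by_contra! hdisj
  obtain ⟨t, ht, hE, hV⟩ := exists_chain_of_walk p
  obtain ⟨K, h₀, h₂, h₁, hK⟩ := h.exists_potential hC hD (hij.trans hjk).le
    (fun x hx => (ht x hx).1) hE fun a ha => hV a ha _ _ rfl rfl
  have hnear x y (hx : m.vert x ∈ p'.support) (hxy : m.vert x = m.vert y) (hxD : m.edge x ∈ D)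
      (hyD : m.edge y ∈ D) : K y = K x := by
    have htx {z} (hz : m.vert z = m.vert x) : t z = 0 :=
      by_contra fun hne => hdisj _ (ht z hne).2 (hz ▸ hx)
    obtain ⟨c, hc⟩ := h.exists_forall_arc_apply_eq (i := i) (k := k) (v := m.vert x) hC hD
      (by omega) (fun hi => hdisj _ p.start_mem_support (hi ▸ hx))
      fun hk => hdisj _ p.end_mem_support (hk ▸ hx)
    refine apply_eq_of_vert_eq_of_edge_mem hxy hxD hyD h₁ (fun z hz => ?_)
      fun z hz hzx => (hK z hz).trans (hc z hz hzx)
    simpa only [htx hz, htx ((m.vert_σ₂ z).trans hz), add_zero] using h₂ z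
  have hconst := apply_eq_of_walk p' h₀ hnear (h.X_mem j).1 rfl (h.X_mem l).1 rfl
  rw [hK _ (h.X_mem j), hK _ (h.X_mem l), h.arc_apply_eq_one hij hjk (by omega) (.inl rfl),
    h.arc_apply_eq_zero_of_forall_ne fun q _ hqk hlq => ?_] at hconst
  · exact zero_ne_one hconst
  · have := h.eq_of_vert_X_eq hl (by omega) hlq
    omega

end BoundaryCycle

end PlaneMap

/-- A family of pairwise disjoint paths of `H`; the `i`-th one visits `p i 0, …, p i (L i)`. -/
structure Linkage {V ι : Type*} (H : SimpleGraph V) (p : ι → ℕ → V) (L : ι → ℕ) : Prop where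
  adj : ∀ ⦃i k⦄, k < L i → H.Adj (p i k) (p i (k + 1))
  inj : ∀ ⦃i k i' k'⦄, k ≤ L i → k' ≤ L i' → p i k = p i' k' → i = i' ∧ k = k'

section Menger

variable {V ι : Type*} {A : ι → V} {B : Set V} {f : V → V}

theorem eq_and_eq_of_iterate_eq_iterate (hA : A.Injective) (hf : InjOn f Bᶜ)
    (hfA : ∀ v ∉ B, f v ∉ range A) {i i' : ι} {k k' : ℕ} (hkk' : k ≤ k')
    (hk : ∀ j < k, f^[j] (A i) ∉ B) (hk' : ∀ j < k', f^[j] (A i') ∉ B)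
    (heq : f^[k] (A i) = f^[k'] (A i')) : i = i' ∧ k = k' := by
  induction k generalizing k' with
  | zero =>
    rcases k' with _ | k'
    · exact ⟨hA heq, rfl⟩
    · rw [Function.iterate_succ_apply'] at heq
      exact absurd ⟨i, heq⟩ (hfA _ (hk' k' k'.lt_succ_self))
  | succ k ih =>
    obtain ⟨k', rfl⟩ := Nat.exists_eq_add_of_lt hkk'
    simp only [Function.iterate_succ_apply'] at heq
    obtain ⟨rfl, h⟩ := ih (k' := k + k') (by omega) (fun j hj => hk j (by omega))
      (fun j hj => hk' j (by omega)) (hf (hk k k.lt_succ_self) (hk' _ (by omega)) heq)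
    exact ⟨rfl, by omega⟩

theorem exists_linkage_of_injOn [Finite V] (H : SimpleGraph V) (hA : A.Injective)
    (hf : InjOn f Bᶜ) (hfA : ∀ v ∉ B, f v ∉ range A) (hadj : ∀ v ∉ B, f v = v ∨ H.Adj v (f v)) :
    ∃ p L, Linkage H p L ∧ (∀ i, p i 0 = A i) ∧ ∀ i, p i (L i) ∈ B := by
  classical
  have hhit i : ∃ k, f^[k] (A i) ∈ B := by
    by_contra! hB
    refine not_injective_infinite_finite (fun k => f^[k] (A i)) fun k k' heq => ?_
    rcases le_total k k' with h | h
    · exact (eq_and_eq_of_iterate_eq_iterate hA hf hfA h (fun j _ => hB j) (fun j _ => hB j)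
        heq).2
    · exact (eq_and_eq_of_iterate_eq_iterate hA hf hfA h (fun j _ => hB j) (fun j _ => hB j)
        heq.symm).2.symm
  have hinj {i k i' k'} (hk : k ≤ Nat.find (hhit i)) (hk' : k' ≤ Nat.find (hhit i'))
      (heq : f^[k] (A i) = f^[k'] (A i')) : i = i' ∧ k = k' := by
    have hmiss j (hj : j < k) := Nat.find_min (hhit i) (hj.trans_le hk)
    have hmiss' j (hj : j < k') := Nat.find_min (hhit i') (hj.trans_le hk')
    rcases le_total k k' with h | h
    · exact eq_and_eq_of_iterate_eq_iterate hA hf hfA h hmiss hmiss' heq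
    · exact (eq_and_eq_of_iterate_eq_iterate hA hf hfA h hmiss' hmiss heq.symm).imp .symm .symm
  refine ⟨fun i k => f^[k] (A i), fun i => Nat.find (hhit i), ⟨fun i k hk => ?_,
    fun i k i' k' => hinj⟩, fun i => rfl, fun i => Nat.find_spec (hhit i)⟩
  have hstep := hadj _ (Nat.find_min (hhit i) hk)
  rw [← Function.iterate_succ_apply' f] at hstep
  exact hstep.resolve_left fun heq => k.succ_ne_self (hinj hk hk.le heq).2

theorem exists_separator_of_ncard_lt [Finite V] (H : SimpleGraph V) (hA : A.Injective) {X : Set V}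
    (hX : ({w | ∃ v ∈ X, w = v ∨ H.Adj v w} \ range A).ncard < X.ncard) :
    ∃ S : Set V, S.ncard < Nat.card ι ∧ range A ⊆ X ∪ S ∧
      ∀ u ∈ X, ∀ w, H.Adj u w → w ∈ X ∪ S := by
  set N : Set V := {w | ∃ v ∈ X, w = v ∨ H.Adj v w}
  have hXN : X ⊆ N ∪ range A := fun v hv => .inl ⟨v, hv, .inl rfl⟩
  refine ⟨(N ∪ range A) \ X, ?_, ?_, fun v hv w hw => ?_⟩
  · have h₁ := ncard_sdiff_add_ncard_of_subset hXN
    have h₂ := ncard_union_le (N \ range A) (range A)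
    rw [sdiff_union_self, ncard_range_of_injective hA] at h₂
    omega
  · rw [union_sdiff_self]
    exact subset_union_right.trans subset_union_right
  · rw [union_sdiff_self]
    exact .inr (.inl ⟨v, hv, .inr hw⟩)

/-- Menger's theorem. A linkage is the same as an injective choice, for every vertex outside `B`,
of itself or of a neighbour as its successor, and a violation of Hall's condition for that choice is
a separator. -/
theorem exists_linkage_or_separator [Finite V] (H : SimpleGraph V)
    (hA : A.Injective) (B : Set V) :
    (∃ p L, Linkage H p L ∧ (∀ i, p i 0 = A i) ∧ ∀ i, p i (L i) ∈ B) ∨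
      ∃ X S : Set V, S.ncard < Nat.card ι ∧ range A ⊆ X ∪ S ∧ Disjoint X B ∧
        ∀ u ∈ X, ∀ w, H.Adj u w → w ∈ X ∪ S := by
  classical
  have := Fintype.ofFinite V
  let succs (v : {v // v ∉ B}) : Finset V := {w | (w = v ∨ H.Adj v w) ∧ w ∉ range A}
  by_cases hall : ∃ f : {v // v ∉ B} → V, Function.Injective f ∧ ∀ v, f v ∈ succs v
  · obtain ⟨f, hf, hsucc⟩ := hall
    simp only [succs, Finset.mem_filter_univ] at hsucc
    let g v := if hv : v ∈ B then v else f ⟨v, hv⟩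
    have hg {v} (hv : v ∉ B) : g v = f ⟨v, hv⟩ := dif_neg hv
    refine .inl (exists_linkage_of_injOn (f := g) H hA (fun v hv w hw heq => ?_) (fun v hv => ?_)
      fun v hv => ?_)
    · rw [hg hv, hg hw] at heq
      exact congrArg Subtype.val (hf heq)
    · exact hg hv ▸ (hsucc _).2
    · exact hg hv ▸ (hsucc _).1
  · rw [← Finset.all_card_le_biUnion_card_iff_exists_injective] at hall
    push Not at hall
    obtain ⟨X, hX⟩ := hall
    let X' : Set V := Subtype.val '' (X : Set {v // v ∉ B})
    have hXB : Disjoint X' B := Set.disjoint_left.2 fun _ ⟨v, _, hv⟩ => hv ▸ v.2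
    have hN : {w | ∃ v ∈ X', w = v ∨ H.Adj v w} \ range A = X.biUnion succs := by
      ext w
      simp only [X', succs, mem_sdiff, mem_ofPred_eq, Finset.coe_biUnion, Finset.coe_filter_univ,
        mem_iUnion, exists_prop, SetLike.mem_coe, exists_mem_image, exists_and_right, ← and_assoc]
    obtain ⟨S, hS, hAS, hclosed⟩ := exists_separator_of_ncard_lt H hA (X := X') <| by
      rwa [hN, ncard_coe_finset, ncard_image_of_injective _ Subtype.val_injective,
        ncard_coe_finset]
    exact .inr ⟨X', S, hS, hAS, hXB, hclosed⟩

end Menger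

section Separator

variable {V : Type*} {G : SimpleGraph V} {D : Set G.edgeSet} {A B X S : Set V}

theorem mem_of_mem_edge_of_forall_adj_mem (hX : ∀ u ∈ X, ∀ w, (edgeSubgraph D).Adj u w → w ∈ X ∪ S)
    {e : G.edgeSet} (he : e ∈ D) {u w : V} (hu : u ∈ (e : Sym2 V)) (huX : u ∈ X)
    (hw : w ∈ (e : Sym2 V)) (hwX : w ∉ X) : w ∈ S :=
  (hX u huX w (edgeSubgraph_adj.2 ⟨e, he, (Sym2.mem_and_mem_iff
    (ne_of_mem_of_not_mem huX hwX)).1 ⟨hu, hw⟩⟩)).resolve_left hwX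

theorem ncard_edgeBoundary_lt_of_subset [Finite V] {D' : Set G.edgeSet} (hA : A ⊆ edgeBoundary G D)
    (hSA : S.ncard < A.ncard) (h : edgeBoundary G D' ⊆ edgeBoundary G D \ A ∪ S) :
    (edgeBoundary G D').ncard < (edgeBoundary G D).ncard := by
  have h₁ := ncard_le_ncard h
  have h₂ := ncard_union_le (edgeBoundary G D \ A) S
  have h₃ := ncard_sdiff_add_ncard_of_subset hA
  omega

theorem exists_ncard_edgeBoundary_lt_of_separator [Finite V] (hA : A ⊆ edgeBoundary G D)
    (hB : B ⊆ edgeBoundary G D) (hSA : S.ncard < A.ncard) (hSB : S.ncard < B.ncard)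
    (hAX : A ⊆ X ∪ S) (hXB : Disjoint X B)
    (hX : ∀ u ∈ X, ∀ w, (edgeSubgraph D).Adj u w → w ∈ X ∪ S) :
    ∃ D' ⊆ D, (edgeBoundary G D').ncard < (edgeBoundary G D).ncard ∧
      (edgeBoundary G (D \ D')).ncard < (edgeBoundary G D).ncard := by
  refine ⟨{e ∈ D | ∃ x ∈ X, x ∈ (e : Sym2 V)}, sep_subset _ _,
    ncard_edgeBoundary_lt_of_subset hB hSB ?_, ncard_edgeBoundary_lt_of_subset hA hSA ?_⟩
  · rintro v ⟨⟨e, ⟨he, x, hx, hxe⟩, hve⟩, e', he', hve'⟩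
    by_cases hvX : v ∈ X
    · exact .inl ⟨⟨⟨e, he, hve⟩, e', fun h => he' ⟨h, v, hvX, hve'⟩, hve'⟩,
        Set.disjoint_left.1 hXB hvX⟩
    · exact .inr (mem_of_mem_edge_of_forall_adj_mem hX he hxe hx hve hvX)
  · rintro v ⟨⟨e, ⟨he, hne⟩, hve⟩, e', he', hve'⟩
    have hvX : v ∉ X := fun hvX => hne ⟨he, v, hvX, hve⟩
    by_cases heD : e' ∈ D
    · obtain ⟨-, x, hx, hxe⟩ := by_contra fun h => he' ⟨heD, h⟩
      exact .inr (mem_of_mem_edge_of_forall_adj_mem hX heD hxe hx hve' hvX)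
    by_cases hvA : v ∈ A
    · exact .inr ((hAX hvA).resolve_left hvX)
    · exact .inl ⟨⟨⟨e, he, hve⟩, e', heD, hve'⟩, hvA⟩

end Separator

section LatticeWalk

variable {x x' y y' : ℕ × ℕ} {a b : ℕ → ℕ × ℕ} {S T I : ℕ}

/-- The moves of a walk through points `(row, position)`: by at most one position along a row, or
to any position of a neighbouring row. -/
def IsRowStep (y y' : ℕ × ℕ) : Prop :=
  y.1 = y'.1 ∧ y.2 ≤ y'.2 + 1 ∧ y'.2 ≤ y.2 + 1 ∨ y.1 = y'.1 + 1 ∨ y'.1 = y.1 + 1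

/-- The indicator of `y` being on the same row as `x` and to the left of it. -/
def leftOf (x y : ℕ × ℕ) : ZMod 2 := if y.1 = x.1 ∧ y.2 < x.2 then 1 else 0

/-- The indicator of `y y'` being a step between the row of `x` and the previous one whose end on
the row of `x` is to the left of `x`. -/
def stepAbove (x y y' : ℕ × ℕ) : ZMod 2 :=
  (if y.1 + 1 = x.1 then leftOf x y' else 0) + if y'.1 + 1 = x.1 then leftOf x y else 0

/-- The indicator of `y y'` being a step between the row of `x` and the next one whose end on the
row of `x` is to the left of `x`. -/
def stepBelow (x y y' : ℕ × ℕ) : ZMod 2 :=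
  (if y.1 = x.1 + 1 then leftOf x y' else 0) + if y'.1 = x.1 + 1 then leftOf x y else 0

/-- The parity of the number of times that the walk `b 0, …, b T`, started from above, is met by a
ray which follows the row of `x` to the left of `x` on its upper side. -/
def parityAbove (b : ℕ → ℕ × ℕ) (T : ℕ) (x : ℕ × ℕ) : ZMod 2 :=
  leftOf x (b 0) + ∑ t ∈ Finset.Ico 0 T, stepAbove x (b t) (b (t + 1))

/-- The parity of the number of times that the walk `b 0, …, b T`, continued downwards, is met by a
ray which follows the row of `x` to the left of `x` on its lower side. -/
def parityBelow (b : ℕ → ℕ × ℕ) (T : ℕ) (x : ℕ × ℕ) : ZMod 2 :=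
  leftOf x (b T) + ∑ t ∈ Finset.Ico 0 T, stepBelow x (b t) (b (t + 1))

theorem stepAbove_add_stepBelow (h : IsRowStep y y') (hy : y ≠ x) (hy' : y' ≠ x) :
    stepAbove x y y' + stepBelow x y y' = leftOf x y + leftOf x y' := by
  unfold stepAbove stepBelow leftOf
  unfold IsRowStep at h
  rw [Ne, Prod.ext_iff] at hy hy'
  split_ifs <;> first | decide | omega

theorem parityAbove_eq_parityBelow (hb : ∀ t < T, IsRowStep (b t) (b (t + 1)))
    (hx : ∀ t ≤ T, b t ≠ x) : parityAbove b T x = parityBelow b T x := by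
  have hsum : ∑ t ∈ Finset.Ico 0 T, stepAbove x (b t) (b (t + 1)) +
      ∑ t ∈ Finset.Ico 0 T, stepBelow x (b t) (b (t + 1)) = leftOf x (b 0) + leftOf x (b T) := by
    rw [← Finset.sum_add_distrib, ← sum_Ico_add_succ (fun t => leftOf x (b t)) T.zero_le]
    refine Finset.sum_congr rfl fun t ht => ?_
    obtain ⟨-, ht⟩ := Finset.mem_Ico.1 ht
    exact stepAbove_add_stepBelow (hb t ht) (hx t ht.le) (hx (t + 1) ht)
  rw [parityAbove, parityBelow, ← CharTwo.add_eq_zero, add_add_add_comm, hsum,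
    CharTwo.add_self_eq_zero]

theorem parityAbove_congr (hxx' : x.1 = x'.1)
    (h : ∀ t ≤ T, (b t).1 = x.1 → ((b t).2 < x.2 ↔ (b t).2 < x'.2)) :
    parityAbove b T x = parityAbove b T x' := by
  have hleft t (ht : t ≤ T) : leftOf x (b t) = leftOf x' (b t) := by
    simp only [leftOf, ← hxx']
    exact if_congr (and_congr_right (h t ht)) rfl rfl
  rw [parityAbove, parityAbove, hleft 0 T.zero_le]
  refine congrArg _ (Finset.sum_congr rfl fun t ht => ?_)
  obtain ⟨-, ht⟩ := Finset.mem_Ico.1 ht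
  simp only [stepAbove, hleft t ht.le, hleft (t + 1) ht, hxx']

theorem parityBelow_eq_parityAbove (hxx' : x'.1 = x.1 + 1) (h₀ : (b 0).1 ≠ x'.1)
    (hT : (b T).1 ≠ x.1)
    (h : ∀ t < T, ∀ y y', s(b t, b (t + 1)) = s(y, y') → y.1 = x.1 → y'.1 = x'.1 →
      (y.2 < x.2 ↔ y'.2 < x'.2)) :
    parityBelow b T x = parityAbove b T x' := by
  rw [parityBelow, parityAbove, leftOf, if_neg fun hl => hT hl.1, leftOf,
    if_neg fun hl => h₀ hl.1]
  refine congrArg _ (Finset.sum_congr rfl fun t ht => ?_)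
  obtain ⟨-, ht⟩ := Finset.mem_Ico.1 ht
  have h₁ := h t ht _ _ rfl
  have h₂ := h t ht _ _ Sym2.eq_swap
  unfold stepBelow stepAbove leftOf
  split_ifs <;> first | rfl | decide | omega

theorem parityAbove_of_row_eq_zero (hx : x.1 = 0) : parityAbove b T x = leftOf x (b 0) :=
  add_eq_left.2 (Finset.sum_eq_zero fun t _ => by simp [stepAbove, hx])

theorem parityBelow_of_forall_row_le (hb : ∀ t ≤ T, (b t).1 ≤ x.1) :
    parityBelow b T x = leftOf x (b T) := by
  refine add_eq_left.2 (Finset.sum_eq_zero fun t ht => ?_)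
  obtain ⟨-, ht⟩ := Finset.mem_Ico.1 ht
  have h₁ := hb t ht.le
  have h₂ := hb (t + 1) ht
  rw [stepBelow, if_neg (by omega), if_neg (by omega), add_zero]

theorem lt_iff_lt_of_isRowStep (ha₀ : (a 0).1 = 0) (hb₀ : (b 0).1 = 0) (haS : (a S).1 = I)
    (hbT : (b T).1 = I) (haI : ∀ s ≤ S, (a s).1 ≤ I) (hbI : ∀ t ≤ T, (b t).1 ≤ I)
    (ha : ∀ s < S, IsRowStep (a s) (a (s + 1))) (hb : ∀ t < T, IsRowStep (b t) (b (t + 1)))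
    (hab : ∀ s ≤ S, ∀ t ≤ T, b t ≠ a s)
    (hcross : ∀ s < S, ∀ t < T, ∀ x x' y y', s(a s, a (s + 1)) = s(x, x') →
      s(b t, b (t + 1)) = s(y, y') → x'.1 = x.1 + 1 → y.1 = x.1 → y'.1 = x'.1 →
      (y.2 < x.2 ↔ y'.2 < x'.2)) :
    (b 0).2 < (a 0).2 ↔ (b T).2 < (a S).2 := by
  have hvert s (hs : s < S) {x x'} (hx : s(a s, a (s + 1)) = s(x, x')) (hxx' : x'.1 = x.1 + 1)
      (hxS : ∃ u ≤ S, a u = x) (hxS' : ∃ u ≤ S, a u = x') :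
      parityAbove b T x = parityAbove b T x' := by
    obtain ⟨u, hu, rfl⟩ := hxS
    obtain ⟨u', hu', rfl⟩ := hxS'
    have := haI u' hu'
    rw [parityAbove_eq_parityBelow hb (hab u hu), parityBelow_eq_parityAbove hxx' (by omega)
      (by omega) fun t ht y y' hy => hcross s hs t ht _ _ y y' hx hy hxx']
  have hstep s (hs : s < S) : parityAbove b T (a s) = parityAbove b T (a (s + 1)) := by
    rcases ha s hs with h | h | h
    · refine parityAbove_congr h.1 fun t ht hrow => ?_
      have h₁ := hab s hs.le t ht
      have h₂ := hab (s + 1) hs t ht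
      rw [Ne, Prod.ext_iff] at h₁ h₂
      omega
    · exact (hvert s hs Sym2.eq_swap h ⟨_, hs, rfl⟩ ⟨_, hs.le, rfl⟩).symm
    · exact hvert s hs rfl h ⟨_, hs.le, rfl⟩ ⟨_, hs, rfl⟩
  have hconst s (hs : s ≤ S) : parityAbove b T (a s) = parityAbove b T (a 0) := by
    induction s with
    | zero => rfl
    | succ s ih => rw [← hstep s hs, ih (Nat.le_of_succ_le hs)]
  have hleft : leftOf (a 0) (b 0) = leftOf (a S) (b T) := by
    rw [← parityAbove_of_row_eq_zero ha₀, ← hconst S le_rfl,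
      parityAbove_eq_parityBelow hb (hab S le_rfl),
      parityBelow_of_forall_row_le fun t ht => (hbI t ht).trans_eq haS.symm]
  simp only [leftOf, ha₀, hb₀, haS, hbT, true_and] at hleft
  split_ifs at hleft with h₁ h₂ h₂
  exacts [iff_of_true h₁ h₂, absurd hleft one_ne_zero, absurd hleft zero_ne_one,
    iff_of_false h₁ h₂]

end LatticeWalk

section ReachableIn

variable {V : Type*} {H : SimpleGraph V} {Z Z' : Set V} {u v w : V} {f : ℕ → V} {a b n : ℕ}

/-- `u` and `w` are joined by a walk of `H` inside `Z`. -/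
def ReachableIn (H : SimpleGraph V) (Z : Set V) (u w : V) : Prop :=
  ∃ p : H.Walk u w, ∀ v ∈ p.support, v ∈ Z

namespace ReachableIn

theorem refl (hu : u ∈ Z) : ReachableIn H Z u u :=
  ⟨.nil, by simpa only [Walk.support_nil, List.mem_singleton, forall_eq]⟩

theorem symm (h : ReachableIn H Z u w) : ReachableIn H Z w u :=
  h.imp' Walk.reverse fun p hp v hv => hp v (by rwa [Walk.support_reverse, List.mem_reverse] at hv)

theorem trans (h : ReachableIn H Z u v) (h' : ReachableIn H Z v w) : ReachableIn H Z u w := by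
  obtain ⟨p, hp⟩ := h
  obtain ⟨p', hp'⟩ := h'
  exact ⟨p.append p', fun x hx => ((Walk.mem_support_append_iff _ _).1 hx).elim (hp x) (hp' x)⟩

theorem mono (hZ : Z ⊆ Z') (h : ReachableIn H Z u w) : ReachableIn H Z' u w :=
  h.imp fun _ hp v hv => hZ (hp v hv)

theorem of_adj (h : H.Adj u w) (hu : u ∈ Z) (hw : w ∈ Z) : ReachableIn H Z u w :=
  ⟨h.toWalk, by simp [hu, hw]⟩

theorem of_forall_adj_succ (hn : ∀ t < n, H.Adj (f t) (f (t + 1))) (ha : a ≤ n) (hb : b ≤ n)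
    (hZ : ∀ t ∈ uIcc a b, f t ∈ Z) : ReachableIn H Z (f a) (f b) := by
  wlog hab : a ≤ b generalizing a b
  · exact (this hb ha (uIcc_comm a b ▸ hZ) (le_of_not_ge hab)).symm
  rw [uIcc_of_le hab] at hZ
  induction b, hab using Nat.le_induction with
  | base => exact refl (hZ a ⟨le_rfl, le_rfl⟩)
  | succ b hab ih =>
    exact (ih (Nat.le_of_succ_le hb) fun t ht => hZ t ⟨ht.1, ht.2.trans b.le_succ⟩).trans
      (of_adj (hn b hb) (hZ b ⟨hab, b.le_succ⟩) (hZ _ ⟨hab.trans b.le_succ, le_rfl⟩))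

theorem reachable {R : SimpleGraph V} (hR : ∀ x ∈ Z, ∀ y ∈ Z, H.Adj x y → R.Adj x y)
    (h : ReachableIn H Z u w) : R.Reachable u w := by
  obtain ⟨p, hp⟩ := h
  induction p with
  | nil => exact .refl _
  | cons hadj p ih =>
    simp only [Walk.support_cons, List.mem_cons, forall_eq_or_imp] at hp
    exact (hR _ hp.1 _ (hp.2 _ p.start_mem_support) hadj).reachable.trans (ih hp.2)

end ReachableIn

theorem reachable_of_forall_adj_succ (hab : a ≤ b)
    (h : ∀ t, a ≤ t → t < b → H.Adj (f t) (f (t + 1))) : H.Reachable (f a) (f b) := by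
  induction b, hab using Nat.le_induction with
  | base => exact .refl _
  | succ b hab ih =>
    exact (ih fun t ht ht' => h t ht (by omega)).trans (h b hab b.lt_succ_self).reachable

theorem exists_path_fun_of_reachable (h : H.Reachable u w) :
    ∃ (f : ℕ → V) (n : ℕ), f 0 = u ∧ f n = w ∧ (∀ t < n, H.Adj (f t) (f (t + 1))) ∧
      InjOn f (Iic n) := by
  obtain ⟨p, hp⟩ := h.exists_isPath
  exact ⟨p.getVert, p.length, p.getVert_zero, p.getVert_length, fun t ht => p.adj_getVert_succ ht,
    hp.getVert_injOn⟩

end ReachableIn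

section MinimalLinkage

variable {V ι : Type*} {H Q : SimpleGraph V} {p q : ι → ℕ → V} {L M : ι → ℕ} {A : ι → V}
  {B Z : Set V} {i i' j : ι} {k k' s s' : ℕ} {v : V}

/-- The graph formed by the edges of a family of paths. -/
def linkageGraph (p : ι → ℕ → V) (L : ι → ℕ) : SimpleGraph V :=
  fromEdgeSet {e | ∃ i, ∃ k < L i, e = s(p i k, p i (k + 1))}

/-- The vertices of a family of paths. -/
def linkageVerts (p : ι → ℕ → V) (L : ι → ℕ) : Set V :=
  {v | ∃ i, ∃ k ≤ L i, v = p i k}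

namespace Linkage

theorem linkageGraph_adj (hp : Linkage H p L) {u v : V} :
    (linkageGraph p L).Adj u v ↔ ∃ i, ∃ k < L i, s(u, v) = s(p i k, p i (k + 1)) := by
  rw [linkageGraph, fromEdgeSet_adj]
  refine ⟨fun h => h.1, fun h => ⟨h, ?_⟩⟩
  obtain ⟨i, k, hk, heq⟩ := h
  exact H.ne_of_adj (show s(u, v) ∈ H.edgeSet from heq ▸ hp.adj hk)

theorem linkageGraph_le (hp : Linkage H p L) : linkageGraph p L ≤ H := by
  intro u v h
  obtain ⟨i, k, hk, heq⟩ := hp.linkageGraph_adj.1 h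
  exact show s(u, v) ∈ H.edgeSet from heq ▸ hp.adj hk

theorem eq_and_eq_of_edge_eq (hp : Linkage H p L) (hk : k < L i) (hk' : k' < L i')
    (h : s(p i k, p i (k + 1)) = s(p i' k', p i' (k' + 1))) : i = i' ∧ k = k' := by
  rcases Sym2.eq_iff.1 h with ⟨h, -⟩ | ⟨h, h'⟩
  · exact hp.inj hk.le hk'.le h
  · have h₁ := hp.inj hk.le hk' h
    have h₂ := hp.inj hk hk'.le h'
    omega

theorem exists_eq_of_linkageGraph_adj (hq : Linkage H q M) (hs : s ≤ M j)
    (h : (linkageGraph q M).Adj (q j s) v) :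
    ∃ s' ≤ M j, v = q j s' ∧ (s' = s + 1 ∨ s = s' + 1) := by
  obtain ⟨j', t, ht, heq⟩ := hq.linkageGraph_adj.1 h
  rcases Sym2.eq_iff.1 heq with ⟨h', rfl⟩ | ⟨h', rfl⟩
  · obtain ⟨rfl, rfl⟩ := hq.inj hs ht.le h'
    exact ⟨s + 1, ht, rfl, .inl rfl⟩
  · obtain ⟨rfl, rfl⟩ := hq.inj hs ht h'
    exact ⟨t, ht.le, rfl, .inr rfl⟩

theorem update [DecidableEq ι] (hp : Linkage H p L) {f : ℕ → V} {n : ℕ}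
    (hadj : ∀ t < n, H.Adj (f t) (f (t + 1))) (hinj : InjOn f (Iic n))
    (hf : ∀ t ≤ n, ∀ i' k, k ≤ L i' → f t = p i' k → i' = i) :
    Linkage H (Function.update p i f) (Function.update L i n) := by
  refine ⟨fun i' k hk => ?_, fun i₁ k i₂ k' hk hk' heq => ?_⟩
  · rcases eq_or_ne i' i with rfl | hi
    · simp only [Function.update_self] at hk ⊢
      exact hadj k hk
    · simp only [Function.update_of_ne hi] at hk ⊢
      exact hp.adj hk
  · rcases eq_or_ne i₁ i with h₁ | h₁ <;> rcases eq_or_ne i₂ i with h₂ | h₂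
    · simp only [h₁, h₂, Function.update_self] at hk hk' heq ⊢
      exact ⟨trivial, hinj hk hk' heq⟩
    · simp only [h₁, Function.update_self, Function.update_of_ne h₂] at hk hk' heq
      exact absurd (hf k hk i₂ k' hk' heq) h₂
    · simp only [h₂, Function.update_self, Function.update_of_ne h₁] at hk hk' heq
      exact absurd (hf k' hk' i₁ k hk heq.symm) h₁
    · simp only [Function.update_of_ne h₁, Function.update_of_ne h₂] at hk hk' heq
      exact hp.inj hk hk' heq

theorem exists_reroute (hp : Linkage H p L) {R : SimpleGraph V} (hR : R ≤ H)
    (hreach : R.Reachable (p i 0) (p i (L i)))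
    (havoid : ∀ u v, R.Adj u v → ∀ i' k, k ≤ L i' → v = p i' k → i' = i) :
    ∃ p' L', Linkage H p' L' ∧ (∀ i', p' i' 0 = p i' 0) ∧
      (∀ i', p' i' (L' i') = p i' (L i')) ∧ ∀ u v, (linkageGraph p' L').Adj u v →
        R.Adj u v ∨ ∃ i' ≠ i, ∃ k < L i', s(u, v) = s(p i' k, p i' (k + 1)) := by
  classical
  obtain ⟨f, n, hf₀, hfn, hadj, hinj⟩ := exists_path_fun_of_reachable hreach
  have hlink : Linkage H (Function.update p i f) (Function.update L i n) := by
    refine hp.update (fun t ht => hR (hadj t ht)) hinj fun t ht i' k hk heq => ?_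
    rcases t with _ | t
    · exact (hp.inj hk (L i).zero_le (heq.symm.trans hf₀)).1
    · exact havoid _ _ (hadj t ht) i' k hk heq
  refine ⟨_, _, hlink, fun i' => ?_, fun i' => ?_, fun u v huv => ?_⟩
  · rcases eq_or_ne i' i with rfl | hi <;> simp [*]
  · rcases eq_or_ne i' i with rfl | hi <;> simp [*]
  · obtain ⟨i', k, hk, heq⟩ := hlink.linkageGraph_adj.1 huv
    rcases eq_or_ne i' i with rfl | hi
    · simp only [Function.update_self] at hk heq
      exact .inl (show s(u, v) ∈ R.edgeSet from heq ▸ hadj k hk)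
    · simp only [Function.update_of_ne hi] at hk heq
      exact .inr ⟨i', hi, k, hk, heq⟩

theorem exists_detour (hp : Linkage H p L) (hQ : Q ≤ H) (hk' : k' ≤ L i)
    (hZ : ∀ v ∈ Z, ∀ i' c, c ≤ L i' → v = p i' c → i' = i)
    (hreach : ReachableIn Q Z (p i k) (p i k')) (hks : k ≤ s) (hsk' : s < k') :
    ∃ p' L', Linkage H p' L' ∧ (∀ i', p' i' 0 = p i' 0) ∧
      (∀ i', p' i' (L' i') = p i' (L i')) ∧ ∀ u v, (linkageGraph p' L').Adj u v →
        Q.Adj u v ∨ ((linkageGraph p L).Adj u v ∧ s(u, v) ≠ s(p i s, p i (s + 1))) := by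
  let R := fromEdgeSet {e | (e ∈ Q.edgeSet ∧ ∀ v ∈ e, v ∈ Z) ∨
    ∃ t < L i, t ≠ s ∧ e = s(p i t, p i (t + 1))}
  have hR {u v} (huv : R.Adj u v) : (Q.Adj u v ∧ v ∈ Z) ∨
      ∃ t < L i, t ≠ s ∧ s(u, v) = s(p i t, p i (t + 1)) :=
    ((fromEdgeSet_adj _).1 huv).1.imp_left fun h => ⟨h.1, h.2 v (Sym2.mem_mk_right u v)⟩
  have hrow {t} (ht : t < L i) (hts : t ≠ s) : R.Adj (p i t) (p i (t + 1)) :=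
    (fromEdgeSet_adj _).2 ⟨.inr ⟨t, ht, hts, rfl⟩, (hp.adj ht).ne⟩
  have hRH : R ≤ H := fun u v huv => (hR huv).elim (fun h => hQ h.1) fun ⟨t, ht, _, heq⟩ =>
    show s(u, v) ∈ H.edgeSet from heq ▸ hp.adj ht
  have hRreach : R.Reachable (p i 0) (p i (L i)) := by
    have hinit : R.Reachable (p i 0) (p i k) :=
      reachable_of_forall_adj_succ (f := p i) k.zero_le fun t _ ht => hrow (by omega) (by omega)
    have hfinal : R.Reachable (p i k') (p i (L i)) :=
      reachable_of_forall_adj_succ hk' fun t ht ht' => hrow ht' (by omega)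
    refine (hinit.trans (hreach.reachable fun x hx y hy hxy => ?_)).trans hfinal
    exact (fromEdgeSet_adj _).2 ⟨.inl ⟨hxy, by simp [hx, hy]⟩, hxy.ne⟩
  obtain ⟨p', L', hlink, hstart, hlast, hadj⟩ := hp.exists_reroute hRH hRreach
    fun u v huv i' c hc hv => (hR huv).elim (fun h => hZ v h.2 i' c hc hv)
      fun ⟨t, ht, _, heq⟩ => by
        rcases Sym2.eq_iff.1 heq with ⟨-, hv'⟩ | ⟨-, hv'⟩
        · exact (hp.inj hc ht (hv.symm.trans hv')).1
        · exact (hp.inj hc ht.le (hv.symm.trans hv')).1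
  refine ⟨p', L', hlink, hstart, hlast, fun u v huv => ?_⟩
  rw [hp.linkageGraph_adj]
  rcases hadj u v huv with huv | ⟨i', hi', t, ht, heq⟩
  · refine (hR huv).imp (fun h => h.1) fun ⟨t, ht, hts, heq⟩ => ⟨⟨i, t, ht, heq⟩, fun hs => ?_⟩
    exact hts (hp.eq_and_eq_of_edge_eq ht (hsk'.trans_le hk') (heq.symm.trans hs)).2
  · refine .inr ⟨⟨i', t, ht, heq⟩, fun hs => ?_⟩
    exact hi' (hp.eq_and_eq_of_edge_eq ht (hsk'.trans_le hk') (heq.symm.trans hs)).1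

end Linkage

/-- A linkage from `A` to `B` with as few edges outside `Q` as possible. -/
structure IsMinimalLinkage (H Q : SimpleGraph V) (A : ι → V) (B : Set V) (p : ι → ℕ → V)
    (L : ι → ℕ) : Prop where
  linkage : Linkage H p L
  start : ∀ i, p i 0 = A i
  last_mem : ∀ i, p i (L i) ∈ B
  ncard_le : ∀ p' L', Linkage H p' L' → (∀ i, p' i 0 = A i) → (∀ i, p' i (L' i) ∈ B) →
    (linkageGraph p L \ Q).edgeSet.ncard ≤ (linkageGraph p' L' \ Q).edgeSet.ncard

theorem exists_isMinimalLinkage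
    (h : ∃ p L, Linkage H p L ∧ (∀ i, p i 0 = A i) ∧ ∀ i, p i (L i) ∈ B) :
    ∃ p L, IsMinimalLinkage H Q A B p L := by
  obtain ⟨p, L, hp⟩ := h
  obtain ⟨⟨p, L⟩, hp, hmin⟩ := exists_minimalFor_of_wellFoundedLT
    (fun x : (ι → ℕ → V) × (ι → ℕ) =>
      Linkage H x.1 x.2 ∧ (∀ i, x.1 i 0 = A i) ∧ ∀ i, x.1 i (x.2 i) ∈ B)
    (fun x => (linkageGraph x.1 x.2 \ Q).edgeSet.ncard) ⟨(p, L), hp⟩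
  refine ⟨p, L, hp.1, hp.2.1, hp.2.2, fun p' L' h₁ h₂ h₃ => ?_⟩
  exact (le_total _ _).elim id fun hle => hmin (j := (p', L')) ⟨h₁, h₂, h₃⟩ hle

namespace IsMinimalLinkage

theorem adj_of_reachableIn [Finite V] (h : IsMinimalLinkage H Q A B p L) (hQ : Q ≤ H)
    (hk' : k' ≤ L i) (hZ : ∀ v ∈ Z, ∀ i' c, c ≤ L i' → v = p i' c → i' = i)
    (hreach : ReachableIn Q Z (p i k) (p i k')) (hks : k ≤ s) (hsk' : s < k') :
    Q.Adj (p i s) (p i (s + 1)) := by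
  by_contra hs
  obtain ⟨p', L', hlink, hstart, hlast, hadj⟩ := h.linkage.exists_detour hQ hk' hZ hreach hks hsk'
  refine (h.ncard_le p' L' hlink (fun i' => (hstart i').trans (h.start i'))
    fun i' => hlast i' ▸ h.last_mem i').not_gt (ncard_lt_ncard ?_ (toFinite _))
  refine (ssubset_iff_of_subset ?_).2 ⟨s(p i s, p i (s + 1)), ?_, ?_⟩
  · rintro ⟨u, v⟩ huv
    exact ⟨((hadj u v huv.1).resolve_left huv.2).1, huv.2⟩
  · exact ⟨h.linkage.linkageGraph_adj.2 ⟨i, s, hsk'.trans_le hk', rfl⟩, hs⟩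
  · exact fun hmem => ((hadj _ _ hmem.1).resolve_left hmem.2).2 rfl

theorem eq_succ_of_segment [Finite V] (hq : Linkage H q M)
    (h : IsMinimalLinkage H (linkageGraph q M) A B p L) (hkk' : k < k') (hk' : k' ≤ L i)
    (hs : s ≤ M j) (hs' : s' ≤ M j) (heq : p i k = q j s) (heq' : p i k' = q j s')
    (havoid : ∀ t ∈ uIoo s s', q j t ∉ linkageVerts p L) : k' = k + 1 := by
  have hadj {t} (hkt : k ≤ t) (htk' : t < k') : (linkageGraph q M).Adj (p i t) (p i (t + 1)) := by
    refine h.adj_of_reachableIn hq.linkageGraph_le hk' (Z := q j '' uIcc s s') ?_ ?_ hkt htk'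
    · rintro _ ⟨t, ht, rfl⟩ i' c hc htc
      rcases eq_or_ne t s with rfl | hts
      · exact (h.linkage.inj (by omega) hc (heq.trans htc)).1.symm
      rcases eq_or_ne t s' with rfl | hts'
      · exact (h.linkage.inj hk' hc (heq'.trans htc)).1.symm
      refine absurd ⟨i', c, hc, htc⟩ (havoid t ?_)
      simp only [uIcc, uIoo, mem_Icc, mem_Ioo] at ht ⊢
      omega
    · rw [heq, heq']
      exact .of_forall_adj_succ (f := q j) (fun t ht => hq.linkageGraph_adj.2 ⟨j, t, ht, rfl⟩)
        hs hs' fun t ht => ⟨t, ht, rfl⟩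
  obtain ⟨u₁, hu₁, hp₁, hsu₁⟩ := hq.exists_eq_of_linkageGraph_adj hs (heq ▸ hadj le_rfl hkk')
  have hside (t) (ht : k + 1 ≤ t) :
      t ≤ k' → ∃ u ≤ M j, p i t = q j u ∧ u ≠ s ∧ (s < u ↔ s < u₁) := by
    induction t, ht using Nat.le_induction with
    | base => exact fun _ => ⟨u₁, hu₁, hp₁, by omega, Iff.rfl⟩
    | succ t ht ih =>
      intro htk'
      obtain ⟨u, hu, hpu, hus, hiff⟩ := ih (by omega)
      obtain ⟨v, hv, hpv, huv⟩ := hq.exists_eq_of_linkageGraph_adj hu (hpu ▸ hadj (by omega) htk')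
      have hvs : v ≠ s := by
        rintro rfl
        have := (h.linkage.inj (by omega) (by omega) (hpv.trans heq.symm)).2
        omega
      exact ⟨v, hv, hpv, hvs, by omega⟩
  obtain ⟨u, hu, hpu, hus, hiff⟩ := hside k' hkk' le_rfl
  obtain rfl := (hq.inj hu hs' (hpu.symm.trans heq')).2
  by_contra hne
  refine havoid u₁ ?_ ⟨i, k + 1, by omega, hp₁.symm⟩
  have hu : u ≠ u₁ := by
    rintro rfl
    have := (h.linkage.inj (by omega) (by omega) (hpu.trans hp₁.symm)).2
    omega
  simp only [uIoo, mem_Ioo]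
  omega

end IsMinimalLinkage

end MinimalLinkage

section Hop

variable {V ι : Type*} {H : SimpleGraph V} {p q : ι → ℕ → V} {L M : ι → ℕ} {S S' : ι → ℕ → Prop}
  {C C' : ι → Prop} {j : ι} {x y : ι × ℕ}

/-- The column `j` runs between the positions `x` and `y` of the rows without meeting a row on its
way, in either direction. -/
def Hop (p : ι → ℕ → V) (L : ι → ℕ) (q : ι → ℕ → V) (M : ι → ℕ) (j : ι) (x y : ι × ℕ) : Prop :=
  x.2 ≤ L x.1 ∧ y.2 ≤ L y.1 ∧ ∃ s ≤ M j, ∃ t ≤ M j, p x.1 x.2 = q j s ∧ p y.1 y.2 = q j t ∧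
    ∀ u ∈ uIoo s t, q j u ∉ linkageVerts p L

theorem Hop.symm (h : Hop p L q M j x y) : Hop p L q M j y x := by
  obtain ⟨hx, hy, s, hs, t, ht, hxs, hyt, h⟩ := h
  exact ⟨hy, hx, t, ht, s, hs, hyt, hxs, uIoo_comm s t ▸ h⟩

theorem Hop.ne (hq : Linkage H q M) {j' : ι} {x' y' : ι × ℕ} (hj : j ≠ j')
    (h : Hop p L q M j x y) (h' : Hop p L q M j' x' y') : x ≠ x' := by
  obtain ⟨-, -, s, hs, -, -, hxs, -, -⟩ := h
  obtain ⟨-, -, s', hs', -, -, hxs', -, -⟩ := h'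
  rintro rfl
  exact hj (hq.inj hs hs' (hxs.symm.trans hxs')).1

/-- The vertices at the positions `S` of the rows, and those of the columns `C` which lie on no
row. -/
def region (p : ι → ℕ → V) (L : ι → ℕ) (q : ι → ℕ → V) (M : ι → ℕ) (S : ι → ℕ → Prop)
    (C : ι → Prop) : Set V :=
  {v | (∃ i k, S i k ∧ k ≤ L i ∧ v = p i k) ∨
    (v ∉ linkageVerts p L ∧ ∃ j, C j ∧ ∃ t ≤ M j, v = q j t)}

theorem disjoint_region (hp : Linkage H p L) (hq : Linkage H q M) (hS : ∀ i k, S i k → ¬S' i k)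
    (hC : ∀ j, C j → ¬C' j) : Disjoint (region p L q M S C) (region p L q M S' C') := by
  rw [Set.disjoint_left]
  rintro v (⟨i, k, hx, hk, hv⟩ | ⟨hv, j, hj, t, ht, hvt⟩)
    (⟨i', k', hx', hk', hv'⟩ | ⟨hv', j', hj', t', ht', hvt'⟩)
  · obtain ⟨rfl, rfl⟩ := hp.inj hk hk' (hv.symm.trans hv')
    exact hS _ _ hx hx'
  · exact hv' ⟨i, k, hk, hv⟩
  · exact hv ⟨i', k', hk', hv'⟩
  · obtain rfl := (hq.inj ht ht' (hvt.symm.trans hvt')).1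
    exact hC _ hj hj'

theorem reachableIn_region_row (hp : Linkage H p L) {i : ι} {k k' : ℕ} (hk : k ≤ L i)
    (hk' : k' ≤ L i) (hS : ∀ t ∈ uIcc k k', S i t) :
    ReachableIn H (region p L q M S C) (p i k) (p i k') :=
  .of_forall_adj_succ (f := p i) (fun _ ht => hp.adj ht) hk hk' fun t ht =>
    .inl ⟨i, t, hS t ht, ht.2.trans (sup_le hk hk'), rfl⟩

theorem reachableIn_region_column (hq : Linkage H q M) (hj : C j) {s t : ℕ} (hs : s ≤ M j)
    (ht : t ≤ M j) (hS : ∀ u ∈ uIcc s t, q j u ∈ linkageVerts p L →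
      ∃ i k, S i k ∧ k ≤ L i ∧ q j u = p i k) :
    ReachableIn H (region p L q M S C) (q j s) (q j t) := by
  refine .of_forall_adj_succ (f := q j) (fun _ ht => hq.adj ht) hs ht fun u hu => ?_
  by_cases hrow : q j u ∈ linkageVerts p L
  · exact .inl (hS u hu hrow)
  · exact .inr ⟨hrow, j, hj, u, hu.2.trans (sup_le hs ht), rfl⟩

theorem reachableIn_region_of_first (hq : Linkage H q M) (hj : C j) {i : ι} {k s : ℕ}
    (hk : k ≤ L i) (hs : s ≤ M j) (heq : p i k = q j s)
    (hfirst : ∀ t < s, q j t ∉ linkageVerts p L) (hS : S i k) :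
    ReachableIn H (region p L q M S C) (q j 0) (p i k) := by
  rw [heq]
  refine reachableIn_region_column hq hj (M j).zero_le hs fun t ht hrow => ?_
  rw [uIcc_of_le s.zero_le] at ht
  obtain rfl := le_antisymm ht.2 (not_lt.1 fun hts => hfirst t hts hrow)
  exact ⟨i, k, hS, hk, heq.symm⟩

theorem Hop.reachableIn_region (hq : Linkage H q M) (h : Hop p L q M j x y) (hj : C j)
    (hx : S x.1 x.2) (hy : S y.1 y.2) :
    ReachableIn H (region p L q M S C) (p x.1 x.2) (p y.1 y.2) := by
  obtain ⟨hxL, hyL, s, hs, t, ht, hxs, hyt, h⟩ := h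
  rw [hxs, hyt]
  refine reachableIn_region_column hq hj hs ht fun u hu hrow => ?_
  rcases eq_or_ne u s with rfl | hus
  · exact ⟨x.1, x.2, hx, hxL, hxs.symm⟩
  rcases eq_or_ne u t with rfl | hut
  · exact ⟨y.1, y.2, hy, hyL, hyt.symm⟩
  refine absurd hrow (h u ?_)
  simp only [uIcc, uIoo, mem_Icc, mem_Ioo] at hu ⊢
  omega

end Hop

section GridConfig

variable {V : Type*} {r : ℕ} {H : SimpleGraph V} {z : ℕ → V} {p q : Fin r → ℕ → V}
  {L M e w : Fin r → ℕ} {i i' j j' : Fin r} {k k' l l' s s' : ℕ}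

/-- Rows and columns drawn in a disc with boundary points `z 0, …, z (4 * r - 2)`. The columns lead
from the first `r` points to `z (2 * r), …, z (3 * r - 1)`, the rows from
`z r, …, z (2 * r - 1)` to the last `r` points; `bump` expresses the minimality of the rows. -/
structure GridConfig (H : SimpleGraph V) (z : ℕ → V) (p q : Fin r → ℕ → V)
    (L M e w : Fin r → ℕ) : Prop where
  crossing : ∀ ⦃i j k l⦄, i < j → j < k → k < l → l < 4 * r - 1 → ∀ ⦃Z Z'⦄, Disjoint Z Z' →
    ReachableIn H Z (z i) (z k) → ReachableIn H Z' (z j) (z l) → False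
  rows : Linkage H p L
  columns : Linkage H q M
  row_start : ∀ i : Fin r, p i 0 = z (r + i)
  row_last : ∀ i, p i (L i) = z (e i)
  le_e : ∀ i, 3 * r - 1 ≤ e i
  e_lt : ∀ i, e i < 4 * r - 1
  column_start : ∀ j : Fin r, q j 0 = z (r - 1 - j)
  column_last : ∀ j, q j (M j) = z (w j)
  le_w : ∀ j, 2 * r ≤ w j
  w_lt : ∀ j, w j < 3 * r
  bump : ∀ ⦃i j k k'⦄, k < k' → Hop p L q M j (i, k) (i, k') → k' = k + 1

namespace GridConfig

theorem e_lt_e (h : GridConfig H z p q L M e w) (hii' : i < i') : e i' < e i := by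
  refine lt_of_le_of_ne (not_lt.1 fun hlt => ?_) fun heq => ?_
  · have hrow (j : Fin r) : ReachableIn H (region p L q M (fun i _ => i = j) fun _ => False)
        (z (r + j)) (z (e j)) := by
      rw [← h.row_start, ← h.row_last]
      exact reachableIn_region_row h.rows (L j).zero_le le_rfl fun _ _ => rfl
    refine h.crossing (Nat.add_lt_add_left hii' r) ?_ hlt (h.e_lt i')
      (disjoint_region (C' := fun _ => False) h.rows h.columns ?_ fun _ h _ => h)
      (hrow i) (hrow i')
    · have := h.le_e i
      omega
    · rintro _ _ rfl
      exact hii'.ne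
  · have heq := (h.row_last i').trans ((congrArg z heq).trans (h.row_last i).symm)
    exact hii'.ne' (h.rows.inj le_rfl le_rfl heq).1

/-- A hop avoiding a row in between would cross it. -/
theorem row_le_of_hop (h : GridConfig H z p q L M e w)
    (hop : Hop p L q M j (i, k) (i', k')) : (i' : ℕ) ≤ i + 1 := by
  by_contra! hlt
  let m : Fin r := ⟨i + 1, by omega⟩
  refine h.crossing (i := r + i) (j := r + m) (k := r + i') (l := e m) ?_ ?_ ?_ (h.e_lt m)
    (disjoint_region (S := fun a _ => a = i ∨ a = i') (S' := fun a _ => a = m) (C := (· = j))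
      (C' := fun _ => False) h.rows h.columns ?_ fun _ _ => id) ?_ ?_
  · simp [m]
  · simpa [m] using hlt
  · have := h.le_e m
    omega
  · rintro _ _ (rfl | rfl) <;> simp only [m, Fin.ext_iff] <;> omega
  · rw [← h.row_start, ← h.row_start]
    exact .trans (reachableIn_region_row h.rows (L i).zero_le hop.1 fun _ _ => .inl rfl)
      (.trans (hop.reachableIn_region h.columns rfl (.inl rfl) (.inr rfl))
        (reachableIn_region_row h.rows hop.2.1 (L i').zero_le fun _ _ => .inr rfl))
  · rw [← h.row_start, ← h.row_last]
    exact reachableIn_region_row h.rows (L m).zero_le le_rfl fun _ _ => rfl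

/-- The start of a column is separated from the rows other than `0` by the row `0`. -/
theorem row_eq_zero_of_first (h : GridConfig H z p q L M e w) (hk : k ≤ L i) (hs : s ≤ M j)
    (heq : p i k = q j s) (hfirst : ∀ t < s, q j t ∉ linkageVerts p L) : (i : ℕ) = 0 := by
  by_contra hi
  let o : Fin r := ⟨0, i.pos⟩
  refine h.crossing (i := r - 1 - j) (j := r + o) (k := r + i) (l := e o) ?_ ?_ ?_ (h.e_lt o)
    (disjoint_region (S := fun a _ => a = i) (S' := fun a _ => a = o) (C := (· = j))
      (C' := fun _ => False) h.rows h.columns ?_ fun _ _ => id) ?_ ?_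
  · have := j.pos
    omega
  · simp only [o]
    omega
  · have := h.le_e o
    omega
  · rintro _ _ rfl hx
    exact hi (congrArg Fin.val hx)
  · rw [← h.row_start, ← h.column_start]
    exact .trans (reachableIn_region_of_first (C := (· = j)) h.columns rfl hk hs heq hfirst rfl)
      (reachableIn_region_row h.rows hk (L i).zero_le fun _ _ => rfl)
  · rw [← h.row_start, ← h.row_last]
    exact reachableIn_region_row h.rows (L o).zero_le le_rfl fun _ _ => rfl

theorem exists_column_eq_last_row (h : GridConfig H z p q L M e w) (j : Fin r)
    (hi : (i : ℕ) + 1 = r) : ∃ t ≤ M j, ∃ k ≤ L i, q j t = p i k := by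
  have := h.le_e i
  have := h.w_lt j
  have := h.le_w j
  rcases eq_or_ne (w j) (e i) with hwe | hwe
  · exact ⟨M j, le_rfl, L i, le_rfl, by rw [h.column_last, h.row_last, hwe]⟩
  by_contra! hcon
  refine h.crossing (i := r - 1 - j) (j := r + i) (k := w j) (l := e i) (by omega) (by omega)
    (by omega) (h.e_lt i)
    (disjoint_region (S := fun a _ => a ≠ i) (S' := fun a _ => a = i) (C := (· = j))
      (C' := fun _ => False) h.rows h.columns (fun _ _ => id) fun _ _ => id) ?_ ?_
  · rw [← h.column_start, ← h.column_last]
    refine reachableIn_region_column (C := (· = j)) h.columns rfl (M j).zero_le le_rfl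
      fun t ht hrow => ?_
    rw [uIcc_of_le (M j).zero_le] at ht
    obtain ⟨i', k, hk, heq⟩ := hrow
    refine ⟨i', k, ?_, hk, heq⟩
    rintro rfl
    exact hcon t ht.2 k hk heq
  · rw [← h.row_start, ← h.row_last]
    exact reachableIn_region_row h.rows (L i).zero_le le_rfl fun _ _ => rfl

theorem lt_of_first (h : GridConfig H z p q L M e w) (hi : (i : ℕ) = 0) (hjj' : j < j')
    (hk : k ≤ L i) (hs : s ≤ M j) (heq : p i k = q j s)
    (hfirst : ∀ t < s, q j t ∉ linkageVerts p L) (hk' : k' ≤ L i) (hs' : s' ≤ M j')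
    (heq' : p i k' = q j' s') (hfirst' : ∀ t < s', q j' t ∉ linkageVerts p L) : k < k' := by
  refine lt_of_le_of_ne (not_lt.1 fun hlt => ?_) ?_
  · have := h.le_e i
    refine h.crossing (i := r - 1 - j') (j := r - 1 - j) (k := r + i) (l := e i) (by omega)
      (by omega) (by omega) (h.e_lt i)
      (disjoint_region (S := fun _ a => a ≤ k') (S' := fun _ a => k ≤ a) (C := (· = j'))
        (C' := (· = j)) h.rows h.columns (fun _ a ha => by omega) ?_) ?_ ?_
    · rintro _ rfl
      exact hjj'.ne'
    · rw [← h.row_start, ← h.column_start]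
      exact .trans
        (reachableIn_region_of_first (C := (· = j')) h.columns rfl hk' hs' heq' hfirst' le_rfl)
        (reachableIn_region_row h.rows hk' (L i).zero_le fun t ht =>
          ht.2.trans (sup_le le_rfl k'.zero_le))
    · rw [← h.row_last, ← h.column_start]
      exact .trans
        (reachableIn_region_of_first (C := (· = j)) h.columns rfl hk hs heq hfirst le_rfl)
        (reachableIn_region_row h.rows hk le_rfl fun t ht => (le_inf le_rfl hk).trans ht.1)
  · rintro rfl
    exact hjj'.ne (h.columns.inj hs hs' (heq.symm.trans heq')).1

theorem lt_of_hop_of_lt (h : GridConfig H z p q L M e w) (hii' : (i' : ℕ) = i + 1)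
    (hjj' : j ≠ j') (hop : Hop p L q M j (i, k) (i', k')) (hop' : Hop p L q M j' (i, l) (i', l'))
    (hlk : l < k) : l' < k' := by
  have hlt : i < i' := by rw [Fin.lt_def]; omega
  refine lt_of_le_of_ne (not_lt.1 fun hlt' => ?_) fun hne =>
    hop.symm.ne h.columns hjj' hop'.symm (by rw [hne])
  have := h.le_e i'
  refine h.crossing (i := r + i) (j := r + i') (k := e i') (l := e i) (by omega) (by omega)
    (h.e_lt_e hlt) (h.e_lt i)
    (disjoint_region (S := fun a b => a = i ∧ b ≤ l ∨ a = i' ∧ l' ≤ b) (C := (· = j'))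
      (S' := fun a b => a = i' ∧ b ≤ k' ∨ a = i ∧ k ≤ b) (C' := (· = j)) h.rows h.columns ?_ ?_)
    ?_ ?_
  · rintro _ _ (⟨rfl, hx⟩ | ⟨rfl, hx⟩) (⟨hx', hx''⟩ | ⟨hx', hx''⟩) <;> omega
  · rintro _ rfl
    exact hjj'.symm
  · rw [← h.row_start, ← h.row_last]
    exact .trans (reachableIn_region_row h.rows (L i).zero_le hop'.1 fun t ht =>
        .inl ⟨rfl, ht.2.trans (sup_le l.zero_le le_rfl)⟩)
      (.trans (hop'.reachableIn_region h.columns rfl (.inl ⟨rfl, le_rfl⟩) (.inr ⟨rfl, le_rfl⟩))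
        (reachableIn_region_row h.rows hop'.2.1 le_rfl fun t ht =>
          .inr ⟨rfl, (le_inf le_rfl hop'.2.1).trans ht.1⟩))
  · rw [← h.row_start, ← h.row_last]
    exact .trans (reachableIn_region_row h.rows (L i').zero_le hop.2.1 fun t ht =>
        .inl ⟨rfl, ht.2.trans (sup_le k'.zero_le le_rfl)⟩)
      (.trans (hop.symm.reachableIn_region h.columns rfl (.inl ⟨rfl, le_rfl⟩) (.inr ⟨rfl, le_rfl⟩))
        (reachableIn_region_row h.rows hop.1 le_rfl fun t ht =>
          .inr ⟨rfl, (le_inf le_rfl hop.1).trans ht.1⟩))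

end GridConfig

end GridConfig

section GridRouting

variable {V : Type u} {r : ℕ} {H : SimpleGraph V} {p q : Fin r → ℕ → V} {L M : Fin r → ℕ}
  {f g d a : Fin r → Fin r → ℕ} {i c : Fin r} {k : ℕ}

theorem connected_induce_of_forall_reachableIn {S : Set V} {u : V} (hu : u ∈ S)
    (h : ∀ v ∈ S, ReachableIn H S u v) : (H.induce S).Connected :=
  (connected_iff_exists_forall_reachable _).2 ⟨⟨u, hu⟩, fun v => by
    obtain ⟨p, hp⟩ := h v v.2
    exact (p.induce S hp).reachable⟩

/-- Rows and columns which intersect as in a grid: column `c` is on row `i` at its times `d i c` and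
`a i c`, at the positions `f i c` and `g i c` of the row, these positions are ordered like the
columns, and between its times `a i c` and `d (i + 1) c` the column meets no row. -/
structure GridRouting (H : SimpleGraph V) (p q : Fin r → ℕ → V) (L M : Fin r → ℕ)
    (f g d a : Fin r → Fin r → ℕ) : Prop where
  rows : Linkage H p L
  columns : Linkage H q M
  f_le : ∀ i c, f i c ≤ L i
  g_le : ∀ i c, g i c ≤ L i
  max_lt_min : ∀ i ⦃c c'⦄, c < c' → max (f i c) (g i c) < min (f i c') (g i c')
  row_f : ∀ i c, p i (f i c) = q c (d i c)
  row_g : ∀ i c, p i (g i c) = q c (a i c)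
  d_le : ∀ i c, d i c ≤ M c
  d_le_a : ∀ i c, d i c ≤ a i c
  a_lt_d : ∀ ⦃i i'⦄ c, i < i' → a i c < d i' c
  notMem_of_mem_Ioo : ∀ ⦃i i' : Fin r⦄ c, (i' : ℕ) = i + 1 → ∀ t ∈ Ioo (a i c) (d i' c),
    q c t ∉ linkageVerts p L

/-- The branch set at row `i` and column `c`: row `i` from its intersection with column `c` to the
next one, and column `c` between rows `i` and `i + 1`. -/
def gridBranchSet (p q : Fin r → ℕ → V) (L : Fin r → ℕ) (f g d a : Fin r → Fin r → ℕ)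
    (x : Fin r × Fin r) : Set V :=
  {v | (∃ k ≤ L x.1, v = p x.1 k ∧ min (f x.1 x.2) (g x.1 x.2) ≤ k ∧
      ∀ c > x.2, k < min (f x.1 c) (g x.1 c)) ∨
    ∃ i : Fin r, (i : ℕ) = x.1 + 1 ∧ ∃ t ∈ Ioo (a x.1 x.2) (d i x.2), v = q x.2 t}

namespace GridRouting

theorem row_mem_gridBranchSet (h : GridRouting H p q L M f g d a)
    (hk : k ∈ uIcc (f i c) (g i c)) : p i k ∈ gridBranchSet p q L f g d a (i, c) :=
  .inl ⟨k, hk.2.trans (max_le (h.f_le i c) (h.g_le i c)), rfl, hk.1, fun _ hc =>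
    hk.2.trans_lt (h.max_lt_min i hc)⟩

theorem connected_gridBranchSet (h : GridRouting H p q L M f g d a) (x : Fin r × Fin r) :
    (H.induce (gridBranchSet p q L f g d a x)).Connected := by
  obtain ⟨i, c⟩ := x
  have hrow {k} (hk : k ≤ L i) (hlo : min (f i c) (g i c) ≤ k)
      (hhi : ∀ c' > c, k < min (f i c') (g i c')) :
      ReachableIn H (gridBranchSet p q L f g d a (i, c)) (p i (min (f i c) (g i c))) (p i k) := by
    refine .of_forall_adj_succ (fun _ ht => h.rows.adj ht) (hlo.trans hk) hk fun t ht => ?_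
    rw [uIcc_of_le hlo] at ht
    exact .inl ⟨t, ht.2.trans hk, rfl, ht.1, fun c' hc' => ht.2.trans_lt (hhi c' hc')⟩
  refine connected_induce_of_forall_reachableIn
    (h.row_mem_gridBranchSet ⟨le_rfl, inf_le_sup⟩) ?_
  rintro v (⟨k, hk, rfl, hlo, hhi⟩ | ⟨i', hi', t, ht, rfl⟩)
  · exact hrow hk hlo hhi
  · have hcol : ReachableIn H (gridBranchSet p q L f g d a (i, c)) (q c (a i c)) (q c t) := by
      have htM := ht.2.le.trans (h.d_le i' c)
      refine .of_forall_adj_succ (fun _ ht => h.columns.adj ht) (ht.1.le.trans htM) htM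
        fun u hu => ?_
      rw [uIcc_of_le ht.1.le] at hu
      rcases hu.1.eq_or_lt with rfl | hau
      · exact h.row_g i c ▸ h.row_mem_gridBranchSet ⟨inf_le_right, le_sup_right⟩
      · exact .inr ⟨i', hi', u, ⟨hau, hu.2.trans_lt ht.2⟩, rfl⟩
    rw [← h.row_g] at hcol
    exact (hrow (h.g_le i c) inf_le_right fun c' hc' =>
      le_sup_right.trans_lt (h.max_lt_min i hc')).trans hcol

theorem pairwise_disjoint_gridBranchSet (h : GridRouting H p q L M f g d a) :
    Pairwise fun x y => Disjoint (gridBranchSet p q L f g d a x)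
      (gridBranchSet p q L f g d a y) := by
  rintro ⟨i, c⟩ ⟨i', c'⟩ hne
  rw [Set.disjoint_left]
  rintro v (⟨k, hk, hv, hlo, hhi⟩ | ⟨j, hj, t, ht, hv⟩)
    (⟨k', hk', hv', hlo', hhi'⟩ | ⟨j', hj', t', ht', hv'⟩)
  · obtain ⟨rfl, rfl⟩ := h.rows.inj hk hk' (hv.symm.trans hv')
    rcases lt_trichotomy c c' with hcc' | rfl | hcc'
    · exact (hhi c' hcc').not_ge hlo'
    · exact hne rfl
    · exact (hhi' c hcc').not_ge hlo
  · exact h.notMem_of_mem_Ioo c' hj' t' ht' ⟨i, k, hk, hv'.symm.trans hv⟩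
  · exact h.notMem_of_mem_Ioo c hj t ht ⟨i', k', hk', hv.symm.trans hv'⟩
  · obtain ⟨rfl, rfl⟩ := h.columns.inj (ht.2.le.trans (h.d_le j c)) (ht'.2.le.trans (h.d_le j' c'))
      (hv.symm.trans hv')
    have hle {i i' j : Fin r} (hj : (j : ℕ) = i + 1) (hii' : i < i') : d j c ≤ a i' c := by
      rcases (show j ≤ i' by rw [Fin.le_def]; omega).eq_or_lt with rfl | hji'
      · exact h.d_le_a j c
      · exact (h.d_le_a j c).trans ((h.a_lt_d c hji').le.trans (h.d_le_a i' c))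
    rcases lt_trichotomy i i' with hii' | rfl | hii'
    · exact lt_irrefl t (ht.2.trans_le ((hle hj hii').trans ht'.1.le))
    · exact hne rfl
    · exact lt_irrefl t (ht'.2.trans_le ((hle hj' hii').trans ht.1.le))

theorem exists_adj_of_succ_column (h : GridRouting H p q L M f g d a) {c' : Fin r}
    (hc : (c : ℕ) + 1 = c') : ∃ u ∈ gridBranchSet p q L f g d a (i, c),
      ∃ v ∈ gridBranchSet p q L f g d a (i, c'), H.Adj u v := by
  have hlt := h.max_lt_min i (show c < c' by rw [Fin.lt_def]; omega)
  have hmin : min (f i c) (g i c) ≤ max (f i c) (g i c) := inf_le_sup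
  have hle : min (f i c') (g i c') ≤ L i := inf_le_left.trans (h.f_le i c')
  obtain ⟨k, hk⟩ := Nat.exists_eq_add_of_lt hlt
  refine ⟨p i (max (f i c) (g i c) + k), .inl ⟨_, ?_, rfl, hmin.trans le_self_add, ?_⟩,
    p i (min (f i c') (g i c')), h.row_mem_gridBranchSet ⟨le_rfl, inf_le_sup⟩, ?_⟩
  · dsimp only
    omega
  · intro c'' (hc'' : c < c'')
    dsimp only
    rcases (show c' ≤ c'' by rw [Fin.le_def]; omega).eq_or_lt with rfl | hc''
    · omega
    · have hlt' := h.max_lt_min i hc''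
      have hmin' : min (f i c') (g i c') ≤ max (f i c') (g i c') := inf_le_sup
      omega
  · rw [hk]
    exact h.rows.adj (by omega)

theorem exists_adj_of_succ_row (h : GridRouting H p q L M f g d a) {i' : Fin r}
    (hi : (i : ℕ) + 1 = i') : ∃ u ∈ gridBranchSet p q L f g d a (i, c),
      ∃ v ∈ gridBranchSet p q L f g d a (i', c), H.Adj u v := by
  obtain ⟨k, hk⟩ := Nat.exists_eq_add_of_lt (h.a_lt_d c (show i < i' by rw [Fin.lt_def]; omega))
  have hadj : H.Adj (q c (a i c + k)) (q c (d i' c)) := by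
    rw [hk]
    exact h.columns.adj (by have := h.d_le i' c; omega)
  refine ⟨_, ?_, _, ?_, hadj⟩
  · rcases k.eq_zero_or_pos with rfl | hk₀
    · rw [add_zero, ← h.row_g]
      exact h.row_mem_gridBranchSet ⟨inf_le_right, le_sup_right⟩
    · exact .inr ⟨i', hi.symm, _, ⟨Nat.lt_add_of_pos_right hk₀, by dsimp only; omega⟩, rfl⟩
  · rw [← h.row_f]
    exact h.row_mem_gridBranchSet ⟨inf_le_left, le_sup_left⟩

theorem hasMinor_gridGraph (h : GridRouting H p q L M f g d a) : HasMinor H (gridGraph r) := by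
  refine ⟨_, h.connected_gridBranchSet, h.pairwise_disjoint_gridBranchSet, ?_⟩
  rintro ⟨i, c⟩ ⟨i', c'⟩ ⟨-, (⟨rfl, hc⟩ | ⟨rfl, hi⟩) | (⟨rfl, hc⟩ | ⟨rfl, hi⟩)⟩
  · exact h.exists_adj_of_succ_column hc
  · exact h.exists_adj_of_succ_row hi
  · obtain ⟨u, hu, v, hv, huv⟩ := h.exists_adj_of_succ_column hc
    exact ⟨v, hv, u, hu, huv.symm⟩
  · obtain ⟨u, hu, v, hv, huv⟩ := h.exists_adj_of_succ_row hi
    exact ⟨v, hv, u, hu, huv.symm⟩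

end GridRouting

end GridRouting

section GridConfig

variable {V : Type u} {r : ℕ} {H : SimpleGraph V} {z : ℕ → V} {p q : Fin r → ℕ → V}
  {L M e w : Fin r → ℕ} {i j j' : Fin r} {n n' N N' : ℕ}

theorem exists_strictMono_enumeration {P : ℕ → Prop} {m : ℕ} (hm : P m) :
    ∃ (s : ℕ → ℕ) (N : ℕ), StrictMono s ∧ s N = m ∧ (∀ n ≤ N, P (s n)) ∧ (∀ t < s 0, ¬P t) ∧
      ∀ n < N, ∀ t ∈ Ioo (s n) (s (n + 1)), ¬P t := by
  classical
  let P' (t : ℕ) : Prop := P t ∨ m < t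
  have hinf : (Set.ofPred P').Infinite :=
    infinite_of_forall_exists_gt fun a => ⟨max a m + 1, .inr (by omega), by omega⟩
  have hN : Nat.nth P' (Nat.count P' m) = m := Nat.nth_count (.inl hm)
  have hle {n} (hn : n ≤ Nat.count P' m) : Nat.nth P' n ≤ m :=
    ((Nat.nth_strictMono hinf).monotone hn).trans_eq hN
  refine ⟨Nat.nth P', Nat.count P' m, Nat.nth_strictMono hinf, hN, fun n hn => ?_,
    fun t ht hPt => ?_, fun n _ t ht hPt => ?_⟩
  · exact (Nat.nth_mem_of_infinite hinf n).resolve_right (hle hn).not_gt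
  · exact ht.not_ge (((Nat.nth_strictMono hinf).monotone (Nat.zero_le _)).trans_eq
      (Nat.nth_count (.inl hPt)))
  · exact (Nat.le_nth_of_lt_nth_succ ht.2 (.inl hPt)).not_gt ht.1

/-- For a sequence rising by at most `1`, the last time `G i` before `i` is first exceeded, and the
first time `F i` at which `i` is attained. -/
theorem exists_first_exceeding_times_of_succ_le {b : ℕ → ℕ} {I : ℕ} (h₀ : b 0 = 0) (hN : b N = I)
    (hle : ∀ n ≤ N, b n ≤ I) (hstep : ∀ n < N, b (n + 1) ≤ b n + 1) :
    ∃ F G : ℕ → ℕ, ∀ i ≤ I, F i ≤ G i ∧ G i ≤ N ∧ b (F i) = i ∧ b (G i) = i ∧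
      (∀ n ≤ G i, b n ≤ i) ∧ F (i + 1) = G i + 1 := by
  have hG i (hi : i ≤ I) : ∃ g ≤ N, b g = i ∧ (∀ n ≤ g, b n ≤ i) ∧ (i < I → b (g + 1) = i + 1) := by
    rcases hi.eq_or_lt with rfl | hi
    · exact ⟨N, le_rfl, hN, hle, fun h => absurd h (lt_irrefl _)⟩
    classical
    have hex : ∃ n, i < b n := ⟨N, hN ▸ hi⟩
    have hspec := Nat.find_spec hex
    have hmin n (hn : n < Nat.find hex) : b n ≤ i := not_lt.1 (Nat.find_min hex hn)
    have hfind : Nat.find hex ≤ N := Nat.find_min' hex (hN ▸ hi)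
    obtain ⟨g, hg⟩ : ∃ g, Nat.find hex = g + 1 := Nat.exists_eq_succ_of_ne_zero fun h => by
      rw [h, h₀] at hspec
      exact Nat.not_lt_zero _ hspec
    rw [hg] at hspec hmin hfind
    have := hmin g g.lt_succ_self
    have := hstep g hfind
    exact ⟨g, by omega, by omega, fun n hn => hmin n (by omega), fun _ => by omega⟩
  choose! G hGN hbG hbelow hsucc using hG
  refine ⟨fun i => i.casesOn 0 fun i => G i + 1, G, fun i hi => ⟨?_, hGN i hi, ?_, hbG i hi,
    hbelow i hi, rfl⟩⟩ <;> rcases i with _ | i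
  · exact Nat.zero_le _
  · refine Nat.lt_of_not_le fun hle => ?_
    have := hbelow i (by omega) _ hle
    have := hbG (i + 1) hi
    omega
  · exact h₀
  · exact hsucc i (by omega) hi

/-- The successive visits of the rows by the column `j`, from the start of the column up to a visit
of the last row: the `n`-th one, for `n ≤ N`, takes place at time `s n` and position `x n`. -/
structure ColumnTrace (p q : Fin r → ℕ → V) (L M : Fin r → ℕ) (j : Fin r) (s : ℕ → ℕ)
    (x : ℕ → Fin r × ℕ) (N : ℕ) : Prop where
  strictMono : StrictMono s
  last_le : s N ≤ M j
  pos_le : ∀ n ≤ N, (x n).2 ≤ L (x n).1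
  eq_pos : ∀ n ≤ N, q j (s n) = p (x n).1 (x n).2
  notMem_of_lt : ∀ t < s 0, q j t ∉ linkageVerts p L
  notMem_of_mem_Ioo : ∀ n < N, ∀ t ∈ Ioo (s n) (s (n + 1)), q j t ∉ linkageVerts p L
  last_row : ((x N).1 : ℕ) + 1 = r

theorem GridConfig.exists_columnTrace (h : GridConfig H z p q L M e w) (j : Fin r) :
    ∃ s x N, ColumnTrace p q L M j s x N := by
  have hr := Nat.sub_add_cancel j.pos
  have : Nonempty (Fin r) := ⟨j⟩
  obtain ⟨m, hm, k, hk, hmk⟩ := h.exists_column_eq_last_row (i := ⟨r - 1, by omega⟩) j hr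
  obtain ⟨s, N, hs, hN, hmem, hfirst, hgap⟩ :=
    exists_strictMono_enumeration (P := fun t => q j t ∈ linkageVerts p L) ⟨_, k, hk, hmk⟩
  choose! i k' hk' heq using hmem
  refine ⟨s, fun n => (i n, k' n), N, hs, hN.trans_le hm, hk', heq, hfirst, hgap, ?_⟩
  have heqN := (heq N le_rfl).symm.trans ((congrArg (q j) hN).trans hmk)
  rwa [(h.rows.inj (hk' N le_rfl) hk heqN).1]

namespace ColumnTrace

variable {s s' : ℕ → ℕ} {x x' : ℕ → Fin r × ℕ}

theorem time_le (hx : ColumnTrace p q L M j s x N) (hn : n ≤ N) : s n ≤ M j :=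
  (hx.strictMono.monotone hn).trans hx.last_le

theorem hop (hx : ColumnTrace p q L M j s x N) (hn : n < N) : Hop p L q M j (x n) (x (n + 1)) :=
  ⟨hx.pos_le n hn.le, hx.pos_le _ hn, s n, hx.time_le hn.le, s (n + 1), hx.time_le hn,
    (hx.eq_pos n hn.le).symm, (hx.eq_pos _ hn).symm, by
      rw [uIoo_of_le (hx.strictMono n.lt_succ_self).le]
      exact hx.notMem_of_mem_Ioo n hn⟩

theorem row_zero (hx : ColumnTrace p q L M j s x N) (h : GridConfig H z p q L M e w) :
    ((x 0).1 : ℕ) = 0 :=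
  h.row_eq_zero_of_first (hx.pos_le 0 N.zero_le) (hx.time_le N.zero_le)
    (hx.eq_pos 0 N.zero_le).symm hx.notMem_of_lt

theorem isRowStep (hx : ColumnTrace p q L M j s x N) (h : GridConfig H z p q L M e w)
    (hn : n < N) : IsRowStep (((x n).1 : ℕ), (x n).2) (((x (n + 1)).1 : ℕ), (x (n + 1)).2) := by
  have hop := hx.hop hn
  generalize x n = y, x (n + 1) = y' at hop
  obtain ⟨i, k⟩ := y
  obtain ⟨i', k'⟩ := y'
  have h₁ := h.row_le_of_hop hop
  have h₂ := h.row_le_of_hop hop.symm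
  rcases eq_or_ne i i' with rfl | hii'
  · refine .inl ⟨rfl, ?_, ?_⟩ <;> by_contra! hlt
    · exact hlt.ne (h.bump (Nat.lt_of_succ_lt hlt) hop.symm).symm
    · exact hlt.ne (h.bump (Nat.lt_of_succ_lt hlt) hop).symm
  · rw [Ne, Fin.ext_iff] at hii'
    refine .inr ?_
    dsimp only
    omega

theorem exists_hop_of_eq (hx : ColumnTrace p q L M j s x N) (hn : n < N) {y y' : ℕ × ℕ}
    (heq : s((((x n).1 : ℕ), (x n).2), (((x (n + 1)).1 : ℕ), (x (n + 1)).2)) = s(y, y')) :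
    ∃ i i' : Fin r, (i : ℕ) = y.1 ∧ (i' : ℕ) = y'.1 ∧ Hop p L q M j (i, y.2) (i', y'.2) := by
  rcases Sym2.eq_iff.1 heq with ⟨rfl, rfl⟩ | ⟨rfl, rfl⟩
  · exact ⟨_, _, rfl, rfl, hx.hop hn⟩
  · exact ⟨_, _, rfl, rfl, (hx.hop hn).symm⟩

theorem pos_ne_pos (hx : ColumnTrace p q L M j s x N) (hx' : ColumnTrace p q L M j' s' x' N')
    (hq : Linkage H q M) (hjj' : j ≠ j') (hn : n ≤ N) (hn' : n' ≤ N') : x n ≠ x' n' := fun heq =>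
  hjj' (hq.inj (hx.time_le hn) (hx'.time_le hn')
    ((hx.eq_pos n hn).trans (heq ▸ (hx'.eq_pos n' hn').symm))).1

theorem pos_lt_iff_of_rows_succ (hx : ColumnTrace p q L M j s x N)
    (hx' : ColumnTrace p q L M j' s' x' N') (h : GridConfig H z p q L M e w) (hjj' : j ≠ j')
    (hn : n < N) (hn' : n' < N') {y y' v v' : ℕ × ℕ}
    (hy : s((((x n).1 : ℕ), (x n).2), (((x (n + 1)).1 : ℕ), (x (n + 1)).2)) = s(y, y'))
    (hv : s((((x' n').1 : ℕ), (x' n').2), (((x' (n' + 1)).1 : ℕ), (x' (n' + 1)).2)) = s(v, v'))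
    (hyy' : y'.1 = y.1 + 1) (hvy : v.1 = y.1) (hvy' : v'.1 = y'.1) :
    v.2 < y.2 ↔ v'.2 < y'.2 := by
  obtain ⟨i, i', hi, hi', hop⟩ := hx.exists_hop_of_eq hn hy
  obtain ⟨l, l', hl, hl', hop'⟩ := hx'.exists_hop_of_eq hn' hv
  obtain rfl : l = i := Fin.ext (by omega)
  obtain rfl : l' = i' := Fin.ext (by omega)
  refine ⟨h.lt_of_hop_of_lt (by omega) hjj' hop hop', fun hlt => ?_⟩
  by_contra! hle
  refine (h.lt_of_hop_of_lt (by omega) hjj'.symm hop' hop (hle.lt_of_ne fun heq => ?_)).not_gt hlt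
  exact hop.ne h.columns hjj' hop' (by rw [heq])

theorem pos_lt_pos (hx : ColumnTrace p q L M j s x N) (hx' : ColumnTrace p q L M j' s' x' N')
    (h : GridConfig H z p q L M e w) (hjj' : j < j') (hn : n ≤ N) (hn' : n' ≤ N')
    (hi : (x n).1 = i) (hi' : (x' n').1 = i) (hle : ∀ k ≤ n, (x k).1 ≤ i)
    (hle' : ∀ k ≤ n', (x' k).1 ≤ i) : (x n).2 < (x' n').2 := by
  have h₀ : (x' 0).1 = (x 0).1 := Fin.ext ((hx'.row_zero h).trans (hx.row_zero h).symm)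
  refine (lt_iff_lt_of_isRowStep (a := fun k => ((x' k).1, (x' k).2))
    (b := fun k => ((x k).1, (x k).2)) (I := i) (hx'.row_zero h) (hx.row_zero h)
    (congrArg Fin.val hi') (congrArg Fin.val hi) hle' hle
    (fun k hk => hx'.isRowStep h (hk.trans_le hn')) (fun k hk => hx.isRowStep h (hk.trans_le hn))
    (fun k hk l hl heq => hx.pos_ne_pos hx' h.columns hjj'.ne (hl.trans hn) (hk.trans hn') ?_)
    fun k hk l hl _ _ _ _ hy hv => hx'.pos_lt_iff_of_rows_succ hx h hjj'.ne' (hk.trans_le hn')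
      (hl.trans_le hn) hy hv).1 ?_
  · exact Prod.ext (Fin.ext (congrArg (·.1) heq)) (congrArg (·.2) heq)
  · exact h.lt_of_first (hx.row_zero h) hjj' (hx.pos_le 0 N.zero_le) (hx.time_le N.zero_le)
      (hx.eq_pos 0 N.zero_le).symm hx.notMem_of_lt (h₀ ▸ hx'.pos_le 0 N'.zero_le)
      (hx'.time_le N'.zero_le) (h₀ ▸ (hx'.eq_pos 0 N'.zero_le).symm) hx'.notMem_of_lt

theorem exists_first_exceeding_times (hx : ColumnTrace p q L M j s x N)
    (h : GridConfig H z p q L M e w) : ∃ F G : ℕ → ℕ, ∀ i : Fin r, F i ≤ G i ∧ G i ≤ N ∧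
      (x (F i)).1 = i ∧ (x (G i)).1 = i ∧ (∀ n ≤ G i, (x n).1 ≤ i) ∧ F (i + 1) = G i + 1 := by
  have hlast := hx.last_row
  obtain ⟨F, G, hFG⟩ := exists_first_exceeding_times_of_succ_le (b := fun n => (x n).1)
    (hx.row_zero h) rfl (fun n _ => by omega) fun n hn => h.row_le_of_hop (hx.hop hn)
  refine ⟨F, G, fun i => ?_⟩
  obtain ⟨hle, hN, hF, hG, hbelow, hsucc⟩ := hFG i (by omega)
  exact ⟨hle, hN, Fin.ext hF, Fin.ext hG, hbelow, hsucc⟩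

end ColumnTrace

theorem GridConfig.hasMinor_gridGraph (h : GridConfig H z p q L M e w) :
    HasMinor H (gridGraph r) := by
  choose s x N hx using h.exists_columnTrace
  choose F G hFG hGN hF hG hbelow hsucc using fun c => (hx c).exists_first_exceeding_times h
  have hbelow' (i : Fin r) c n (hn : n ≤ F c i) : (x c n).1 ≤ i := hbelow c i n (hn.trans (hFG c i))
  have hFN (i : Fin r) c : F c i ≤ N c := (hFG c i).trans (hGN c i)
  refine GridRouting.hasMinor_gridGraph (p := p) (q := q) (L := L) (M := M)
    (f := fun i c => (x c (F c i)).2) (g := fun i c => (x c (G c i)).2)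
    (d := fun i c => s c (F c i)) (a := fun i c => s c (G c i))
    { rows := h.rows
      columns := h.columns
      f_le := fun i c => (hx c).pos_le _ (hFN i c) |>.trans_eq (by rw [hF])
      g_le := fun i c => (hx c).pos_le _ (hGN c i) |>.trans_eq (by rw [hG])
      max_lt_min := fun i c c' hcc' => ?_
      row_f := fun i c => by rw [(hx c).eq_pos _ (hFN i c), hF]
      row_g := fun i c => by rw [(hx c).eq_pos _ (hGN c i), hG]
      d_le := fun i c => (hx c).time_le (hFN i c)
      d_le_a := fun i c => (hx c).strictMono.monotone (hFG c i)
      a_lt_d := fun i i' c hii' => (hx c).strictMono (lt_of_not_ge fun hle => ?_)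
      notMem_of_mem_Ioo := fun i i' c hii' => ?_ }
  · have hlt n n' := (hx c).pos_lt_pos (n := n) (n' := n') (hx c') h hcc' (i := i)
    exact max_lt
      (lt_min (hlt _ _ (hFN i c) (hFN i c') (hF c i) (hF c' i) (hbelow' i c) (hbelow' i c'))
        (hlt _ _ (hFN i c) (hGN c' i) (hF c i) (hG c' i) (hbelow' i c) (hbelow c' i)))
      (lt_min (hlt _ _ (hGN c i) (hFN i c') (hG c i) (hF c' i) (hbelow c i) (hbelow' i c'))
        (hlt _ _ (hGN c i) (hGN c' i) (hG c i) (hG c' i) (hbelow c i) (hbelow c' i)))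
  · exact ((hbelow c i _ hle).trans_lt hii').ne (hF c i')
  · have := hFN i' c
    rw [hii', hsucc] at this ⊢
    exact (hx c).notMem_of_mem_Ioo _ this

end GridConfig

section Main

variable {V : Type u} {G : SimpleGraph V} {r : ℕ}

theorem HasMinor.mono {W : Type*} {G' : SimpleGraph V} {H : SimpleGraph W} (hGG' : G ≤ G')
    (h : HasMinor G H) : HasMinor G' H := by
  obtain ⟨φ, hconn, hdisj, hadj⟩ := h
  refine ⟨φ, fun w => (hconn w).mono fun _ _ huv => hGG' huv, hdisj, fun _ _ hww' => ?_⟩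
  obtain ⟨a, ha, b, hb, hab⟩ := hadj hww'
  exact ⟨a, ha, b, hb, hGG' hab⟩

theorem exists_linkage_or_exists_ncard_edgeBoundary_lt [Finite V] {ι : Type*}
    {D : Set G.edgeSet} {A : ι → V} {B : Set V} (hA : A.Injective)
    (hAD : range A ⊆ edgeBoundary G D) (hBD : B ⊆ edgeBoundary G D) (hB : Nat.card ι ≤ B.ncard) :
    (∃ p L, Linkage (edgeSubgraph D) p L ∧ (∀ i, p i 0 = A i) ∧ ∀ i, p i (L i) ∈ B) ∨
      ∃ D' ⊆ D, (edgeBoundary G D').ncard < (edgeBoundary G D).ncard ∧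
        (edgeBoundary G (D \ D')).ncard < (edgeBoundary G D).ncard := by
  refine (exists_linkage_or_separator (edgeSubgraph D) hA B).imp_right ?_
  rintro ⟨X, S, hS, hAX, hXB, hX⟩
  exact exists_ncard_edgeBoundary_lt_of_separator hAD hBD
    (hS.trans_eq (ncard_range_of_injective hA).symm) (hS.trans_le hB) hAX hXB hX

namespace PlaneMap.BoundaryCycle

variable {m : PlaneMap G} {C D : Set G.edgeSet} {X Y : ℕ → m.F} {n : ℕ}

theorem exists_linkage_or_exists_split [Finite V] (h : m.BoundaryCycle D n X Y)
    (hC : IsClosedIn m.cornerGraph C univ) (hD : IsDisc m.cornerGraph C D)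
    {f : Fin r → ℕ} (hf : f.Injective) (hfn : ∀ i, f i < n) {l : ℕ} (hl : l + r ≤ n) :
    (∃ p L, Linkage (edgeSubgraph D) p L ∧ (∀ i, p i 0 = m.vert (X (f i))) ∧
        ∀ i, p i (L i) ∈ (fun k => m.vert (X k)) '' Ico l (l + r)) ∨
      ∃ D' ⊆ D, (edgeBoundary G D').ncard < n ∧ (edgeBoundary G (D \ D')).ncard < n := by
  have hIco : Ico l (l + r) ⊆ Iio n := fun k hk => hk.2.trans_le hl
  have hinj : (fun i => m.vert (X (f i))).Injective := fun i j hij =>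
    hf (h.eq_of_vert_X_eq (hfn i) (hfn j) hij)
  have hcard : Nat.card (Fin r) ≤ ((fun k => m.vert (X k)) '' Ico l (l + r)).ncard := by
    rw [(h.injOn.mono hIco).ncard_image, Nat.card_fin, ncard_Ico_nat, Nat.add_sub_cancel_left]
  have hsplit := exists_linkage_or_exists_ncard_edgeBoundary_lt (D := D) hinj ?_ ?_ hcard
  · rwa [h.ncard_edgeBoundary hC hD] at hsplit
  all_goals rw [h.edgeBoundary_eq_image hC hD]
  · rintro _ ⟨i, rfl⟩
    exact ⟨f i, hfn i, rfl⟩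
  · exact image_mono hIco

theorem hasMinor_gridGraph_or_exists_split [Finite V] (h : m.BoundaryCycle D (4 * r - 1) X Y)
    (hC : IsClosedIn m.cornerGraph C univ) (hD : IsDisc m.cornerGraph C D) :
    HasMinor (edgeSubgraph D) (gridGraph r) ∨ ∃ D' ⊆ D,
      (edgeBoundary G D').ncard < 4 * r - 1 ∧ (edgeBoundary G (D \ D')).ncard < 4 * r - 1 := by
  have hr := h.pos
  rcases h.exists_linkage_or_exists_split hC hD (r := r) (f := fun i => r + i) (l := 3 * r - 1)
    (fun i j hij => Fin.ext (Nat.add_left_cancel hij)) (by omega) (by omega) with hrows | hsplit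
  swap
  · exact .inr hsplit
  refine (h.exists_linkage_or_exists_split hC hD (r := r) (f := fun j => r - 1 - j) (l := 2 * r)
    (fun i j hij => Fin.ext (by dsimp only at hij; omega)) (by omega) (by omega)).imp_left ?_
  rintro ⟨q, M, hq, hq₀, hqM⟩
  obtain ⟨p, L, hp⟩ := exists_isMinimalLinkage (Q := linkageGraph q M) hrows
  choose e he hpe using hp.last_mem
  choose w hw hqw using hqM
  refine GridConfig.hasMinor_gridGraph (z := fun k => m.vert (X k)) (p := p) (q := q) (L := L)
    (M := M) (e := e) (w := w)
    { crossing := fun i j k l hij hjk hkl hl Z Z' hZ hik hjl => ?_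
      rows := hp.linkage
      columns := hq
      row_start := hp.start
      row_last := fun i => (hpe i).symm
      le_e := fun i => (he i).1
      e_lt := fun i => (he i).2.trans_eq (by omega)
      column_start := hq₀
      column_last := fun j => (hqw j).symm
      le_w := fun j => (hw j).1
      w_lt := fun j => (hw j).2.trans_eq (by omega)
      bump := fun i j k k' hkk' hop => ?_ }
  · obtain ⟨a, ha⟩ := hik
    obtain ⟨b, hb⟩ := hjl
    obtain ⟨v, hva, hvb⟩ := h.exists_mem_support_of_interleaved hC hD hij hjk hkl hl a b
    exact Set.disjoint_left.1 hZ (ha v hva) (hb v hvb)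
  · obtain ⟨-, hk', s, hs, t, ht, heq, heq', havoid⟩ := hop
    exact hp.eq_succ_of_segment hq hkk' hk' hs ht heq heq' havoid

end PlaneMap.BoundaryCycle

theorem PlaneMap.dissectableWithin_compl_singleton [Finite V] (m : PlaneMap G) (hr : 1 ≤ r)
    (hminor : ¬HasMinor G (gridGraph r)) {e : G.edgeSet} (hne : ({e}ᶜ : Set G.edgeSet).Nonempty) :
    DissectableWithin G (4 * r - 1) {e}ᶜ := by
  refine m.isCornerGraph_cornerGraph.dissectableWithin_compl_singleton (by omega)
    (fun C D _ hCu hD hcard => ?_) hne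
  have hbdry : (edgeBoundary G D).Nonempty := nonempty_of_ncard_ne_zero (by omega)
  obtain ⟨n, X, Y, h⟩ := m.exists_boundaryCycle hbdry
  obtain rfl := (h.ncard_edgeBoundary hCu hD).symm.trans hcard
  exact (h.hasMinor_gridGraph_or_exists_split hCu hD).resolve_left fun hgrid =>
    hminor (hgrid.mono (edgeSubgraph_le D))

end Main

/-- (Robertson–Seymour–Thomas) If `G` is planar and `bw(G) ≥ 4r`, then `G` contains the
`(r × r)`-grid as a minor. -/
theorem planar_grid_minor {V : Type u} [Fintype V] (G : SimpleGraph V) (r : ℕ)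
    (hr : 1 ≤ r) (hplanar : IsPlanar G) (hbw : 4 * r ≤ branchwidth G) :
    HasMinor G (gridGraph r) := by
  by_contra hminor
  obtain ⟨m⟩ := hplanar.nonempty_planeMap
  rcases subsingleton_or_nontrivial G.edgeSet with hsub | ⟨e, f, hef⟩
  · rw [branchwidth_eq_zero_of_subsingleton] at hbw
    omega
  · have hdissect : DissectableWithin G (4 * r - 1) {e}ᶜ :=
      m.dissectableWithin_compl_singleton hr hminor ⟨f, hef.symm⟩
    have := branchwidth_le_of_dissectableWithin hdissect
    omega
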